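/- Let q be a braiding matrix with connected Dynkin diagram such that B_q is finite dimensional, and let B be a pre-Nichols algebra of q with finite GKdim. Let i,j,k ∈ I_θ satisfy one of: (a) q̃_{ij} = q_{jj} = −1, q_{ii} = −q̃_{jk}² ∈ G_3', q̃_{ik} = 1; (b) q_{kk} = q̃_{jk} = q_{jj} = −1, q_{ii} = −q̃_{ij} ∈ G_3', q̃_{ik} = 1; (c) q_{jj} = −1, q̃_{ij} = q_{ii}^{−2} ≠ 1, q_{kk} = q̃_{jk}^{−1} = −q_{ii}³, q̃_{ik} = 1; (d) q_{ii} = q_{jj} = q_{kk} = −1, −q̃_{ij} = q̃_{jk} ∈ G_3', q̃_{ik} = 1. Then [[x_{ij}, x_{ijk}]_c, x_j]_c = 0 in B. -/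

import Mathlib

/-
Common framework for formalizing statements from
"Finite GK-dimensional pre-Nichols algebras of (super)modular and unidentified type"
(Angiono, Campagnolo, Sanmarco).

We work over `ℂ` (an algebraically closed field of characteristic zero).
A braiding matrix is `q : Fin θ → Fin θ → ℂˣ`.  The tensor algebra `T(V)` of the
associated braided vector space of diagonal type is realized as the free algebra
on `Fin θ`.  The braided bialgebra structure on `T(V)` (the braided coproduct,
uniquely determined by the braiding matrix) is packaged in the structure
`BraidedStr`: its fields characterize it uniquely, so quantifying over
`S : BraidedStr θ q` is equivalent to using "the" braided coproduct.

A pre-Nichols algebra of `q` is the quotient `T(V)/I` by an ℕ₀-homogeneous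
(two-sided) braided bi-ideal `I` generated in degrees ≥ 2 (`IsPreNicholsIdeal`);
such an ideal is automatically contained in the defining ideal `Jq` of the
Nichols algebra, which is the largest such ideal.  A statement
"`x = 0` holds in the pre-Nichols algebra `T(V)/I`" is formalized as `x ∈ I`.
-/

open scoped TensorProduct

noncomputable section

namespace PreNicholsPaper

/-- The tensor algebra `T(V)` of the braided vector space of diagonal type of rank `θ`. -/
abbrev TV (θ : ℕ) := FreeAlgebra ℂ (Fin θ)

/-- The generator `x_i` of `T(V)`. -/
def gen (θ : ℕ) (i : Fin θ) : TV θ := FreeAlgebra.ι ℂ i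

/-- The monomial `x_{i_1} ⋯ x_{i_n}` associated to a word. -/
def wordElem (θ : ℕ) (w : List (Fin θ)) : TV θ := (w.map (gen θ)).prod

/-- The multidegree in `ℕ₀^θ` of a word. -/
def degW (θ : ℕ) (w : List (Fin θ)) : Fin θ → ℕ := fun i => w.count i

/-- `α_i`, the `i`-th canonical basis vector of `ℕ₀^θ`. -/
def δ (θ : ℕ) (i : Fin θ) : Fin θ → ℕ := fun k => if k = i then 1 else 0

/-- The bilinear form `ℕ₀^θ × ℕ₀^θ → ℂˣ` attached to the braiding matrix,
`q(α_i, α_j) = q_{ij}`, evaluated in `ℂ`. -/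
def qf {θ : ℕ} (q : Fin θ → Fin θ → ℂˣ) (a b : Fin θ → ℕ) : ℂ :=
  ∏ i : Fin θ, ∏ j : Fin θ, (q i j : ℂ) ^ (a i * b j)

/-- `q̃_{ij} = q_{ij} q_{ji}`. -/
def qtil {θ : ℕ} (q : Fin θ → Fin θ → ℂˣ) (i j : Fin θ) : ℂ := (q i j : ℂ) * (q j i : ℂ)

/-- The braided commutator `[u,v]_c = uv - q(a,b) vu` of elements `u, v`
which are homogeneous of multidegrees `a`, `b` respectively. -/
def brk {θ : ℕ} (q : Fin θ → Fin θ → ℂˣ) (a b : Fin θ → ℕ) (u v : TV θ) : TV θ :=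
  u * v - qf q a b • (v * u)

/-- `(ad_c x_i) y = x_i y - q(α_i, b) y x_i` for `y` homogeneous of multidegree `b`. -/
def ad1 {θ : ℕ} (q : Fin θ → Fin θ → ℂˣ) (i : Fin θ) (b : Fin θ → ℕ) (y : TV θ) : TV θ :=
  brk q (δ θ i) b (gen θ i) y

/-- The iterated braided adjoint `x_{i_1 i_2 ⋯ i_k} = (ad_c x_{i_1}) x_{i_2 ⋯ i_k}`. -/
def xw {θ : ℕ} (q : Fin θ → Fin θ → ℂˣ) : List (Fin θ) → TV θ
  | [] => 1
  | [i] => gen θ i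
  | i :: w => ad1 q i (degW θ w) (xw q w)

/-- `(ad_c x_i)^m x_j`. -/
def adpow {θ : ℕ} (q : Fin θ → Fin θ → ℂˣ) (i j : Fin θ) : ℕ → TV θ
  | 0 => gen θ j
  | m + 1 => ad1 q i (fun k => m * δ θ i k + δ θ j k) (adpow q i j m)

/-- The homogeneous component of total degree `n` of `T(V)`. -/
def homogTot (θ : ℕ) (n : ℕ) : Submodule ℂ (TV θ) :=
  Submodule.span ℂ {x | ∃ w : List (Fin θ), w.length = n ∧ x = wordElem θ w}

/-- The homogeneous component of multidegree `d ∈ ℕ₀^θ` of `T(V)`. -/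
def homogD (θ : ℕ) (d : Fin θ → ℕ) : Submodule ℂ (TV θ) :=
  Submodule.span ℂ {x | ∃ w : List (Fin θ), degW θ w = d ∧ x = wordElem θ w}

/-- The braided bialgebra structure on `T(V)` determined by the braiding matrix `q`:
the braided coproduct `Δ` together with the multiplication `mulB` of the braided
tensor product `T(V) ⊗ T(V)`.  These axioms determine `Δ` and `mulB` uniquely. -/
structure BraidedStr (θ : ℕ) (q : Fin θ → Fin θ → ℂˣ) where
  Δ : TV θ →ₗ[ℂ] TensorProduct ℂ (TV θ) (TV θ)
  mulB : TensorProduct ℂ (TV θ) (TV θ) →ₗ[ℂ]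
    TensorProduct ℂ (TV θ) (TV θ) →ₗ[ℂ] TensorProduct ℂ (TV θ) (TV θ)
  mulB_spec : ∀ (a d : TV θ) (wb wc : List (Fin θ)),
    mulB (a ⊗ₜ[ℂ] wordElem θ wb) (wordElem θ wc ⊗ₜ[ℂ] d)
      = qf q (degW θ wb) (degW θ wc) • ((a * wordElem θ wc) ⊗ₜ[ℂ] (wordElem θ wb * d))
  Δ_one : Δ 1 = 1 ⊗ₜ[ℂ] 1
  Δ_gen : ∀ i, Δ (gen θ i) = gen θ i ⊗ₜ[ℂ] 1 + 1 ⊗ₜ[ℂ] gen θ i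
  Δ_mul : ∀ u v : TV θ, Δ (u * v) = mulB (Δ u) (Δ v)

variable {θ : ℕ} {q : Fin θ → Fin θ → ℂˣ}

/-- `x` is a primitive element. -/
def IsPrimitiveIn (S : BraidedStr θ q) (x : TV θ) : Prop :=
  S.Δ x = x ⊗ₜ[ℂ] (1 : TV θ) + (1 : TV θ) ⊗ₜ[ℂ] x

/-- The submodule `I ⊗ T(V) + T(V) ⊗ J` of `T(V) ⊗ T(V)`. -/
def mixedPair (I J : Submodule ℂ (TV θ)) : Submodule ℂ (TensorProduct ℂ (TV θ) (TV θ)) :=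
  Submodule.span ℂ
    ({x | ∃ a b : TV θ, a ∈ I ∧ x = a ⊗ₜ[ℂ] b} ∪ {x | ∃ a b : TV θ, b ∈ J ∧ x = a ⊗ₜ[ℂ] b})

/-- The submodule `I ⊗ T(V) + T(V) ⊗ I` of `T(V) ⊗ T(V)`. -/
def mixedSub (I : Submodule ℂ (TV θ)) : Submodule ℂ (TensorProduct ℂ (TV θ) (TV θ)) :=
  mixedPair I I

/-- `I` is the defining ideal of a pre-Nichols algebra of `q`：an ℕ₀-homogeneous
two-sided (bi-)ideal of `T(V)` generated in degrees `≥ 2` which is also a coideal.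
Such an ideal is automatically contained in the defining ideal `Jq` of the Nichols
algebra, and the pre-Nichols algebra is the quotient `T(V)/I`. -/
structure IsPreNicholsIdeal (S : BraidedStr θ q) (I : Submodule ℂ (TV θ)) : Prop where
  mul_left : ∀ a x : TV θ, x ∈ I → a * x ∈ I
  mul_right : ∀ a x : TV θ, x ∈ I → x * a ∈ I
  homog_ge2 : I = Submodule.span ℂ {x | x ∈ I ∧ ∃ n, 2 ≤ n ∧ x ∈ homogTot θ n}
  coideal : ∀ x ∈ I, S.Δ x ∈ mixedSub I

/-- The defining ideal `J_q` of the Nichols algebra `B_q = T(V)/J_q`: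
the maximal homogeneous braided Hopf ideal generated in degrees `≥ 2`. -/
def Jq (S : BraidedStr θ q) : Submodule ℂ (TV θ) := sSup {I | IsPreNicholsIdeal S I}

/-- The standard filtration of `T(V)`: span of words of length `≤ n`. -/
def Wfil (θ : ℕ) (n : ℕ) : Submodule ℂ (TV θ) :=
  Submodule.span ℂ {x | ∃ w : List (Fin θ), w.length ≤ n ∧ x = wordElem θ w}

/-- The quotient algebra `T(V)/I` has finite Gelfand–Kirillov dimension, i.e.
the standard filtration of the (finitely generated) quotient has polynomial growth. -/
def FinGK (I : Submodule ℂ (TV θ)) : Prop :=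
  ∃ C d : ℕ, ∀ n : ℕ, Module.finrank ℂ ((Wfil θ n).map I.mkQ) ≤ C * (n + 1) ^ d

/-- The Gelfand–Kirillov dimension of the quotient algebra `T(V)/I`. -/
def GKdim (I : Submodule ℂ (TV θ)) : ℝ :=
  Filter.limsup
    (fun n : ℕ => Real.log (Module.finrank ℂ ((Wfil θ n).map I.mkQ)) / Real.log n)
    Filter.atTop

/-- `I` defines an eminent pre-Nichols algebra: it is a finite-GKdim pre-Nichols
algebra, and every finite-GKdim pre-Nichols algebra of `q` is a quotient of it. -/
def IsEminent (S : BraidedStr θ q) (I : Submodule ℂ (TV θ)) : Prop :=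
  IsPreNicholsIdeal S I ∧ FinGK I ∧
    ∀ I' : Submodule ℂ (TV θ), IsPreNicholsIdeal S I' → FinGK I' → I ≤ I'

/-- The Dynkin diagram of the braiding matrix `q`: vertices `Fin θ`, an edge between
`i ≠ j` iff `q̃_{ij} ≠ 1`. -/
def dynkin {θ : ℕ} (q : Fin θ → Fin θ → ℂˣ) : SimpleGraph (Fin θ) :=
  SimpleGraph.fromRel (fun i j => qtil q i j ≠ 1)

/-- The quantum number `(m)_t = 1 + t + ⋯ + t^{m-1}`. -/
def qnum (t : ℂ) (m : ℕ) : ℂ := ∑ k ∈ Finset.range m, t ^ k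

/-- The set of `n ∈ ℕ₀` such that `(n+1)_{q_{ii}} (1 - q_{ii}^n q̃_{ij}) = 0`,
i.e. such that `(ad_c x_i)^{n+1} x_j = 0` in the Nichols algebra.  The entry
`c_{ij}` of the generalized Cartan matrix is `-(min of this set)`. -/
def cSet {θ : ℕ} (q : Fin θ → Fin θ → ℂˣ) (i j : Fin θ) : Set ℕ :=
  {n | qnum (q i i : ℂ) (n + 1) * (1 - (q i i : ℂ) ^ n * qtil q i j) = 0}

/-- The generalized Cartan matrix of `q`. -/
def cij {θ : ℕ} (q : Fin θ → Fin θ → ℂˣ) (i j : Fin θ) : ℤ :=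
  if i = j then 2 else -(Int.ofNat (sInf (cSet q i j)))

/-- All entries `c_{ij}` are defined at the vertex `i`. -/
def reflectable {θ : ℕ} (q : Fin θ → Fin θ → ℂˣ) (i : Fin θ) : Prop :=
  ∀ j, j ≠ i → (cSet q i j).Nonempty

/-- The `i`-th reflection of the braiding matrix:
`(r_i q)_{jk} = q(s_i α_j, s_i α_k)` where `s_i α_j = α_j - c_{ij} α_i`. -/
def reflectMat {θ : ℕ} (q : Fin θ → Fin θ → ℂˣ) (i : Fin θ) : Fin θ → Fin θ → ℂˣ :=
  fun j k =>
    q j k * q j i ^ (-(cij q i k)) * q i k ^ (-(cij q i j)) * q i i ^ (cij q i j * cij q i k)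

/-- The reflection `s_i` acting on `ℤ^θ`. -/
def sRefl {θ : ℕ} (q : Fin θ → Fin θ → ℂˣ) (i : Fin θ) (β : Fin θ → ℤ) : Fin θ → ℤ :=
  fun k => β k - (if k = i then ∑ j, cij q i j * β j else 0)

/-- The (real) roots of `q`, together with the base points of the Weyl groupoid at
which they live: pairs `(q', β)` obtained from a simple root of `q` by iterated
reflections. -/
inductive ReachRoot {θ : ℕ} (q₀ : Fin θ → Fin θ → ℂˣ) :
    (Fin θ → Fin θ → ℂˣ) → (Fin θ → ℤ) → Prop
  | simple (j : Fin θ) : ReachRoot q₀ q₀ (fun k => if k = j then 1 else 0)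
  | reflect {q' : Fin θ → Fin θ → ℂˣ} {β : Fin θ → ℤ} (i : Fin θ) :
      ReachRoot q₀ q' β → ReachRoot q₀ (reflectMat q' i) (sRefl q' i β)

/-- `q` has a finite (generalized) root system: all reflections are defined at every
point of the Weyl groupoid, and the set of roots so obtained is finite. -/
def FiniteRootSystem {θ : ℕ} (q : Fin θ → Fin θ → ℂˣ) : Prop :=
  (∀ q' i, (∃ β, ReachRoot q q' β) → reflectable q' i) ∧
    Set.Finite {β : Fin θ → ℤ | ∃ q', ReachRoot q q' β}

/-- Conjecture (Andruskiewitsch–Angiono–Heckenberger): the root system of a Nichols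
algebra of diagonal type with finite Gelfand–Kirillov dimension is finite. -/
def AAH : Prop :=
  ∀ (θ : ℕ) (q : Fin θ → Fin θ → ℂˣ) (S : BraidedStr θ q), FinGK (Jq S) → FiniteRootSystem q

/-- The two-sided ideal of `T(V)` generated by a set. -/
def idealGen (θ : ℕ) (s : Set (TV θ)) : Submodule ℂ (TV θ) :=
  Submodule.span ℂ {x | ∃ g ∈ s, ∃ a b : TV θ, x = a * g * b}

end PreNicholsPaper

namespace PreNicholsPaper

section
variable {θ : ℕ} {q : Fin θ → Fin θ → ℂˣ}

/-! ### Words, degrees and the bicharacter -/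

@[simp] lemma wordElem_nil : wordElem θ [] = 1 := rfl

lemma wordElem_cons (a : Fin θ) (w : List (Fin θ)) :
    wordElem θ (a :: w) = gen θ a * wordElem θ w := by
  simp [wordElem]

lemma wordElem_append (v w : List (Fin θ)) :
    wordElem θ (v ++ w) = wordElem θ v * wordElem θ w := by
  simp [wordElem]

lemma wordElem_singleton (a : Fin θ) : wordElem θ [a] = gen θ a := by
  simp [wordElem]

/-- The basis of `T(V)` consisting of the words. -/
def wordBasis (θ : ℕ) : Module.Basis (List (Fin θ)) ℂ (TV θ) :=
  (FreeAlgebra.basisFreeMonoid ℂ (Fin θ)).reindex FreeMonoid.toList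

@[simp] lemma wordBasis_apply (w : List (Fin θ)) : wordBasis θ w = wordElem θ w := by
  have h : ∀ w : List (Fin θ), FreeAlgebra.equivMonoidAlgebraFreeMonoid (wordElem θ w)
      = MonoidAlgebra.single (FreeMonoid.ofList w) (1 : ℂ) := by
    intro w
    induction w with
    | nil => simp [MonoidAlgebra.one_def]
    | cons a w ih =>
      rw [wordElem_cons, map_mul, ih]
      simp [gen, FreeAlgebra.equivMonoidAlgebraFreeMonoid, MonoidAlgebra.of_apply,
        MonoidAlgebra.single_mul_single]
  have h2 := h w
  rw [← AlgEquiv.eq_symm_apply] at h2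
  rw [h2]
  simp [wordBasis, FreeAlgebra.basisFreeMonoid, MonoidAlgebra.coeffLinearEquiv]

lemma word_ext {M : Type*} [AddCommMonoid M] [Module ℂ M] {f g : TV θ →ₗ[ℂ] M}
    (h : ∀ w, f (wordElem θ w) = g (wordElem θ w)) : f = g :=
  (wordBasis θ).ext (by simpa using h)

lemma word_ext₂ {M : Type*} [AddCommMonoid M] [Module ℂ M]
    {f g : TV θ ⊗[ℂ] TV θ →ₗ[ℂ] M}
    (h : ∀ v w, f (wordElem θ v ⊗ₜ wordElem θ w) = g (wordElem θ v ⊗ₜ wordElem θ w)) : f = g := by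
  apply TensorProduct.ext
  apply word_ext
  intro v
  apply word_ext
  intro w
  simpa using h v w

lemma span_words : Submodule.span ℂ (Set.range (wordElem θ)) = ⊤ := by
  have := (wordBasis θ).span_eq
  rwa [show (⇑(wordBasis θ)) = wordElem θ from funext wordBasis_apply] at this

@[simp] lemma degW_nil : degW θ [] = 0 := by
  ext; simp [degW]

lemma degW_cons (a : Fin θ) (w : List (Fin θ)) : degW θ (a :: w) = δ θ a + degW θ w := by
  ext i
  simp only [degW, List.count_cons, δ, Pi.add_apply, beq_iff_eq]
  rw [add_comm]
  congr 1
  simp [eq_comm]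

lemma degW_append (v w : List (Fin θ)) : degW θ (v ++ w) = degW θ v + degW θ w := by
  ext i; simp [degW]

lemma degW_singleton (a : Fin θ) : degW θ [a] = δ θ a := by
  rw [degW_cons]; simp

lemma qf_add_left (a b c : Fin θ → ℕ) : qf q (a + b) c = qf q a c * qf q b c := by
  simp [qf, add_mul, pow_add, Finset.prod_mul_distrib]

lemma qf_add_right (a b c : Fin θ → ℕ) : qf q a (b + c) = qf q a b * qf q a c := by
  simp [qf, mul_add, pow_add, Finset.prod_mul_distrib]

@[simp] lemma qf_zero_left (a : Fin θ → ℕ) : qf q 0 a = 1 := by simp [qf]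

@[simp] lemma qf_zero_right (a : Fin θ → ℕ) : qf q a 0 = 1 := by simp [qf]

lemma qf_delta (i j : Fin θ) : qf q (δ θ i) (δ θ j) = q i j := by
  unfold qf
  rw [Finset.prod_eq_single i, Finset.prod_eq_single j]
  · simp [δ]
  · intro b _ hb; simp [δ, hb]
  · simp
  · intro b _ hb; simp [δ, hb]
  · simp

lemma qf_ne_zero (a b : Fin θ → ℕ) : qf q a b ≠ 0 := by
  simp [qf, Finset.prod_eq_zero_iff]

/-- The diagonal automorphism of `T(V)` acting on degree `b` by `q(d, b)`. -/
def twist (q : Fin θ → Fin θ → ℂˣ) (d : Fin θ → ℕ) : TV θ →ₐ[ℂ] TV θ :=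
  FreeAlgebra.lift ℂ fun l => qf q d (δ θ l) • gen θ l

lemma twist_gen (d : Fin θ → ℕ) (l : Fin θ) :
    twist q d (gen θ l) = qf q d (δ θ l) • gen θ l := by
  simp [twist, gen]

lemma twist_word (d : Fin θ → ℕ) (w : List (Fin θ)) :
    twist q d (wordElem θ w) = qf q d (degW θ w) • wordElem θ w := by
  induction w with
  | nil => simp
  | cons a w ih =>
    rw [wordElem_cons, map_mul, ih, twist_gen, degW_cons, qf_add_right, smul_mul_smul_comm]

lemma word_mem_homogD (w : List (Fin θ)) : wordElem θ w ∈ homogD θ (degW θ w) :=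
  Submodule.subset_span ⟨w, rfl, rfl⟩

lemma word_mem_homogTot (w : List (Fin θ)) : wordElem θ w ∈ homogTot θ w.length :=
  Submodule.subset_span ⟨w, rfl, rfl⟩

lemma one_mem_homogD : (1 : TV θ) ∈ homogD θ 0 := by
  simpa using word_mem_homogD (θ := θ) []

lemma gen_mem_homogD (a : Fin θ) : gen θ a ∈ homogD θ (δ θ a) := by
  simpa [wordElem_singleton, degW_singleton] using word_mem_homogD [a]

lemma mul_mem_homogD {a b : Fin θ → ℕ} {x y : TV θ} (hx : x ∈ homogD θ a)
    (hy : y ∈ homogD θ b) : x * y ∈ homogD θ (a + b) := by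
  have : homogD θ a * homogD θ b ≤ homogD θ (a + b) := by
    rw [homogD, homogD, Submodule.span_mul_span, Submodule.span_le]
    rintro _ ⟨_, ⟨v, hv, rfl⟩, _, ⟨w, hw, rfl⟩, rfl⟩
    refine Submodule.subset_span ⟨v ++ w, ?_, ?_⟩
    · rw [degW_append, hv, hw]
    · simp [wordElem_append]
  exact this (Submodule.mul_mem_mul hx hy)

lemma brk_mem_homogD {a b : Fin θ → ℕ} {x y : TV θ} (hx : x ∈ homogD θ a)
    (hy : y ∈ homogD θ b) : brk q a b x y ∈ homogD θ (a + b) :=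
  Submodule.sub_mem _ (mul_mem_homogD hx hy)
    (Submodule.smul_mem _ _ (add_comm a b ▸ mul_mem_homogD hy hx))

lemma twist_homogD {d e : Fin θ → ℕ} {x : TV θ} (hx : x ∈ homogD θ e) :
    twist q d x = qf q d e • x := by
  refine Submodule.span_induction (p := fun x _ => twist q d x = qf q d e • x)
    ?_ ?_ ?_ ?_ hx
  · rintro _ ⟨w, rfl, rfl⟩; exact twist_word d w
  · simp
  · intro x y _ _ hx hy; simp [hx, hy]
  · intro c x _ hx; simp [hx, smul_comm c]

lemma homogD_le_homogTot (d : Fin θ → ℕ) : homogD θ d ≤ homogTot θ (∑ l, d l) := by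
  apply Submodule.span_mono
  rintro _ ⟨w, rfl, rfl⟩
  refine ⟨w, ?_, rfl⟩
  rw [← List.sum_toFinset_count_eq_length]
  refine Finset.sum_subset (Finset.subset_univ _) fun a _ ha => ?_
  exact List.count_eq_zero_of_not_mem (by simpa using ha)

/-! ### The braided coproduct -/

lemma BraidedStr.mulB_twist (S : BraidedStr θ q) {β : Fin θ → ℕ} {b : TV θ}
    (hb : b ∈ homogD θ β) (a c d : TV θ) :
    S.mulB (a ⊗ₜ b) (c ⊗ₜ d) = (a * twist q β c) ⊗ₜ (b * d) := by
  refine Submodule.span_induction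
    (p := fun b _ => S.mulB (a ⊗ₜ b) (c ⊗ₜ d) = (a * twist q β c) ⊗ₜ (b * d)) ?_ ?_ ?_ ?_ hb
  · rintro _ ⟨w, rfl, rfl⟩
    have : (S.mulB (a ⊗ₜ wordElem θ w)).comp ((TensorProduct.mk ℂ _ _).flip d)
        = ((TensorProduct.mk ℂ _ _).flip (wordElem θ w * d)).comp
          ((LinearMap.mulLeft ℂ a).comp (twist q (degW θ w)).toLinearMap) := by
      apply word_ext
      intro v
      simp [S.mulB_spec, twist_word, TensorProduct.smul_tmul']
    simpa using congrArg (fun f => f c) this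
  · simp
  · intro x y _ _ hx hy
    simp [TensorProduct.tmul_add, hx, hy, add_mul]
  · intro r x _ hx
    simp [TensorProduct.tmul_smul, hx]

lemma BraidedStr.mulB_one_right (S : BraidedStr θ q) (a c d : TV θ) :
    S.mulB (a ⊗ₜ 1) (c ⊗ₜ d) = (a * c) ⊗ₜ d := by
  rw [S.mulB_twist one_mem_homogD]
  have : twist q 0 = AlgHom.id ℂ (TV θ) := by
    apply FreeAlgebra.hom_ext
    ext l
    simpa [gen] using twist_gen (q := q) 0 l
  simp [this]

lemma BraidedStr.Δ_gen_mul (S : BraidedStr θ q) (a : Fin θ) (v : TV θ) :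
    S.Δ (gen θ a * v) = TensorProduct.map (LinearMap.mulLeft ℂ (gen θ a)) LinearMap.id (S.Δ v)
      + TensorProduct.map (twist q (δ θ a)).toLinearMap
          (LinearMap.mulLeft ℂ (gen θ a)) (S.Δ v) := by
  rw [S.Δ_mul, S.Δ_gen]
  generalize S.Δ v = z
  induction z using TensorProduct.induction_on with
  | zero => simp
  | add x y hx hy =>
    rw [map_add, hx, hy, map_add, map_add]; abel
  | tmul c d =>
    simp [S.mulB_twist (gen_mem_homogD a), S.mulB_one_right]

/-- The multiplication of the braided tensor square of `T(V)`. -/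
def braidedMul (q : Fin θ → Fin θ → ℂˣ) :
    TV θ ⊗[ℂ] TV θ →ₗ[ℂ] TV θ ⊗[ℂ] TV θ →ₗ[ℂ] TV θ ⊗[ℂ] TV θ :=
  TensorProduct.lift (LinearMap.compl₁₂ (LinearMap.mul ℂ (Module.End ℂ (TV θ ⊗[ℂ] TV θ)))
    ((LinearMap.rTensorHom (TV θ)).comp (LinearMap.mul ℂ (TV θ)))
    ((wordBasis θ).constr ℂ fun w =>
      TensorProduct.map (twist q (degW θ w)).toLinearMap (LinearMap.mulLeft ℂ (wordElem θ w))))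

lemma braidedMul_word (a c d : TV θ) (w : List (Fin θ)) :
    braidedMul q (a ⊗ₜ wordElem θ w) (c ⊗ₜ d)
      = (a * twist q (degW θ w) c) ⊗ₜ (wordElem θ w * d) := by
  have h := (wordBasis θ).constr_basis ℂ (fun w =>
      TensorProduct.map (twist q (degW θ w)).toLinearMap (LinearMap.mulLeft ℂ (wordElem θ w))) w
  rw [wordBasis_apply] at h
  simp [braidedMul, h]

lemma braidedMul_assoc (x y z : TV θ ⊗[ℂ] TV θ) :
    braidedMul q (braidedMul q x y) z = braidedMul q x (braidedMul q y z) := by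
  have key : ∀ (a c : TV θ) (v w : List (Fin θ)) (z : TV θ ⊗[ℂ] TV θ),
      braidedMul q (braidedMul q (a ⊗ₜ wordElem θ v) (c ⊗ₜ wordElem θ w)) z
        = braidedMul q (a ⊗ₜ wordElem θ v) (braidedMul q (c ⊗ₜ wordElem θ w) z) := by
    intro a c v w z
    induction z using TensorProduct.induction_on with
    | zero => simp
    | add x y hx hy => simp only [map_add, hx, hy]
    | tmul e f =>
      have ht : twist q (degW θ v + degW θ w) e
          = twist q (degW θ v) (twist q (degW θ w) e) := by
        have : (twist q (degW θ v + degW θ w))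
            = (twist q (degW θ v)).comp (twist q (degW θ w)) := by
          apply FreeAlgebra.hom_ext
          ext l
          have := twist_gen (q := q)
          simp only [gen] at this
          simp [this, qf_add_left, smul_smul, mul_comm]
        rw [this]; rfl
      rw [braidedMul_word, braidedMul_word, braidedMul_word, ← wordElem_append, braidedMul_word,
        degW_append, ht, wordElem_append, map_mul, mul_assoc, mul_assoc]
  have h1 : ∀ (a : TV θ) (v : List (Fin θ)) (y : TV θ ⊗[ℂ] TV θ),
      braidedMul q (braidedMul q (a ⊗ₜ wordElem θ v) y) z
        = braidedMul q (a ⊗ₜ wordElem θ v) (braidedMul q y z) := by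
    intro a v y
    have : ((braidedMul q).flip z).comp (braidedMul q (a ⊗ₜ wordElem θ v))
        = (braidedMul q (a ⊗ₜ wordElem θ v)).comp ((braidedMul q).flip z) := by
      apply word_ext₂
      intro c w
      simpa using key a (wordElem θ c) v w z
    simpa using congrArg (fun f => f y) this
  have : ((braidedMul q).flip z).comp ((braidedMul q).flip y)
      = (braidedMul q).flip (braidedMul q y z) := by
    apply word_ext₂
    intro c w
    simpa using h1 (wordElem θ c) w y
  simpa using congrArg (fun f => f x) this

/-- The braided coproduct on words. -/
def coprodWord (q : Fin θ → Fin θ → ℂˣ) : List (Fin θ) → TV θ ⊗[ℂ] TV θ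
  | [] => 1 ⊗ₜ 1
  | a :: w => braidedMul q (gen θ a ⊗ₜ 1 + 1 ⊗ₜ gen θ a) (coprodWord q w)

lemma braidedMul_one (z : TV θ ⊗[ℂ] TV θ) : braidedMul q (1 ⊗ₜ 1) z = z := by
  have h0 : twist q 0 = AlgHom.id ℂ (TV θ) := by
    apply FreeAlgebra.hom_ext
    ext l
    simpa [gen] using twist_gen (q := q) 0 l
  have : braidedMul q (1 ⊗ₜ 1) = LinearMap.id := by
    apply word_ext₂
    intro v w
    have := braidedMul_word (q := q) 1 (wordElem θ v) (wordElem θ w) []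
    simpa [h0] using this
  simp [this]

lemma coprodWord_append (v w : List (Fin θ)) :
    coprodWord q (v ++ w) = braidedMul q (coprodWord q v) (coprodWord q w) := by
  induction v with
  | nil => simp [coprodWord, braidedMul_one]
  | cons a v ih => rw [List.cons_append, coprodWord, ih, coprodWord, braidedMul_assoc]

/-- The braided bialgebra structure on `T(V)`. -/
def braidedStr (q : Fin θ → Fin θ → ℂˣ) : BraidedStr θ q where
  Δ := (wordBasis θ).constr ℂ (coprodWord q)
  mulB := braidedMul q
  mulB_spec a d wb wc := by
    rw [braidedMul_word, twist_word, mul_smul_comm, TensorProduct.smul_tmul']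
  Δ_one := by
    have := (wordBasis θ).constr_basis ℂ (coprodWord q) []
    simpa [coprodWord] using this
  Δ_gen a := by
    have := (wordBasis θ).constr_basis ℂ (coprodWord q) [a]
    rw [wordBasis_apply, wordElem_singleton] at this
    rw [this]
    have h1 := braidedMul_word (q := q) (gen θ a) 1 1 []
    have h2 := braidedMul_word (q := q) 1 1 1 [a]
    simp only [wordElem_nil, wordElem_singleton] at h1 h2
    simp [coprodWord, h1, h2]
  Δ_mul u v := by
    have hΔ : ∀ w, (wordBasis θ).constr ℂ (coprodWord q) (wordElem θ w) = coprodWord q w := by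
      intro w
      simpa using (wordBasis θ).constr_basis ℂ (coprodWord q) w
    have : (LinearMap.mul ℂ (TV θ)).compr₂ ((wordBasis θ).constr ℂ (coprodWord q))
        = (braidedMul q).compl₁₂ ((wordBasis θ).constr ℂ (coprodWord q))
          ((wordBasis θ).constr ℂ (coprodWord q)) := by
      apply word_ext
      intro v
      apply word_ext
      intro w
      simp [hΔ, ← wordElem_append, coprodWord_append]
    simpa using congrArg (fun f => f u v) this

/-! ### Skew derivations and the radical -/

lemma twist_comm (d e : Fin θ → ℕ) (x : TV θ) :
    twist q d (twist q e x) = twist q e (twist q d x) := by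
  have : (twist q d).toLinearMap ∘ₗ (twist q e).toLinearMap
      = (twist q e).toLinearMap ∘ₗ (twist q d).toLinearMap := by
    apply word_ext
    intro w
    simp [twist_word, smul_smul, mul_comm]
  simpa using congrArg (fun f => f x) this

/-- The skew derivation `∂_a` on words. -/
def pderWord (q : Fin θ → Fin θ → ℂˣ) (a : Fin θ) : List (Fin θ) → TV θ
  | [] => 0
  | l :: w => gen θ l * pderWord q a w + if l = a then twist q (δ θ a) (wordElem θ w) else 0

/-- The skew derivation `∂_a` of `T(V)`. -/
def pder (q : Fin θ → Fin θ → ℂˣ) (a : Fin θ) : TV θ →ₗ[ℂ] TV θ :=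
  (wordBasis θ).constr ℂ (pderWord q a)

lemma pder_word (a : Fin θ) (w : List (Fin θ)) : pder q a (wordElem θ w) = pderWord q a w := by
  simpa [pder] using (wordBasis θ).constr_basis ℂ (pderWord q a) w

@[simp] lemma pder_one (a : Fin θ) : pder q a 1 = 0 := by
  simpa [pderWord] using pder_word (q := q) a []

lemma pder_gen_mul (a l : Fin θ) (v : TV θ) :
    pder q a (gen θ l * v) = gen θ l * pder q a v + if l = a then twist q (δ θ a) v else 0 := by
  have : (pder q a).comp (LinearMap.mulLeft ℂ (gen θ l))
      = (LinearMap.mulLeft ℂ (gen θ l)).comp (pder q a)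
        + if l = a then (twist q (δ θ a)).toLinearMap else 0 := by
    apply word_ext
    intro w
    have := pder_word (q := q) a (l :: w)
    rw [wordElem_cons] at this
    simp only [LinearMap.comp_apply, LinearMap.mulLeft_apply, this, LinearMap.add_apply,
      pder_word, pderWord]
    split_ifs <;> simp
  have h := congrArg (fun f => f v) this
  simp only [LinearMap.comp_apply, LinearMap.mulLeft_apply, LinearMap.add_apply] at h
  rw [h]
  split_ifs <;> simp

lemma pder_gen (a l : Fin θ) : pder q a (gen θ l) = if l = a then 1 else 0 := by
  have := pder_gen_mul (q := q) a l 1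
  simpa using this

lemma pder_mul (a : Fin θ) (u v : TV θ) :
    pder q a (u * v) = u * pder q a v + pder q a u * twist q (δ θ a) v := by
  have : (pder q a).comp (LinearMap.mulRight ℂ v)
      = LinearMap.mulRight ℂ (pder q a v)
        + (LinearMap.mulRight ℂ (twist q (δ θ a) v)).comp (pder q a) := by
    apply word_ext
    intro w
    simp only [LinearMap.comp_apply, LinearMap.mulRight_apply, LinearMap.add_apply]
    induction w with
    | nil => simp
    | cons l w ih =>
      rw [wordElem_cons, mul_assoc, pder_gen_mul, ih, pder_gen_mul, add_mul, mul_add]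
      split_ifs <;> simp [mul_assoc, add_assoc]
  simpa using congrArg (fun f => f u) this

lemma pder_twist (a : Fin θ) (d : Fin θ → ℕ) (x : TV θ) :
    pder q a (twist q d x) = qf q d (δ θ a) • twist q d (pder q a x) := by
  have : (pder q a).comp (twist q d).toLinearMap
      = qf q d (δ θ a) • (twist q d).toLinearMap.comp (pder q a) := by
    apply word_ext
    intro w
    simp only [LinearMap.comp_apply, LinearMap.smul_apply, AlgHom.toLinearMap_apply]
    induction w with
    | nil => simp
    | cons l w ih =>
      rw [wordElem_cons, map_mul, twist_gen, smul_mul_assoc, map_smul, pder_gen_mul, ih,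
        pder_gen_mul, map_add, map_mul, twist_gen]
      split_ifs with h
      · subst h
        rw [twist_comm d (δ θ l)]
        simp [smul_smul]
      · simp [smul_smul, mul_comm]
  simpa using congrArg (fun f => f x) this

/-- The counit of `T(V)`. -/
def counit (θ : ℕ) : TV θ →ₐ[ℂ] ℂ := FreeAlgebra.lift ℂ fun _ => 0

@[simp] lemma counit_gen (a : Fin θ) : counit θ (gen θ a) = 0 := by simp [counit, gen]

@[simp] lemma counit_twist (d : Fin θ → ℕ) (x : TV θ) :
    counit θ (twist q d x) = counit θ x := by
  have : (counit θ).comp (twist q d) = counit θ := by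
    apply FreeAlgebra.hom_ext
    ext l
    have h1 := twist_gen (q := q) d l
    have h2 := counit_gen (θ := θ) l
    simp only [gen] at h1 h2
    simp [h1, h2]
  simpa using congrArg (fun f => f x) this

/-- `∂_w`: the composition of the skew derivations along a word, the first letter acting first. -/
def pders (q : Fin θ → Fin θ → ℂˣ) : List (Fin θ) → TV θ →ₗ[ℂ] TV θ
  | [] => LinearMap.id
  | a :: w => (pders q w).comp (pder q a)

/-- The functional `ε ∘ ∂_w`. -/
def evalW (q : Fin θ → Fin θ → ℂˣ) (w : List (Fin θ)) : TV θ →ₗ[ℂ] ℂ :=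
  (counit θ).toLinearMap.comp (pders q w)

lemma evalW_nil (x : TV θ) : evalW q [] x = counit θ x := rfl

lemma evalW_cons (a : Fin θ) (w : List (Fin θ)) (x : TV θ) :
    evalW q (a :: w) x = evalW q w (pder q a x) := rfl

/-- The elements annihilated by all iterated skew derivations followed by the counit. -/
def rad (q : Fin θ → Fin θ → ℂˣ) : Submodule ℂ (TV θ) := ⨅ w, LinearMap.ker (evalW q w)

lemma mem_rad {x : TV θ} : x ∈ rad q ↔ ∀ w, evalW q w x = 0 := by
  simp [rad]

lemma pder_mem_rad {x : TV θ} (hx : x ∈ rad q) (a : Fin θ) : pder q a x ∈ rad q := by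
  rw [mem_rad] at *
  exact fun w => hx (a :: w)

lemma le_rad {N : Submodule ℂ (TV θ)} (h0 : ∀ x ∈ N, counit θ x = 0)
    (h : ∀ a, ∀ x ∈ N, pder q a x ∈ N) : N ≤ rad q := by
  intro x hx
  rw [mem_rad]
  intro w
  induction w generalizing x with
  | nil => exact h0 x hx
  | cons a w ih => exact ih (h a x hx)

lemma counit_rad {x : TV θ} (hx : x ∈ rad q) : counit θ x = 0 := mem_rad.1 hx []

lemma twist_mem_rad {x : TV θ} (hx : x ∈ rad q) (d : Fin θ → ℕ) : twist q d x ∈ rad q := by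
  have : (rad q).map (twist q d).toLinearMap ≤ rad q := by
    apply le_rad
    · rintro _ ⟨y, hy, rfl⟩
      simpa using counit_rad hy
    · rintro a _ ⟨y, hy, rfl⟩
      exact ⟨qf q d (δ θ a) • pder q a y, Submodule.smul_mem _ _ (pder_mem_rad hy a), by
        simp [pder_twist]⟩
  exact this ⟨x, hx, rfl⟩

lemma rad_mul_right (a x : TV θ) (hx : x ∈ rad q) : x * a ∈ rad q := by
  have : rad q * ⊤ ≤ rad q := by
    apply le_rad
    · intro z hz
      refine Submodule.mul_induction_on hz (fun m hm n _ => by simp [counit_rad hm]) ?_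
      intro x y hx hy; simp [hx, hy]
    · intro b z hz
      refine Submodule.mul_induction_on hz (fun m hm n _ => ?_) ?_
      · rw [pder_mul]
        exact Submodule.add_mem _ (Submodule.mul_mem_mul hm trivial)
          (Submodule.mul_mem_mul (pder_mem_rad hm b) trivial)
      · intro x y hx hy; rw [map_add]; exact Submodule.add_mem _ hx hy
  exact this (Submodule.mul_mem_mul hx trivial)

lemma rad_mul_left (a x : TV θ) (hx : x ∈ rad q) : a * x ∈ rad q := by
  have : ⊤ * rad q ≤ rad q := by
    apply le_rad
    · intro z hz
      refine Submodule.mul_induction_on hz (fun m _ n hn => by simp [counit_rad hn]) ?_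
      intro x y hx hy; simp [hx, hy]
    · intro b z hz
      refine Submodule.mul_induction_on hz (fun m _ n hn => ?_) ?_
      · rw [pder_mul]
        exact Submodule.add_mem _ (Submodule.mul_mem_mul trivial (pder_mem_rad hn b))
          (Submodule.mul_mem_mul trivial (twist_mem_rad hn _))
      · intro x y hx hy; rw [map_add]; exact Submodule.add_mem _ hx hy
  exact this (Submodule.mul_mem_mul trivial hx)

/-! ### Total degree -/

lemma homogTot_mul {m n : ℕ} {x y : TV θ} (hx : x ∈ homogTot θ m) (hy : y ∈ homogTot θ n) :
    x * y ∈ homogTot θ (m + n) := by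
  have : homogTot θ m * homogTot θ n ≤ homogTot θ (m + n) := by
    rw [homogTot, homogTot, Submodule.span_mul_span, Submodule.span_le]
    rintro _ ⟨_, ⟨v, hv, rfl⟩, _, ⟨w, hw, rfl⟩, rfl⟩
    exact Submodule.subset_span ⟨v ++ w, by simp [hv, hw], by simp [wordElem_append]⟩
  exact this (Submodule.mul_mem_mul hx hy)

lemma gen_mem_homogTot (a : Fin θ) : gen θ a ∈ homogTot θ 1 := by
  simpa [wordElem_singleton] using word_mem_homogTot [a]

lemma pder_word_mem (a l : Fin θ) (w : List (Fin θ)) :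
    pder q a (wordElem θ (l :: w)) ∈ homogTot θ w.length := by
  induction w generalizing l with
  | nil =>
    rw [wordElem_singleton, pder_gen]
    split_ifs
    · simpa using word_mem_homogTot (θ := θ) []
    · exact Submodule.zero_mem _
  | cons b w ih =>
    rw [wordElem_cons, pder_gen_mul]
    refine Submodule.add_mem _ ?_ ?_
    · have := homogTot_mul (gen_mem_homogTot l) (ih b)
      rwa [add_comm] at this
    · split_ifs
      · rw [twist_word]
        exact Submodule.smul_mem _ _ (word_mem_homogTot _)
      · exact Submodule.zero_mem _

lemma pder_mem_homogTot {n : ℕ} (a : Fin θ) {x : TV θ} (hx : x ∈ homogTot θ (n + 1)) :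
    pder q a x ∈ homogTot θ n := by
  suffices homogTot θ (n + 1) ≤ (homogTot θ n).comap (pder q a) from this hx
  rw [homogTot, Submodule.span_le]
  rintro _ ⟨w, hw, rfl⟩
  cases w with
  | nil => simp at hw
  | cons l w =>
    obtain rfl : w.length = n := by simpa using hw
    exact pder_word_mem a l w

lemma eq_counit_of_homogTot {x : TV θ} (hx : x ∈ homogTot θ 0) : x = counit θ x • 1 := by
  refine Submodule.span_induction (p := fun x _ => x = counit θ x • 1) ?_ ?_ ?_ ?_ hx
  · rintro _ ⟨w, hw, rfl⟩
    obtain rfl := List.length_eq_zero_iff.1 hw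
    simp
  · simp
  · intro x y _ _ hx hy
    rw [map_add, add_smul, ← hx, ← hy]
  · intro c x _ hx
    rw [map_smul, smul_assoc, ← hx]

lemma counit_homogTot {n : ℕ} {x : TV θ} (hx : x ∈ homogTot θ (n + 1)) : counit θ x = 0 := by
  suffices homogTot θ (n + 1) ≤ LinearMap.ker (counit θ).toLinearMap from this hx
  rw [homogTot, Submodule.span_le]
  rintro _ ⟨w, hw, rfl⟩
  cases w with
  | nil => simp at hw
  | cons l w => simp [wordElem_cons]

lemma pder_homogTot_zero (a : Fin θ) {x : TV θ} (hx : x ∈ homogTot θ 0) : pder q a x = 0 := by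
  rw [eq_counit_of_homogTot hx]; simp

lemma evalW_homogTot {n : ℕ} (w : List (Fin θ)) (hw : w.length ≠ n) {x : TV θ}
    (hx : x ∈ homogTot θ n) : evalW q w x = 0 := by
  induction w generalizing n x with
  | nil =>
    cases n with
    | zero => simp at hw
    | succ n => exact counit_homogTot hx
  | cons a w ih =>
    rw [evalW_cons]
    cases n with
    | zero => rw [pder_homogTot_zero a hx, map_zero]
    | succ n => exact ih (by simpa using hw) (pder_mem_homogTot a hx)

lemma eq_sum_of_homogTot_one (q : Fin θ → Fin θ → ℂˣ) {x : TV θ} (hx : x ∈ homogTot θ 1) :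
    x = ∑ a, evalW q [a] x • gen θ a := by
  refine Submodule.span_induction (p := fun x _ => x = ∑ a, evalW q [a] x • gen θ a)
    ?_ ?_ ?_ ?_ hx
  · rintro _ ⟨w, hw, rfl⟩
    obtain ⟨l, rfl⟩ := List.length_eq_one_iff.1 hw
    simp [wordElem_singleton, evalW_cons, evalW_nil, pder_gen, apply_ite]
  · simp
  · intro x y _ _ hx hy
    conv_lhs => rw [hx, hy]
    simp [add_smul, Finset.sum_add_distrib]
  · intro c x _ hx
    conv_lhs => rw [hx]
    simp [Finset.smul_sum, smul_smul]

/-- The projection of `T(V)` onto its component of total degree `n`. -/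
def projTot (θ n : ℕ) : TV θ →ₗ[ℂ] TV θ :=
  (wordBasis θ).constr ℂ fun w => if w.length = n then wordElem θ w else 0

lemma projTot_word (n : ℕ) (w : List (Fin θ)) :
    projTot θ n (wordElem θ w) = if w.length = n then wordElem θ w else 0 := by
  simpa [projTot] using (wordBasis θ).constr_basis ℂ
    (fun w : List (Fin θ) => if w.length = n then wordElem θ w else 0) w

lemma projTot_mem (n : ℕ) (x : TV θ) : projTot θ n x ∈ homogTot θ n := by
  have hx : x ∈ Submodule.span ℂ (Set.range (wordElem θ)) := by rw [span_words]; trivial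
  suffices Submodule.span ℂ (Set.range (wordElem θ)) ≤ (homogTot θ n).comap (projTot θ n) from
    this hx
  rw [Submodule.span_le]
  rintro _ ⟨w, rfl⟩
  simp only [Submodule.comap_coe, Set.mem_preimage, projTot_word]
  split_ifs with h
  · exact h ▸ word_mem_homogTot w
  · exact Submodule.zero_mem _

lemma projTot_of_homogTot {m n : ℕ} {x : TV θ} (hx : x ∈ homogTot θ m) :
    projTot θ n x = if m = n then x else 0 := by
  refine Submodule.span_induction (p := fun x _ => projTot θ n x = if m = n then x else 0)
    ?_ ?_ ?_ ?_ hx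
  · rintro _ ⟨w, hw, rfl⟩
    rw [projTot_word, hw]
  · simp
  · intro x y _ _ hx hy
    rw [map_add, hx, hy]; split_ifs <;> simp
  · intro c x _ hx
    rw [map_smul, hx]; split_ifs <;> simp

lemma eq_sum_projTot (x : TV θ) :
    ∃ N, ∀ M, N ≤ M → x = ∑ n ∈ Finset.range M, projTot θ n x := by
  have hx : x ∈ Submodule.span ℂ (Set.range (wordElem θ)) := by rw [span_words]; trivial
  refine Submodule.span_induction
    (p := fun x _ => ∃ N, ∀ M, N ≤ M → x = ∑ n ∈ Finset.range M, projTot θ n x)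
    ?_ ?_ ?_ ?_ hx
  · rintro _ ⟨w, rfl⟩
    refine ⟨w.length + 1, fun M hM => ?_⟩
    simp only [projTot_word]
    rw [Finset.sum_ite_eq, if_pos (Finset.mem_range.2 hM)]
  · exact ⟨0, by simp⟩
  · rintro x y _ _ ⟨N, hN⟩ ⟨N', hN'⟩
    refine ⟨max N N', fun M hM => ?_⟩
    simp only [map_add, Finset.sum_add_distrib]
    rw [← hN M (le_trans (le_max_left _ _) hM), ← hN' M (le_trans (le_max_right _ _) hM)]
  · rintro c x _ ⟨N, hN⟩
    refine ⟨N, fun M hM => ?_⟩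
    simp only [map_smul, ← Finset.smul_sum]
    rw [← hN M hM]

lemma evalW_projTot (w : List (Fin θ)) (n : ℕ) (x : TV θ) :
    evalW q w (projTot θ n x) = if w.length = n then evalW q w x else 0 := by
  split_ifs with h
  · obtain ⟨N, hN⟩ := eq_sum_projTot x
    have := hN (max N (n + 1)) (le_max_left _ _)
    conv_rhs => rw [this]
    rw [map_sum, Finset.sum_eq_single n]
    · intro m _ hm
      exact evalW_homogTot w (by omega) (projTot_mem m x)
    · intro hn
      simp at hn
  · exact evalW_homogTot w h (projTot_mem n x)

lemma projTot_mem_rad {x : TV θ} (hx : x ∈ rad q) (n : ℕ) : projTot θ n x ∈ rad q := by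
  rw [mem_rad] at *
  intro w
  rw [evalW_projTot, hx]
  simp

lemma rad_homog_ge2 :
    rad q = Submodule.span ℂ {x | x ∈ rad q ∧ ∃ n, 2 ≤ n ∧ x ∈ homogTot θ n} := by
  apply le_antisymm
  · intro x hx
    obtain ⟨N, hN⟩ := eq_sum_projTot x
    rw [hN N le_rfl]
    refine Submodule.sum_mem _ fun n _ => ?_
    have h := projTot_mem_rad hx n
    have h2 := projTot_mem n x
    match n, h, h2 with
    | 0, h, h2 =>
      rw [eq_counit_of_homogTot h2, counit_rad h, zero_smul]
      exact Submodule.zero_mem _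
    | 1, h, h2 =>
      rw [eq_sum_of_homogTot_one q h2]
      refine Submodule.sum_mem _ fun a _ => ?_
      rw [mem_rad.1 h [a], zero_smul]
      exact Submodule.zero_mem _
    | n + 2, h, h2 => exact Submodule.subset_span ⟨h, n + 2, by omega, h2⟩
  · rw [Submodule.span_le]
    exact fun x hx => hx.1

/-! ### The radical is the defining ideal of the Nichols algebra -/

/-- Contraction of the second tensor factor with a functional. -/
def contr (ψ : TV θ →ₗ[ℂ] ℂ) : TV θ ⊗[ℂ] TV θ →ₗ[ℂ] TV θ :=
  (TensorProduct.rid ℂ (TV θ)).toLinearMap.comp (LinearMap.lTensor (TV θ) ψ)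

@[simp] lemma contr_tmul (ψ : TV θ →ₗ[ℂ] ℂ) (a b : TV θ) : contr ψ (a ⊗ₜ b) = ψ b • a := by
  simp [contr]

lemma contr_counit_coprod (S : BraidedStr θ q) (v : TV θ) :
    contr (counit θ).toLinearMap (S.Δ v) = v := by
  have : (contr (counit θ).toLinearMap).comp S.Δ = LinearMap.id := by
    apply word_ext
    intro w
    simp only [LinearMap.comp_apply, LinearMap.id_apply]
    induction w with
    | nil => simp [S.Δ_one]
    | cons a w ih =>
      rw [wordElem_cons, S.Δ_gen_mul, map_add]
      conv_rhs => rw [← ih]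
      generalize S.Δ (wordElem θ w) = z
      induction z using TensorProduct.induction_on with
      | zero => simp
      | add x y hx hy =>
        rw [map_add (TensorProduct.map _ _), map_add (TensorProduct.map _ _), map_add, map_add,
          map_add, mul_add, ← hx, ← hy]
        abel
      | tmul c d => simp
  simpa using congrArg (fun f => f v) this

lemma coprod_twist (S : BraidedStr θ q) (d : Fin θ → ℕ) (v : TV θ) :
    S.Δ (twist q d v)
      = TensorProduct.map (twist q d).toLinearMap (twist q d).toLinearMap (S.Δ v) := by
  have : S.Δ.comp (twist q d).toLinearMap
      = (TensorProduct.map (twist q d).toLinearMap (twist q d).toLinearMap).comp S.Δ := by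
    apply word_ext
    intro w
    simp only [LinearMap.comp_apply, AlgHom.toLinearMap_apply]
    induction w with
    | nil => simp [S.Δ_one]
    | cons a w ih =>
      rw [wordElem_cons, map_mul, twist_gen, smul_mul_assoc, map_smul, S.Δ_gen_mul, S.Δ_gen_mul,
        ih]
      generalize S.Δ (wordElem θ w) = z
      induction z using TensorProduct.induction_on with
      | zero => simp
      | add x y hx hy =>
        simp only [map_add, smul_add] at *
        linear_combination (norm := module) hx + hy
      | tmul c d =>
        simp [twist_gen, TensorProduct.smul_tmul', TensorProduct.tmul_smul, twist_comm _ (δ θ a)]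
  simpa using congrArg (fun f => f v) this

lemma coprod_pder (S : BraidedStr θ q) (a : Fin θ) (v : TV θ) :
    LinearMap.lTensor (TV θ) (pder q a) (S.Δ v) = S.Δ (pder q a v) := by
  have : (LinearMap.lTensor (TV θ) (pder q a)).comp S.Δ = S.Δ.comp (pder q a) := by
    apply word_ext
    intro w
    simp only [LinearMap.comp_apply]
    induction w with
    | nil => simp [S.Δ_one]
    | cons l w ih =>
      rw [wordElem_cons, S.Δ_gen_mul, pder_gen_mul, map_add S.Δ, S.Δ_gen_mul, ← ih,
        apply_ite S.Δ, coprod_twist]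
      generalize S.Δ (wordElem θ w) = z
      induction z using TensorProduct.induction_on with
      | zero => simp
      | add x y hx hy =>
        split_ifs at * <;>
        · simp only [map_add, map_zero] at *
          linear_combination (norm := module) hx + hy
      | tmul c d =>
        split_ifs with h
        · subst h
          simp [pder_gen_mul, TensorProduct.tmul_add, add_assoc]
        · simp [pder_gen_mul, h]
  simpa using congrArg (fun f => f v) this

lemma contr_evalW_coprod (S : BraidedStr θ q) (w : List (Fin θ)) (v : TV θ) :
    contr (evalW q w) (S.Δ v) = pders q w v := by
  induction w generalizing v with
  | nil => exact contr_counit_coprod S v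
  | cons a w ih =>
    have : contr (evalW q (a :: w)) = (contr (evalW q w)).comp
        (LinearMap.lTensor (TV θ) (pder q a)) := by
      apply word_ext₂
      intro u w
      simp [evalW_cons]
    rw [this, LinearMap.comp_apply, coprod_pder, ih]
    rfl

lemma mixedPair_eq_ker (I J : Submodule ℂ (TV θ)) :
    mixedPair I J = LinearMap.ker (TensorProduct.map I.mkQ J.mkQ) := by
  rw [TensorProduct.map_ker (f := I.subtype) (f' := J.subtype)]
  · apply le_antisymm
    · rw [mixedPair, Submodule.span_le]
      rintro _ (⟨a, b, ha, rfl⟩ | ⟨a, b, hb, rfl⟩)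
      · exact Submodule.mem_sup_right ⟨(⟨a, ha⟩ : I) ⊗ₜ b, by simp⟩
      · exact Submodule.mem_sup_left ⟨a ⊗ₜ (⟨b, hb⟩ : J), by simp⟩
    · refine sup_le ?_ ?_
      · rintro _ ⟨z, rfl⟩
        induction z using TensorProduct.induction_on with
        | zero => simp
        | add x y hx hy => rw [map_add]; exact Submodule.add_mem _ hx hy
        | tmul a b => exact Submodule.subset_span (Or.inr ⟨a, b, b.2, by simp⟩)
      · rintro _ ⟨z, rfl⟩
        induction z using TensorProduct.induction_on with
        | zero => simp
        | add x y hx hy => rw [map_add]; exact Submodule.add_mem _ hx hy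
        | tmul a b => exact Submodule.subset_span (Or.inl ⟨a, b, a.2, by simp⟩)
  · rw [LinearMap.exact_iff]; simp
  · exact I.mkQ_surjective
  · rw [LinearMap.exact_iff]; simp
  · exact J.mkQ_surjective

lemma contr_mem_of_mixedPair {I J : Submodule ℂ (TV θ)} {ψ : TV θ →ₗ[ℂ] ℂ}
    (hψ : ∀ x ∈ J, ψ x = 0) {z : TV θ ⊗[ℂ] TV θ} (hz : z ∈ mixedPair I J) :
    contr ψ z ∈ I := by
  suffices mixedPair I J ≤ I.comap (contr ψ) from this hz
  rw [mixedPair, Submodule.span_le]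
  rintro _ (⟨a, b, ha, rfl⟩ | ⟨a, b, hb, rfl⟩)
  · simpa using Submodule.smul_mem _ _ ha
  · simp [hψ b hb]

lemma mem_mixedSub_of_contr {ι : Type*} {J : Submodule ℂ (TV θ)} (ev : ι → TV θ →ₗ[ℂ] ℂ)
    (hJ : ∀ x, (∀ v, ev v x = 0) → x ∈ J) {z : TV θ ⊗[ℂ] TV θ}
    (hz : ∀ v, contr (ev v) z ∈ J) : z ∈ mixedSub J := by
  rw [mixedSub, mixedPair_eq_ker, LinearMap.mem_ker]
  classical
  let b := Module.Basis.ofVectorSpace ℂ (TV θ ⧸ J)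
  let e := TensorProduct.equivFinsuppOfBasisLeft (N := TV θ) b
  have hcomp : ∀ z : TV θ ⊗[ℂ] TV θ, TensorProduct.map J.mkQ J.mkQ z
      = LinearMap.lTensor _ J.mkQ (LinearMap.rTensor _ J.mkQ z) := by
    intro z
    rw [← LinearMap.comp_apply, LinearMap.lTensor_comp_rTensor]
  rw [hcomp]
  set y := LinearMap.rTensor (TV θ) J.mkQ z with hy
  have hcoef : ∀ v l, ev v (e y l) = 0 := by
    intro v l
    have h1 : ∀ z : TV θ ⊗[ℂ] TV θ, ev v (e (LinearMap.rTensor (TV θ) J.mkQ z) l)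
        = b.repr (J.mkQ (contr (ev v) z)) l := by
      intro z
      induction z using TensorProduct.induction_on with
      | zero => simp
      | add x y hx hy => simp only [map_add, Finsupp.add_apply, hx, hy]
      | tmul c d =>
        simp only [e, LinearMap.rTensor_tmul, TensorProduct.equivFinsuppOfBasisLeft_apply_tmul_apply,
          map_smul, contr_tmul, Finsupp.smul_apply, smul_eq_mul]
        ring
    rw [hy, h1, (Submodule.Quotient.mk_eq_zero J).2 (hz v) |> fun h => (by simpa using h :
      J.mkQ (contr (ev v) z) = 0)]
    simp
  have h2 : y = e.symm (e y) := by simp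
  rw [h2, TensorProduct.equivFinsuppOfBasisLeft_symm_apply, Finsupp.sum, map_sum]
  refine Finset.sum_eq_zero fun l _ => ?_
  have : J.mkQ (e y l) = 0 := by
    simpa using hJ _ fun v => hcoef v l
  rw [LinearMap.lTensor_tmul, this, TensorProduct.tmul_zero]

lemma rad_isPreNichols (S : BraidedStr θ q) : IsPreNicholsIdeal S (rad q) where
  mul_left := rad_mul_left
  mul_right := rad_mul_right
  homog_ge2 := rad_homog_ge2
  coideal x hx := by
    apply mem_mixedSub_of_contr (evalW q) (fun x hx => mem_rad.2 hx)
    intro w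
    rw [contr_evalW_coprod]
    induction w generalizing x with
    | nil => exact hx
    | cons a w ih => exact ih _ (pder_mem_rad hx a)

lemma evalW_preNichols {S : BraidedStr θ q} {I : Submodule ℂ (TV θ)}
    (hI : IsPreNicholsIdeal S I) {x : TV θ} (hx : x ∈ I) {w : List (Fin θ)} (hw : w.length < 2) :
    evalW q w x = 0 := by
  rw [hI.homog_ge2] at hx
  suffices Submodule.span ℂ {x | x ∈ I ∧ ∃ n, 2 ≤ n ∧ x ∈ homogTot θ n}
    ≤ LinearMap.ker (evalW q w) from this hx
  rw [Submodule.span_le]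
  rintro x ⟨_, n, hn, hx⟩
  exact evalW_homogTot w (by omega) hx

lemma pder_mem_preNichols {S : BraidedStr θ q} {I : Submodule ℂ (TV θ)}
    (hI : IsPreNicholsIdeal S I) {x : TV θ} (hx : x ∈ I) (a : Fin θ) : pder q a x ∈ I := by
  have := contr_evalW_coprod S [a] x
  rw [show pder q a x = pders q [a] x from rfl, ← this]
  exact contr_mem_of_mixedPair (fun y hy => evalW_preNichols hI hy (by simp)) (hI.coideal x hx)

lemma preNichols_le_rad {S : BraidedStr θ q} {I : Submodule ℂ (TV θ)}
    (hI : IsPreNicholsIdeal S I) : I ≤ rad q :=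
  le_rad (fun _ hx => evalW_preNichols hI hx (w := []) (by simp))
    fun a _ hx => pder_mem_preNichols hI hx a

lemma Jq_eq_rad (S : BraidedStr θ q) : Jq S = rad q :=
  le_antisymm (sSup_le fun _ hI => preNichols_le_rad hI) (le_sSup (rad_isPreNichols S))

lemma projTot_mem_preNichols {S : BraidedStr θ q} {I : Submodule ℂ (TV θ)}
    (hI : IsPreNicholsIdeal S I) {x : TV θ} (hx : x ∈ I) (n : ℕ) : projTot θ n x ∈ I := by
  rw [hI.homog_ge2] at hx
  suffices Submodule.span ℂ {x | x ∈ I ∧ ∃ n, 2 ≤ n ∧ x ∈ homogTot θ n}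
    ≤ I.comap (projTot θ n) from this hx
  rw [Submodule.span_le]
  rintro x ⟨hx, m, hm, hxm⟩
  simp only [Submodule.comap_coe, Set.mem_preimage, projTot_of_homogTot hxm]
  split_ifs
  · exact hx
  · exact Submodule.zero_mem _

lemma finGK_of_finiteDimensional {I : Submodule ℂ (TV θ)}
    (h : FiniteDimensional ℂ (TV θ ⧸ I)) : FinGK I :=
  ⟨Module.finrank ℂ (TV θ ⧸ I), 0, fun n => by simpa using Submodule.finrank_le _⟩

/-! ### Comparing the growth of quotients -/

lemma finite_homogTot (θ n : ℕ) : FiniteDimensional ℂ (homogTot θ n) := by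
  apply FiniteDimensional.span_of_finite
  have : {x : TV θ | ∃ w : List (Fin θ), w.length = n ∧ x = wordElem θ w}
      = wordElem θ '' {w | w.length = n} := by
    ext x; simp [eq_comm]
  rw [this]
  exact (List.finite_length_eq (Fin θ) n).image _

lemma finite_Wfil (θ n : ℕ) : FiniteDimensional ℂ (Wfil θ n) := by
  apply FiniteDimensional.span_of_finite
  have : {x : TV θ | ∃ w : List (Fin θ), w.length ≤ n ∧ x = wordElem θ w}
      = wordElem θ '' {w | w.length ≤ n} := by
    ext x; simp [eq_comm]
  rw [this]
  exact (List.finite_length_le (Fin θ) n).image _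

lemma word_mem_Wfil {n : ℕ} {w : List (Fin θ)} (h : w.length ≤ n) : wordElem θ w ∈ Wfil θ n :=
  Submodule.subset_span ⟨w, h, rfl⟩

lemma Wfil_mono {m n : ℕ} (h : m ≤ n) : Wfil θ m ≤ Wfil θ n :=
  Submodule.span_mono fun _ ⟨w, hw, hx⟩ => ⟨w, hw.trans h, hx⟩

lemma homogTot_le_Wfil (n : ℕ) : homogTot θ n ≤ Wfil θ n :=
  Submodule.span_mono fun _ ⟨w, hw, hx⟩ => ⟨w, hw.le, hx⟩

lemma Wfil_mul {m n : ℕ} {x y : TV θ} (hx : x ∈ Wfil θ m) (hy : y ∈ Wfil θ n) :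
    x * y ∈ Wfil θ (m + n) := by
  have : Wfil θ m * Wfil θ n ≤ Wfil θ (m + n) := by
    rw [Wfil, Wfil, Submodule.span_mul_span, Submodule.span_le]
    rintro _ ⟨_, ⟨v, hv, rfl⟩, _, ⟨w, hw, rfl⟩, rfl⟩
    exact Submodule.subset_span ⟨v ++ w, by simp; omega, by simp [wordElem_append]⟩
  exact this (Submodule.mul_mem_mul hx hy)

lemma finrank_map_le_of_ker {K V W₁ W₂ : Type*} [Field K] [AddCommGroup V] [Module K V]
    [AddCommGroup W₁] [Module K W₁] [AddCommGroup W₂] [Module K W₂]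
    (p : Submodule K V) [FiniteDimensional K p] (f : V →ₗ[K] W₁) (g : V →ₗ[K] W₂)
    (h : ∀ x ∈ p, g x = 0 → f x = 0) :
    Module.finrank K (p.map f) ≤ Module.finrank K (p.map g) := by
  have hf := LinearMap.finrank_range_add_finrank_ker (f.domRestrict p)
  have hg := LinearMap.finrank_range_add_finrank_ker (g.domRestrict p)
  rw [LinearMap.range_domRestrict] at hf hg
  have hk : LinearMap.ker (g.domRestrict p) ≤ LinearMap.ker (f.domRestrict p) := by
    intro x hx
    exact h x x.2 hx
  have := Submodule.finrank_mono hk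
  omega

lemma evalW_Wlt {m n : ℕ} {q' : Fin m → Fin m → ℂˣ} {w : List (Fin m)} {g : TV m}
    (hw : w.length = n)
    (hg : g ∈ Submodule.span ℂ {x | ∃ v : List (Fin m), v.length + 1 ≤ n ∧ x = wordElem m v}) :
    evalW q' w g = 0 := by
  suffices Submodule.span ℂ {x | ∃ v : List (Fin m), v.length + 1 ≤ n ∧ x = wordElem m v}
    ≤ LinearMap.ker (evalW q' w) from this hg
  rw [Submodule.span_le]
  rintro _ ⟨v, hv, rfl⟩
  exact evalW_homogTot w (by omega) (word_mem_homogTot v)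

lemma pder_mem_Wfil {m n : ℕ} {q' : Fin m → Fin m → ℂˣ} (a : Fin m) {f : TV m}
    (hf : f ∈ Wfil m (n + 1)) : pder q' a f ∈ Wfil m n := by
  suffices Wfil m (n + 1) ≤ (Wfil m n).comap (pder q' a) from this hf
  rw [Wfil, Submodule.span_le]
  rintro _ ⟨w, hw, rfl⟩
  cases w with
  | nil => simp
  | cons l w =>
    have hw' : w.length ≤ n := by simpa using hw
    exact Wfil_mono hw' (homogTot_le_Wfil _ (pder_word_mem a l w))

/-- Operators `E_a` on `T(V)` preserving `I` and acting on words in the elements `y_b` as the skew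
derivations of a braiding matrix `q'`, up to shorter words. -/
structure SkewAction {m : ℕ} (I : Submodule ℂ (TV θ)) (y : Fin m → TV θ)
    (q' : Fin m → Fin m → ℂˣ) (E : Fin m → TV θ →ₗ[ℂ] TV θ) : Prop where
  one_notMem : (1 : TV θ) ∉ I
  map_mem : ∀ a, ∀ x ∈ I, E a x ∈ I
  action : ∀ a w, E a (FreeAlgebra.lift ℂ y (wordElem m w))
      - FreeAlgebra.lift ℂ y (pder q' a (wordElem m w))
    ∈ I ⊔ (Submodule.span ℂ {x | ∃ v : List (Fin m), v.length + 2 ≤ w.length ∧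
        x = wordElem m v}).map (FreeAlgebra.lift ℂ y).toLinearMap

lemma SkewAction.evalW_eq_zero {m : ℕ} {I : Submodule ℂ (TV θ)} {y : Fin m → TV θ}
    {q' : Fin m → Fin m → ℂˣ} {E : Fin m → TV θ →ₗ[ℂ] TV θ} (h : SkewAction I y q' E)
    (n : ℕ) (f : TV m) (hf : f ∈ Wfil m n) (hfI : FreeAlgebra.lift ℂ y f ∈ I)
    (w : List (Fin m)) (hw : w.length = n) : evalW q' w f = 0 := by
  induction n generalizing f w with
  | zero =>
    obtain rfl := List.length_eq_zero_iff.1 hw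
    rw [evalW_nil]
    have hf0 : f ∈ homogTot m 0 := by simpa [Wfil, homogTot] using hf
    rw [eq_counit_of_homogTot hf0, map_smul, map_one] at hfI
    by_contra hne
    exact h.one_notMem ((Submodule.smul_mem_iff _ hne).1 hfI)
  | succ n ih =>
    cases w with
    | nil => simp at hw
    | cons a w =>
      set L := (Submodule.span ℂ {x | ∃ v : List (Fin m), v.length + 1 ≤ n ∧ x = wordElem m v})
        with hL
      have key : E a (FreeAlgebra.lift ℂ y f) - FreeAlgebra.lift ℂ y (pder q' a f)
          ∈ I ⊔ L.map (FreeAlgebra.lift ℂ y).toLinearMap := by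
        suffices Wfil m (n + 1) ≤ (I ⊔ L.map (FreeAlgebra.lift ℂ y).toLinearMap).comap
            ((E a).comp (FreeAlgebra.lift ℂ y).toLinearMap
              - (FreeAlgebra.lift ℂ y).toLinearMap.comp (pder q' a)) from this hf
        rw [Wfil, Submodule.span_le]
        rintro _ ⟨v, hv, rfl⟩
        refine (sup_le_sup_left (Submodule.map_mono (Submodule.span_mono ?_)) I) (h.action a v)
        rintro x ⟨u, hu, rfl⟩
        exact ⟨u, by omega, rfl⟩
      obtain ⟨z, hz, _, ⟨g, hg, rfl⟩, hzg⟩ := Submodule.mem_sup.1 key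
      have hmem : FreeAlgebra.lift ℂ y (pder q' a f + g) ∈ I := by
        have : FreeAlgebra.lift ℂ y (pder q' a f + g) = E a (FreeAlgebra.lift ℂ y f) - z := by
          rw [map_add]
          simp only [AlgHom.toLinearMap_apply] at hzg
          linear_combination (norm := module) hzg
        rw [this]
        exact Submodule.sub_mem _ (h.map_mem a _ hfI) hz
      have hLW : L ≤ Wfil m n := Submodule.span_mono (by
        rintro x ⟨v, hv, rfl⟩
        exact ⟨v, by omega, rfl⟩)
      have hgW : g ∈ Wfil m n := hLW hg
      have hw' : w.length = n := by simpa using hw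
      have := ih _ (Submodule.add_mem _ (pder_mem_Wfil a hf) hgW) hmem w hw'
      rw [map_add, evalW_Wlt hw' hg, add_zero] at this
      exact this

lemma lift_word_mem_Wfil {m D : ℕ} {y : Fin m → TV θ} (hD : ∀ a, y a ∈ Wfil θ D)
    (w : List (Fin m)) : FreeAlgebra.lift ℂ y (wordElem m w) ∈ Wfil θ (D * w.length) := by
  induction w with
  | nil => simpa using word_mem_Wfil (θ := θ) (w := []) (n := 0) le_rfl
  | cons a w ih =>
    rw [wordElem_cons, map_mul, show FreeAlgebra.lift ℂ y (gen m a) = y a by simp [gen]]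
    have := Wfil_mul (hD a) ih
    rwa [List.length_cons, Nat.mul_succ, add_comm]

theorem SkewAction.finGK {m : ℕ} {I : Submodule ℂ (TV θ)} {y : Fin m → TV θ}
    {q' : Fin m → Fin m → ℂˣ} {E : Fin m → TV θ →ₗ[ℂ] TV θ} (h : SkewAction I y q' E)
    (hGK : FinGK I) : FinGK (rad q') := by
  obtain ⟨C, d, hC⟩ := hGK
  obtain ⟨D, hD⟩ : ∃ D, ∀ a, y a ∈ Wfil θ D := by
    have : ∀ x : TV θ, ∃ D, x ∈ Wfil θ D := by
      intro x
      obtain ⟨N, hN⟩ := eq_sum_projTot x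
      refine ⟨N, ?_⟩
      rw [hN N le_rfl]
      exact Submodule.sum_mem _ fun n hn =>
        Wfil_mono (Finset.mem_range.1 hn).le (homogTot_le_Wfil n (projTot_mem n x))
    choose D hD using fun a => this (y a)
    exact ⟨∑ a, D a, fun a => Wfil_mono
      (Finset.single_le_sum (fun _ _ => Nat.zero_le _) (Finset.mem_univ a)) (hD a)⟩
  have hk : ∀ k, Module.finrank ℂ ((homogTot m k).map (rad q').mkQ) ≤ C * (D * k + 1) ^ d := by
    intro k
    have := finite_homogTot m k
    refine le_trans (finrank_map_le_of_ker (homogTot m k) (rad q').mkQ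
      (I.mkQ.comp (FreeAlgebra.lift ℂ y).toLinearMap) ?_) (le_trans ?_ (hC (D * k)))
    · intro f hf hfI
      have hfI' : FreeAlgebra.lift ℂ y f ∈ I := by simpa using hfI
      simp only [Submodule.mkQ_apply, Submodule.Quotient.mk_eq_zero, mem_rad]
      intro w
      by_cases hw : w.length = k
      · exact h.evalW_eq_zero k f (homogTot_le_Wfil k hf) hfI' w hw
      · exact evalW_homogTot w hw hf
    · rw [Submodule.map_comp]
      have := finite_Wfil θ (D * k)
      apply Submodule.finrank_mono
      apply Submodule.map_mono
      rw [homogTot, Submodule.map_span_le]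
      rintro _ ⟨w, rfl, rfl⟩
      exact lift_word_mem_Wfil hD w
  refine ⟨C * (D + 1) ^ d, d + 1, fun n => ?_⟩
  have hn : Module.finrank ℂ ((Wfil m n).map (rad q').mkQ)
      ≤ ∑ k ∈ Finset.range (n + 1), C * (D * k + 1) ^ d := by
    induction n with
    | zero =>
      have : Wfil m 0 = homogTot m 0 := by simp [Wfil, homogTot]
      rw [this]
      simpa using hk 0
    | succ n ih =>
      have hle : Wfil m (n + 1) ≤ Wfil m n ⊔ homogTot m (n + 1) := by
        rw [Wfil, Submodule.span_le]
        rintro _ ⟨w, hw, rfl⟩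
        rcases Nat.lt_or_ge n w.length with h1 | h1
        · exact Submodule.mem_sup_right ((by omega : w.length = n + 1) ▸ word_mem_homogTot w)
        · exact Submodule.mem_sup_left (word_mem_Wfil h1)
      have := finite_Wfil m n
      have := finite_homogTot m (n + 1)
      rw [Finset.sum_range_succ]
      refine le_trans (Submodule.finrank_mono (Submodule.map_mono hle)) ?_
      rw [Submodule.map_sup]
      exact le_trans (Submodule.finrank_add_le_finrank_add_finrank _ _) (add_le_add ih (hk _))
  refine hn.trans (le_trans (Finset.sum_le_card_nsmul _ _ (C * ((D + 1) * (n + 1)) ^ d) ?_) ?_)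
  · intro k hk
    have hk' : k ≤ n := by simpa [Nat.lt_succ_iff] using hk
    gcongr
    nlinarith
  · simp only [Finset.card_range, smul_eq_mul, mul_pow, pow_succ]
    exact le_of_eq (by ring)

theorem SkewAction.finiteRootSystem {m : ℕ} {I : Submodule ℂ (TV θ)} {y : Fin m → TV θ}
    {q' : Fin m → Fin m → ℂˣ} {E : Fin m → TV θ →ₗ[ℂ] TV θ} (h : SkewAction I y q' E)
    (hGK : FinGK I) (hAAH : AAH) : FiniteRootSystem q' :=
  hAAH m q' (braidedStr q') (by rw [Jq_eq_rad]; exact h.finGK hGK)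

/-! ### Primitive elements of a pre-Nichols algebra -/

/-- The span of the multihomogeneous elements of `I`. -/
def hpart (I : Submodule ℂ (TV θ)) : Submodule ℂ (TV θ) :=
  Submodule.span ℂ {x | x ∈ I ∧ ∃ d, x ∈ homogD θ d}

lemma hpart_le (I : Submodule ℂ (TV θ)) : hpart I ≤ I :=
  Submodule.span_le.2 fun _ hx => hx.1

lemma mem_hpart {I : Submodule ℂ (TV θ)} {x : TV θ} {d : Fin θ → ℕ} (hx : x ∈ I)
    (hd : x ∈ homogD θ d) : x ∈ hpart I :=
  Submodule.subset_span ⟨hx, d, hd⟩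

lemma mem_of_forall_word {M : Type*} [AddCommGroup M] [Module ℂ M] (f : TV θ →ₗ[ℂ] M)
    {P : Submodule ℂ M} (h : ∀ w, f (wordElem θ w) ∈ P) (a : TV θ) : f a ∈ P := by
  have : (⊤ : Submodule ℂ (TV θ)) ≤ P.comap f := by
    rw [← span_words, Submodule.span_le]
    rintro _ ⟨w, rfl⟩
    exact h w
  exact this (Submodule.mem_top (x := a))

lemma hpart_mul_left {S : BraidedStr θ q} {I : Submodule ℂ (TV θ)} (hI : IsPreNicholsIdeal S I)
    (a : TV θ) {x : TV θ} (hx : x ∈ hpart I) : a * x ∈ hpart I := by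
  refine mem_of_forall_word (LinearMap.mulRight ℂ x) (fun w => ?_) a
  suffices hpart I ≤ (hpart I).comap (LinearMap.mulLeft ℂ (wordElem θ w)) from this hx
  rw [hpart, Submodule.span_le]
  rintro x ⟨hx, d, hd⟩
  exact mem_hpart (hI.mul_left _ _ hx) (mul_mem_homogD (word_mem_homogD w) hd)

lemma hpart_mul_right {S : BraidedStr θ q} {I : Submodule ℂ (TV θ)} (hI : IsPreNicholsIdeal S I)
    (a : TV θ) {x : TV θ} (hx : x ∈ hpart I) : x * a ∈ hpart I := by
  refine mem_of_forall_word (LinearMap.mulLeft ℂ x) (fun w => ?_) a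
  suffices hpart I ≤ (hpart I).comap (LinearMap.mulRight ℂ (wordElem θ w)) from this hx
  rw [hpart, Submodule.span_le]
  rintro x ⟨hx, d, hd⟩
  exact mem_hpart (hI.mul_right _ _ hx) (mul_mem_homogD hd (word_mem_homogD w))

lemma hpart_twist {I : Submodule ℂ (TV θ)} (β : Fin θ → ℕ) {x : TV θ} (hx : x ∈ hpart I) :
    twist q β x ∈ hpart I := by
  suffices hpart I ≤ (hpart I).comap (twist q β).toLinearMap from this hx
  rw [hpart, Submodule.span_le]
  rintro x ⟨hx, d, hd⟩
  change twist q β x ∈ hpart I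
  rw [twist_homogD hd]
  exact Submodule.smul_mem _ _ (mem_hpart hx hd)

lemma tmul_mem_mixedSub_left {J : Submodule ℂ (TV θ)} {a : TV θ} (ha : a ∈ J) (b : TV θ) :
    a ⊗ₜ[ℂ] b ∈ mixedSub J :=
  Submodule.subset_span (Or.inl ⟨a, b, ha, rfl⟩)

lemma tmul_mem_mixedSub_right {J : Submodule ℂ (TV θ)} {b : TV θ} (hb : b ∈ J) (a : TV θ) :
    a ⊗ₜ[ℂ] b ∈ mixedSub J :=
  Submodule.subset_span (Or.inr ⟨a, b, hb, rfl⟩)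

lemma mulB_mem_mixedSub_left {S : BraidedStr θ q} {I : Submodule ℂ (TV θ)}
    (hI : IsPreNicholsIdeal S I) {z : TV θ ⊗[ℂ] TV θ} (hz : z ∈ mixedSub (hpart I))
    (w : TV θ ⊗[ℂ] TV θ) : S.mulB z w ∈ mixedSub (hpart I) := by
  induction w using TensorProduct.induction_on with
  | zero => simp
  | add w₁ w₂ h₁ h₂ => rw [map_add]; exact Submodule.add_mem _ h₁ h₂
  | tmul c d =>
    suffices mixedSub (hpart I) ≤ (mixedSub (hpart I)).comap (S.mulB.flip (c ⊗ₜ d)) from this hz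
    rw [mixedSub, mixedPair, Submodule.span_le]
    rintro _ (⟨a, b, ha, rfl⟩ | ⟨a, b, hb, rfl⟩)
    · refine mem_of_forall_word (P := mixedSub (hpart I))
        ((S.mulB.flip (c ⊗ₜ d)).comp (TensorProduct.mk ℂ _ _ a)) (fun v => ?_) b
      change S.mulB (a ⊗ₜ wordElem θ v) (c ⊗ₜ d) ∈ _
      rw [S.mulB_twist (word_mem_homogD v)]
      exact tmul_mem_mixedSub_left (hpart_mul_right hI _ ha) _
    · suffices hpart I ≤ (mixedSub (hpart I)).comap
          ((S.mulB.flip (c ⊗ₜ d)).comp (TensorProduct.mk ℂ _ _ a)) from this hb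
      rw [hpart, Submodule.span_le]
      rintro b ⟨hb, β, hβ⟩
      change S.mulB (a ⊗ₜ b) (c ⊗ₜ d) ∈ mixedSub (hpart I)
      rw [S.mulB_twist hβ]
      exact tmul_mem_mixedSub_right (hpart_mul_right hI _ (mem_hpart hb hβ)) _

lemma mulB_mem_mixedSub_right {S : BraidedStr θ q} {I : Submodule ℂ (TV θ)}
    (hI : IsPreNicholsIdeal S I) (z : TV θ ⊗[ℂ] TV θ) {w : TV θ ⊗[ℂ] TV θ}
    (hw : w ∈ mixedSub (hpart I)) : S.mulB z w ∈ mixedSub (hpart I) := by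
  induction z using TensorProduct.induction_on with
  | zero => simp
  | add z₁ z₂ h₁ h₂ => rw [map_add, LinearMap.add_apply]; exact Submodule.add_mem _ h₁ h₂
  | tmul a b =>
    refine mem_of_forall_word ((S.mulB.flip w).comp (TensorProduct.mk ℂ _ _ a)) (fun v => ?_) b
    change S.mulB (a ⊗ₜ wordElem θ v) w ∈ _
    suffices mixedSub (hpart I) ≤ (mixedSub (hpart I)).comap (S.mulB (a ⊗ₜ wordElem θ v))
      from this hw
    rw [mixedSub, mixedPair, Submodule.span_le]
    rintro _ (⟨c, d, hc, rfl⟩ | ⟨c, d, hd, rfl⟩)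
    · change S.mulB _ _ ∈ mixedSub (hpart I)
      rw [S.mulB_twist (word_mem_homogD v)]
      exact tmul_mem_mixedSub_left (hpart_mul_left hI _ (hpart_twist _ hc)) _
    · change S.mulB _ _ ∈ mixedSub (hpart I)
      rw [S.mulB_twist (word_mem_homogD v)]
      exact tmul_mem_mixedSub_right (hpart_mul_left hI _ hd) _

lemma mulB_primitive (S : BraidedStr θ q) {d : Fin θ → ℕ} {y : TV θ} (hy : y ∈ homogD θ d)
    (z : TV θ ⊗[ℂ] TV θ) :
    S.mulB (y ⊗ₜ 1 + 1 ⊗ₜ y) z = TensorProduct.map (LinearMap.mulLeft ℂ y) LinearMap.id z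
      + TensorProduct.map (twist q d).toLinearMap (LinearMap.mulLeft ℂ y) z := by
  induction z using TensorProduct.induction_on with
  | zero => simp
  | add z₁ z₂ h₁ h₂ => simp only [map_add] at *; rw [h₁, h₂]; abel
  | tmul a b => simp [S.mulB_one_right, S.mulB_twist hy]

lemma coprod_word_mem {m : ℕ} {q' : Fin m → Fin m → ℂˣ} (S : BraidedStr m q')
    (w : List (Fin m)) : S.Δ (wordElem m w) ∈ Submodule.span ℂ {z | ∃ u v : List (Fin m),
      u.length + v.length = w.length ∧ z = wordElem m u ⊗ₜ[ℂ] wordElem m v} := by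
  induction w with
  | nil =>
    rw [wordElem_nil, S.Δ_one]
    exact Submodule.subset_span ⟨[], [], rfl, by simp⟩
  | cons a w ih =>
    rw [wordElem_cons, S.Δ_gen_mul, ← LinearMap.add_apply]
    refine (Submodule.map_span_le _ _ _).2 ?_ (Submodule.mem_map_of_mem ih)
    rintro _ ⟨u, v, huv, rfl⟩
    refine Submodule.add_mem _ ?_ ?_
    · refine Submodule.subset_span ⟨a :: u, v, by simp; omega, by simp [wordElem_cons]⟩
    · simp only [TensorProduct.map_tmul, AlgHom.toLinearMap_apply, twist_word,
        LinearMap.mulLeft_apply, ← TensorProduct.smul_tmul']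
      exact Submodule.smul_mem _ _
        (Submodule.subset_span ⟨u, a :: v, by simp; omega, by simp [wordElem_cons]⟩)

lemma contr_coprod_word_mem {m : ℕ} {q' : Fin m → Fin m → ℂˣ} (S : BraidedStr m q')
    {ψ : TV m →ₗ[ℂ] ℂ} (h1 : ψ 1 = 0) (hg : ∀ a, ψ (gen m a) = 0) (w : List (Fin m)) :
    contr ψ (S.Δ (wordElem m w)) ∈ Submodule.span ℂ {x | ∃ v : List (Fin m),
      v.length + 2 ≤ w.length ∧ x = wordElem m v} := by
  refine (Submodule.map_span_le _ _ _).2 ?_ (Submodule.mem_map_of_mem (coprod_word_mem S w))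
  rintro _ ⟨u, v, huv, rfl⟩
  rw [contr_tmul]
  match v with
  | [] => simp [wordElem_nil, h1]
  | [a] => simp [wordElem_singleton, hg]
  | a :: b :: v =>
    exact Submodule.smul_mem _ _ (Submodule.subset_span ⟨u, by simp at huv; omega, rfl⟩)

/-- `y` is primitive modulo the multihomogeneous part of `I`. -/
def PrimMod (S : BraidedStr θ q) (I : Submodule ℂ (TV θ)) (y : TV θ) : Prop :=
  S.Δ y - (y ⊗ₜ 1 + 1 ⊗ₜ y) ∈ mixedSub (hpart I)

/-- The form `q(·,·)` with values in the units. -/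
def qfu (q : Fin θ → Fin θ → ℂˣ) (a b : Fin θ → ℕ) : ℂˣ := Units.mk0 (qf q a b) (qf_ne_zero a b)

@[simp] lemma coe_qfu (a b : Fin θ → ℕ) : (qfu q a b : ℂ) = qf q a b := rfl

section
variable {m : ℕ} {S : BraidedStr θ q} {I : Submodule ℂ (TV θ)} {y : Fin m → TV θ}
  {d : Fin m → Fin θ → ℕ}

lemma lift_gen (a : Fin m) : FreeAlgebra.lift ℂ y (gen m a) = y a := by simp [gen]

lemma lift_twist (hy : ∀ b, y b ∈ homogD θ (d b)) (a : Fin m) (f : TV m) :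
    FreeAlgebra.lift ℂ y (twist (fun a b => qfu q (d a) (d b)) (δ m a) f)
      = twist q (d a) (FreeAlgebra.lift ℂ y f) := by
  have : (FreeAlgebra.lift ℂ y).comp (twist (fun a b => qfu q (d a) (d b)) (δ m a))
      = (twist q (d a)).comp (FreeAlgebra.lift ℂ y) := by
    apply FreeAlgebra.hom_ext
    ext b
    change FreeAlgebra.lift ℂ y (twist (fun a b => qfu q (d a) (d b)) (δ m a) (gen m b))
      = twist q (d a) (FreeAlgebra.lift ℂ y (gen m b))
    rw [twist_gen, map_smul, lift_gen, twist_homogD (hy b), qf_delta, coe_qfu]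
  exact DFunLike.congr_fun this f

lemma coprod_lift (hI : IsPreNicholsIdeal S I) (hy : ∀ b, y b ∈ homogD θ (d b))
    (hp : ∀ b, PrimMod S I (y b)) (S' : BraidedStr m (fun a b => qfu q (d a) (d b)))
    (w : List (Fin m)) :
    S.Δ (FreeAlgebra.lift ℂ y (wordElem m w))
      - TensorProduct.map (FreeAlgebra.lift ℂ y).toLinearMap (FreeAlgebra.lift ℂ y).toLinearMap
        (S'.Δ (wordElem m w)) ∈ mixedSub (hpart I) := by
  induction w with
  | nil => simp [S.Δ_one, S'.Δ_one]
  | cons b w ih =>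
    set φ := FreeAlgebra.lift ℂ y
    rw [wordElem_cons, map_mul, lift_gen, S.Δ_mul, S'.Δ_gen_mul]
    set z := S'.Δ (wordElem m w)
    have : TensorProduct.map φ.toLinearMap φ.toLinearMap
        (TensorProduct.map (LinearMap.mulLeft ℂ (gen m b)) LinearMap.id z
          + TensorProduct.map (twist (fun a b => qfu q (d a) (d b)) (δ m b)).toLinearMap
            (LinearMap.mulLeft ℂ (gen m b)) z)
        = S.mulB (y b ⊗ₜ 1 + 1 ⊗ₜ y b) (TensorProduct.map φ.toLinearMap φ.toLinearMap z) := by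
      rw [mulB_primitive S (hy b)]
      generalize z = z'
      induction z' using TensorProduct.induction_on with
      | zero => simp
      | add z₁ z₂ h₁ h₂ => simp only [map_add] at *; linear_combination (norm := module) h₁ + h₂
      | tmul u v => simp [φ, lift_gen, lift_twist hy]
    rw [this]
    have key := Submodule.add_mem _ (mulB_mem_mixedSub_left hI (hp b) (S.Δ (φ (wordElem m w))))
      (mulB_mem_mixedSub_right hI (y b ⊗ₜ 1 + 1 ⊗ₜ y b) ih)
    convert key using 1
    rw [map_sub, map_sub, LinearMap.sub_apply]
    abel

theorem skewAction_of_primitive (hI : IsPreNicholsIdeal S I) (hy : ∀ b, y b ∈ homogD θ (d b))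
    (hp : ∀ b, PrimMod S I (y b)) (ψ : Fin m → TV θ →ₗ[ℂ] ℂ) (hψI : ∀ a, ∀ x ∈ I, ψ a x = 0)
    (hψ1 : ∀ a, ψ a 1 = 0) (hψ : ∀ a b, ψ a (y b) = if a = b then 1 else 0) :
    SkewAction I y (fun a b => qfu q (d a) (d b)) (fun a => (contr (ψ a)).comp S.Δ) where
  one_notMem h := by simpa [evalW_nil] using evalW_preNichols hI h (w := []) (by simp)
  map_mem a x hx := contr_mem_of_mixedPair (hψI a) (hI.coideal x hx)
  action a w := by
    set q' : Fin m → Fin m → ℂˣ := fun a b => qfu q (d a) (d b)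
    set φ := FreeAlgebra.lift ℂ y
    let S' := braidedStr q'
    have h1 := contr_mem_of_mixedPair (fun x hx => hψI a x (hpart_le I hx))
      (coprod_lift hI hy hp S' w)
    have h2 : contr (ψ a) (TensorProduct.map φ.toLinearMap φ.toLinearMap (S'.Δ (wordElem m w)))
        = φ (contr ((ψ a).comp φ.toLinearMap) (S'.Δ (wordElem m w))) := by
      generalize S'.Δ (wordElem m w) = z
      induction z using TensorProduct.induction_on with
      | zero => simp
      | add z₁ z₂ h₁ h₂ => simp only [map_add] at *; rw [h₁, h₂]
      | tmul u v => simp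
    have h3 : pder q' a (wordElem m w) = contr (evalW q' [a]) (S'.Δ (wordElem m w)) :=
      (contr_evalW_coprod S' [a] _).symm
    have h4 := contr_coprod_word_mem S' (ψ := (ψ a).comp φ.toLinearMap - evalW q' [a])
      (by simp [hψ1, evalW_cons, pder_one])
      (by
        intro b
        rcases eq_or_ne a b with rfl | hab
        · simp [φ, lift_gen, hψ, evalW_cons, evalW_nil, pder_gen]
        · simp [φ, lift_gen, hψ, evalW_cons, evalW_nil, pder_gen, hab, Ne.symm hab]) w
    have h5 : ∀ z, contr ((ψ a).comp φ.toLinearMap - evalW q' [a]) z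
        = contr ((ψ a).comp φ.toLinearMap) z - contr (evalW q' [a]) z := by
      intro z
      induction z using TensorProduct.induction_on with
      | zero => simp
      | add z₁ z₂ h₁ h₂ => simp only [map_add] at *; rw [h₁, h₂]; abel
      | tmul u v => simp [sub_smul]
    refine Submodule.mem_sup.2 ⟨_, hpart_le I h1, _, ⟨_, h4, rfl⟩, ?_⟩
    rw [h5, ← h3]
    rw [map_sub (contr (ψ a)), h2]
    simp only [AlgHom.toLinearMap_apply, map_sub, LinearMap.comp_apply]
    abel

end

/-- The braiding matrix of rank two spanned by two degrees. -/
def pairMat (q : Fin θ → Fin θ → ℂˣ) (a b : Fin θ → ℕ) : Fin 2 → Fin 2 → ℂˣ :=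
  fun s t => qfu q (![a, b] s) (![a, b] t)

lemma gen_primMod (S : BraidedStr θ q) (I : Submodule ℂ (TV θ)) (l : Fin θ) :
    PrimMod S I (gen θ l) := by
  simp [PrimMod, S.Δ_gen]

/-- A primitive element of degree at least two which does not vanish in a pre-Nichols algebra of
finite GK dimension spans with each generator a braided vector space with finite root system. -/
theorem finiteRootSystem_pair {S : BraidedStr θ q} {I : Submodule ℂ (TV θ)}
    (hI : IsPreNicholsIdeal S I) (hGK : FinGK I) (hAAH : AAH) (l : Fin θ) {w : TV θ}
    {d : Fin θ → ℕ} (hw : w ∈ homogD θ d) (hd : 2 ≤ ∑ l, d l) (hp : PrimMod S I w)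
    (hwI : w ∉ I) : FiniteRootSystem (pairMat q (δ θ l) d) := by
  obtain ⟨f, hfw, hfI⟩ := Submodule.exists_le_ker_of_notMem hwI
  set N := ∑ l, d l with hN
  have hwN : w ∈ homogTot θ N := homogD_le_homogTot d hw
  have h0 : (1 : TV θ) ∈ homogTot θ 0 := by simpa using word_mem_homogTot (θ := θ) []
  have h1 := gen_mem_homogTot (θ := θ) l
  let ψ : Fin 2 → TV θ →ₗ[ℂ] ℂ := ![evalW q [l], (f w)⁻¹ • f.comp (projTot θ N)]
  have hy : ∀ b : Fin 2, ![gen θ l, w] b ∈ homogD θ (![δ θ l, d] b) := by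
    intro b; fin_cases b
    · exact gen_mem_homogD l
    · exact hw
  refine (skewAction_of_primitive hI hy ?_ ψ ?_ ?_ ?_).finiteRootSystem hGK hAAH
  · intro b; fin_cases b
    · exact gen_primMod S I l
    · exact hp
  · intro a x hx; fin_cases a
    · exact evalW_preNichols hI hx (by simp)
    · have : f (projTot θ N x) = 0 := hfI (projTot_mem_preNichols hI hx N)
      simp [ψ, this]
  · intro a; fin_cases a
    · simp [ψ, evalW_cons, pder_one]
    · have : projTot θ N 1 = 0 := by rw [projTot_of_homogTot h0, if_neg (by omega)]
      simp [ψ, this]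
  · intro a b; fin_cases a <;> fin_cases b
    · simp [ψ, evalW_cons, pder_gen, evalW_nil]
    · simpa [ψ] using evalW_homogTot (q := q) [l] (by simp; omega) hwN
    · have : projTot θ N (gen θ l) = 0 := by rw [projTot_of_homogTot h1, if_neg (by omega)]
      simp [ψ, this]
    · have : projTot θ N w = w := by rw [projTot_of_homogTot hwN, if_pos rfl]
      simp [ψ, this, hfw]

/-! ### Elements of the Nichols algebra killed by some skew derivations -/

@[simp] lemma pders_nil (x : TV θ) : pders q [] x = x := rfl

lemma pders_cons (a : Fin θ) (w : List (Fin θ)) (x : TV θ) :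
    pders q (a :: w) x = pders q w (pder q a x) := rfl

lemma twist_add (d e : Fin θ → ℕ) (x : TV θ) :
    twist q d (twist q e x) = twist q (d + e) x := by
  have : (twist q d).comp (twist q e) = twist q (d + e) := by
    apply FreeAlgebra.hom_ext
    ext l
    change twist q d (twist q e (gen θ l)) = twist q (d + e) (gen θ l)
    simp only [twist_gen, map_smul, qf_add_left, smul_smul]
    rw [mul_comm]
  exact DFunLike.congr_fun this x

lemma pders_mul_left {w : List (Fin θ)} {y : TV θ} (hy : ∀ l ∈ w, pder q l y = 0) (z : TV θ) :
    pders q w (y * z) = y * pders q w z := by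
  induction w generalizing z with
  | nil => rfl
  | cons a w ih =>
    rw [pders_cons, pder_mul, hy a (by simp), zero_mul, add_zero,
      ih (fun l hl => hy l (by simp [hl])), pders_cons]

lemma pders_mul_right {w : List (Fin θ)} {z : TV θ} (hz : ∀ l ∈ w, pder q l z = 0) (g : TV θ) :
    pders q w (g * z) = pders q w g * twist q (degW θ w) z := by
  induction w generalizing g z with
  | nil =>
    have : twist q 0 = AlgHom.id ℂ (TV θ) := by
      apply FreeAlgebra.hom_ext
      ext l
      simpa [gen] using twist_gen (q := q) 0 l
    simp [degW_nil, this]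
  | cons a w ih =>
    have hz' : ∀ l ∈ w, pder q l (twist q (δ θ a) z) = 0 := by
      intro l hl
      rw [pder_twist, hz l (by simp [hl]), map_zero, smul_zero]
    rw [pders_cons, pder_mul, hz a (by simp), mul_zero, zero_add, ih hz', pders_cons, degW_cons,
      twist_add, add_comm]

lemma one_notMem_rad : (1 : TV θ) ∉ rad q := fun h => by simpa using counit_rad h

section
variable {m : ℕ} {y : Fin m → TV θ} {d : Fin m → Fin θ → ℕ}

lemma pder_lift_eq_zero {l : Fin θ} (hl : ∀ b, pder q l (y b) = 0) (f : TV m) :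
    pder q l (FreeAlgebra.lift ℂ y f) = 0 := by
  have : (pder q l).comp (FreeAlgebra.lift ℂ y).toLinearMap = 0 := by
    apply word_ext
    intro w
    simp only [LinearMap.comp_apply, AlgHom.toLinearMap_apply, LinearMap.zero_apply]
    induction w with
    | nil => simp
    | cons b w ih => rw [wordElem_cons, map_mul, lift_gen, pder_mul, ih, hl]; simp
  exact DFunLike.congr_fun this f

theorem skewAction_of_dual (hy : ∀ b, y b ∈ homogD θ (d b)) (u : Fin m → Fin θ)
    (w : Fin m → List (Fin θ)) (hd : ∀ a, degW θ (u a :: w a) = d a)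
    (hw : ∀ a b, ∀ l ∈ w a, pder q l (y b) = 0) (c : Fin m → ℂ) (hc : ∀ a, c a ≠ 0)
    (hE : ∀ a b, pders q (u a :: w a) (y b) = if a = b then c a • (1 : TV θ) else 0) :
    SkewAction (rad q) y (fun a b => qfu q (d a) (d b))
      (fun a => (c a)⁻¹ • pders q (u a :: w a)) where
  one_notMem := one_notMem_rad
  map_mem a x hx := by
    refine Submodule.smul_mem _ _ ?_
    generalize u a :: w a = v
    induction v generalizing x with
    | nil => exact hx
    | cons l v ih => exact ih _ (pder_mem_rad hx l)
  action a v := by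
    suffices h : ∀ f, ((c a)⁻¹ • pders q (u a :: w a)) (FreeAlgebra.lift ℂ y f)
        = FreeAlgebra.lift ℂ y (pder (fun a b => qfu q (d a) (d b)) a f) by
      rw [h, sub_self]; exact Submodule.zero_mem _
    intro f
    suffices (((c a)⁻¹ • pders q (u a :: w a)).comp (FreeAlgebra.lift ℂ y).toLinearMap)
        = (FreeAlgebra.lift ℂ y).toLinearMap.comp (pder (fun a b => qfu q (d a) (d b)) a) from
      DFunLike.congr_fun this f
    apply word_ext
    intro v
    simp only [LinearMap.comp_apply, AlgHom.toLinearMap_apply, LinearMap.smul_apply]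
    induction v with
    | nil =>
      simp [pders_cons]
    | cons b v ih =>
      rw [wordElem_cons, map_mul, lift_gen, pder_gen_mul, map_add, map_mul (FreeAlgebra.lift ℂ y), lift_gen, ← ih,
        pders_cons, pder_mul, map_add, pders_mul_left (hw a b)]
      have hz : ∀ l ∈ w a, pder q l
          (twist q (δ θ (u a)) (FreeAlgebra.lift ℂ y (wordElem m v))) = 0 := by
        intro l hl
        rw [pder_twist, pder_lift_eq_zero (fun b => hw a b l hl), map_zero, smul_zero]
      rw [pders_mul_right hz, ← pders_cons (u a) (w a) (y b), ← pders_cons, hE, twist_add,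
        add_comm (degW θ (w a)), ← degW_cons, hd]
      rcases eq_or_ne a b with rfl | hab
      · simp [lift_twist hy, smul_smul, hc]
      · simp [hab, Ne.symm hab]

end

/-- Two elements of the Nichols algebra killed by suitable skew derivations span a braided vector
space with finite root system. -/
theorem finiteRootSystem_dual (hGK : FinGK (rad q)) (hAAH : AAH) {y₀ y₁ : TV θ}
    {d₀ d₁ : Fin θ → ℕ} (h₀ : y₀ ∈ homogD θ d₀) (h₁ : y₁ ∈ homogD θ d₁) (u₀ u₁ : Fin θ)
    (w₀ w₁ : List (Fin θ)) (hd₀ : degW θ (u₀ :: w₀) = d₀) (hd₁ : degW θ (u₁ :: w₁) = d₁)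
    (hw : ∀ l, l ∈ w₀ ∨ l ∈ w₁ → pder q l y₀ = 0 ∧ pder q l y₁ = 0) {c₀ c₁ : ℂ} (hc₀ : c₀ ≠ 0)
    (hc₁ : c₁ ≠ 0) (h₀₀ : pders q (u₀ :: w₀) y₀ = c₀ • 1) (h₀₁ : pders q (u₀ :: w₀) y₁ = 0)
    (h₁₀ : pders q (u₁ :: w₁) y₀ = 0) (h₁₁ : pders q (u₁ :: w₁) y₁ = c₁ • 1) :
    FiniteRootSystem (pairMat q d₀ d₁) := by
  refine (skewAction_of_dual (y := ![y₀, y₁]) (d := ![d₀, d₁]) ?_ ![u₀, u₁] ![w₀, w₁] ?_ ?_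
    ![c₀, c₁] ?_ ?_).finiteRootSystem hGK hAAH
  · intro b; fin_cases b
    · exact h₀
    · exact h₁
  · intro b; fin_cases b
    · exact hd₀
    · exact hd₁
  · intro a b l hl; fin_cases a <;> fin_cases b
    · exact (hw l (Or.inl hl)).1
    · exact (hw l (Or.inl hl)).2
    · exact (hw l (Or.inr hl)).1
    · exact (hw l (Or.inr hl)).2
  · intro b; fin_cases b
    · exact hc₀
    · exact hc₁
  · intro a b; fin_cases a <;> fin_cases b
    · exact h₀₀
    · exact h₀₁
    · exact h₁₀
    · exact h₁₁

/-! ### Root systems of rank two -/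

lemma qtil_comm (i j : Fin θ) : qtil q i j = qtil q j i := mul_comm _ _

lemma mem_cSet_one {i j : Fin θ} (h : (q i i : ℂ) = 1) (n : ℕ) :
    n ∈ cSet q i j ↔ qtil q i j = 1 := by
  have : (n + 1 : ℂ) ≠ 0 := by exact_mod_cast Nat.succ_ne_zero n
  simp [cSet, qnum, h, this, sub_eq_zero, eq_comm (a := (1 : ℂ))]

lemma mem_cSet {i j : Fin θ} (h : (q i i : ℂ) ≠ 1) (n : ℕ) :
    n ∈ cSet q i j ↔ (q i i : ℂ) ^ (n + 1) = 1 ∨ (q i i : ℂ) ^ n * qtil q i j = 1 := by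
  have h1 : qnum (q i i : ℂ) (n + 1) = 0 ↔ (q i i : ℂ) ^ (n + 1) = 1 := by
    rw [qnum, geom_sum_eq h, div_eq_zero_iff, sub_eq_zero, sub_eq_zero]
    simp [h]
  rw [cSet, Set.mem_ofPred_eq, mul_eq_zero, h1, sub_eq_zero, eq_comm (a := (1 : ℂ))]

/-- `q'` is obtained from `q` by iterated reflections. -/
def Reach (q q' : Fin θ → Fin θ → ℂˣ) : Prop := ∃ β, ReachRoot q q' β

lemma Reach.refl (q : Fin θ → Fin θ → ℂˣ) (l : Fin θ) : Reach q q := ⟨_, ReachRoot.simple l⟩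

lemma Reach.step {q q' : Fin θ → Fin θ → ℂˣ} (h : Reach q q') (i : Fin θ) :
    Reach q (reflectMat q' i) :=
  h.elim fun _ hβ => ⟨_, hβ.reflect i⟩

lemma FiniteRootSystem.nonempty_cSet {q q' : Fin θ → Fin θ → ℂˣ} (h : FiniteRootSystem q)
    (hr : Reach q q') {i j : Fin θ} (hij : j ≠ i) : (cSet q' i j).Nonempty :=
  h.1 q' i hr j hij

lemma FiniteRootSystem.qtil_eq_one {q q' : Fin θ → Fin θ → ℂˣ} (h : FiniteRootSystem q)
    (hr : Reach q q') {i j : Fin θ} (hij : j ≠ i) (hi : (q' i i : ℂ) = 1) : qtil q' i j = 1 := by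
  obtain ⟨n, hn⟩ := h.nonempty_cSet hr hij
  exact (mem_cSet_one hi n).1 hn

lemma cij_eq {i j : Fin θ} (hij : i ≠ j) {n : ℕ} (h : IsLeast (cSet q i j) n) :
    cij q i j = -n := by
  simp [cij, hij, h.csInf_eq]

section ranktwo
variable {p : Fin 2 → Fin 2 → ℂˣ}

/-- The entries of a rank two Dynkin diagram, with the vertex `i` first. -/
structure Tri (p : Fin 2 → Fin 2 → ℂˣ) (i j : Fin 2) (a e b : ℂ) : Prop where
  fst : (p i i : ℂ) = a
  edge : qtil p i j = e
  snd : (p j j : ℂ) = b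

lemma Tri.symm {i j : Fin 2} {a e b : ℂ} (h : Tri p i j a e b) : Tri p j i b e a :=
  ⟨h.snd, by rw [qtil_comm]; exact h.edge, h.fst⟩

lemma Tri.reflect {i j : Fin 2} (hij : i ≠ j) {a e b : ℂ} (h : Tri p i j a e b) {n : ℕ}
    (hn : IsLeast (cSet p i j) n) :
    Tri (reflectMat p i) i j a (e⁻¹ * (a ^ (2 * n))⁻¹) (b * e ^ n * a ^ (n * n)) := by
  have hc := cij_eq hij hn
  have hii : cij p i i = 2 := by simp [cij]
  obtain ⟨rfl, rfl, rfl⟩ := h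
  have h0 : (p i i : ℂ) ≠ 0 := (p i i).ne_zero
  have h1 : (p i j : ℂ) ≠ 0 := (p i j).ne_zero
  have h2 : (p j i : ℂ) ≠ 0 := (p j i).ne_zero
  refine ⟨?_, ?_, ?_⟩
  · simp only [reflectMat, hii, Units.val_mul, Units.val_zpow_eq_zpow_val]
    rw [mul_assoc, mul_assoc, ← zpow_add₀ h0, ← zpow_add₀ h0]
    simp
  · simp only [reflectMat, hii, hc, qtil, Units.val_mul, Units.val_zpow_eq_zpow_val]
    have e1 : (p i i : ℂ) ^ (- -(n : ℤ)) = (p i i : ℂ) ^ n := by simp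
    have e2 : (p i i : ℂ) ^ (2 * -(n : ℤ)) = ((p i i : ℂ) ^ (2 * n))⁻¹ := by
      rw [mul_neg, zpow_neg, ← Nat.cast_ofNat, ← Nat.cast_mul, zpow_natCast]
    have e3 : (p i i : ℂ) ^ (-(n : ℤ) * 2) = ((p i i : ℂ) ^ (2 * n))⁻¹ := by rw [mul_comm, e2]
    have e4 : ∀ z : ℂ, z ^ (-2 : ℤ) = (z ^ 2)⁻¹ := fun z => by rw [zpow_neg]; norm_cast
    rw [e1, e2, e3, e4, e4]
    field_simp
    ring
  · simp only [reflectMat, hc, qtil, Units.val_mul, Units.val_pow_eq_pow_val, neg_neg,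
      neg_mul_neg, zpow_natCast, ← Nat.cast_mul]
    ring

/-- `n` is minus the Cartan number of a vertex `ω ^ a` with edge `ω ^ e`, where `ω` has order
`M`. -/
def CartanNum (M a e n : ℕ) : Prop :=
  ¬ M ∣ a ∧ (M ∣ a * (n + 1) ∨ M ∣ a * n + e) ∧
    ∀ k < n, ¬ M ∣ a * (k + 1) ∧ ¬ M ∣ a * k + e

instance (M a e n : ℕ) : Decidable (CartanNum M a e n) := by unfold CartanNum; infer_instance

variable {ω : ℂ} {M : ℕ}

lemma Tri.isLeast (hω : IsPrimitiveRoot ω M) {i j : Fin 2} {a e : ℕ} {b : ℂ}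
    (h : Tri p i j (ω ^ a) (ω ^ e) b) {n : ℕ} (hn : CartanNum M a e n) :
    IsLeast (cSet p i j) n := by
  obtain ⟨h1, h2, h3⟩ := hn
  have key : ∀ k, k ∈ cSet p i j ↔ M ∣ a * (k + 1) ∨ M ∣ a * k + e := by
    intro k
    have : (p i i : ℂ) ≠ 1 := by
      rw [h.fst]
      exact fun h' => h1 ((hω.pow_eq_one_iff_dvd a).1 h')
    rw [mem_cSet this, h.fst, h.edge, ← pow_mul, ← pow_mul, ← pow_add, hω.pow_eq_one_iff_dvd,
      hω.pow_eq_one_iff_dvd]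
  refine ⟨(key n).2 h2, fun k hk => ?_⟩
  by_contra hlt
  rw [key] at hk
  have := h3 k (by omega)
  tauto

lemma pow_eq_pow_of_modEq (hω : IsPrimitiveRoot ω M) {a b : ℕ} (h : a % M = b % M) :
    ω ^ a = ω ^ b := by
  rw [← pow_mod_orderOf ω a, ← pow_mod_orderOf ω b, ← hω.eq_orderOf, h]

lemma Tri.reflect_pow (hω : IsPrimitiveRoot ω M) {i j : Fin 2} (hij : i ≠ j) {a e b : ℕ}
    (h : Tri p i j (ω ^ a) (ω ^ e) (ω ^ b)) {n : ℕ} (hn : CartanNum M a e n) {e' b' : ℕ}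
    (he : M ∣ e' + e + a * (2 * n)) (hb : (b + e * n + a * (n * n)) % M = b' % M) :
    Tri (reflectMat p i) i j (ω ^ a) (ω ^ e') (ω ^ b') := by
  have := h.reflect hij (h.isLeast hω hn)
  convert this using 1
  · have h0 : ω ≠ 0 := by
      rintro rfl
      have := h.fst ▸ (p i i).ne_zero
      have ha : a ≠ 0 := fun ha => hn.1 (by simp [ha])
      simp [ha] at this
    have := (hω.pow_eq_one_iff_dvd _).2 he
    rw [pow_add, pow_add, pow_mul] at this
    field_simp
    linear_combination this
  · rw [← pow_mul, ← pow_mul, ← pow_add, ← pow_add, pow_eq_pow_of_modEq hω hb]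

/-- A set of rank two matrices stable under reflections with constant Cartan matrix not of finite
type has infinite root systems. -/
theorem not_finiteRootSystem (T : (Fin 2 → Fin 2 → ℂˣ) → Prop) {m n : ℕ} (hmn : 4 ≤ m * n)
    (hT : ∀ p, T p → cij p 0 1 = -m ∧ cij p 1 0 = -n ∧ T (reflectMat p 0) ∧ T (reflectMat p 1))
    (hp : T p) : ¬ FiniteRootSystem p := by
  intro hfin
  have hs0 : ∀ p, T p → ∀ x y : ℤ, sRefl p 0 ![x, y] = ![m * y - x, y] := by
    intro p hp x y
    ext c; fin_cases c
    · have : cij p 0 0 = 2 := by simp [cij]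
      simp [sRefl, Fin.sum_univ_two, (hT p hp).1, this]; ring
    · simp [sRefl]
  have hs1 : ∀ p, T p → ∀ x y : ℤ, sRefl p 1 ![x, y] = ![x, n * x - y] := by
    intro p hp x y
    ext c; fin_cases c
    · simp [sRefl]
    · have : cij p 1 1 = 2 := by simp [cij]
      simp [sRefl, Fin.sum_univ_two, (hT p hp).2.1, this]; ring
  have hmn' : (4 : ℤ) ≤ m * n := by exact_mod_cast hmn
  have hm : (1 : ℤ) ≤ m := by
    have : m ≠ 0 := by rintro rfl; simp at hmn
    omega
  have hn : (1 : ℤ) ≤ n := by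
    have : n ≠ 0 := by rintro rfl; simp at hmn
    omega
  have key : ∀ k : ℕ, ∃ p', T p' ∧ ∃ x y : ℤ, ReachRoot p p' ![x, y] ∧ (k : ℤ) ≤ x ∧ 1 ≤ x ∧
      2 * x < m * y := by
    intro k
    induction k with
    | zero =>
      have h := (ReachRoot.simple (q₀ := p) 0).reflect 1
      have he : (fun k : Fin 2 => if k = 0 then (1 : ℤ) else 0) = ![1, 0] := by
        ext c; fin_cases c <;> simp
      rw [he, hs1 p hp] at h
      exact ⟨_, (hT p hp).2.2.2, _, _, h, by simp, by simp, by simp; linarith⟩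
    | succ k ih =>
      obtain ⟨p', hp', x, y, hr, hk, hx, hxy⟩ := ih
      have h := (hr.reflect 0)
      rw [hs0 p' hp'] at h
      have hp'' := (hT p' hp').2.2.1
      have h2 := h.reflect 1
      rw [hs1 _ hp''] at h2
      refine ⟨_, (hT _ hp'').2.2.2, _, _, h2, by push_cast; linarith, by linarith, ?_⟩
      nlinarith [mul_nonneg (sub_nonneg.2 hmn') (by linarith : (0 : ℤ) ≤ m * y - 2 * x),
        mul_nonneg (sub_nonneg.2 hmn') (by linarith : (0 : ℤ) ≤ x)]
  obtain ⟨B, hB⟩ := (hfin.2.image fun β : Fin 2 → ℤ => β 0).bddAbove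
  obtain ⟨p', _, x, y, hr, hk, _⟩ := key (B.toNat + 1)
  have := hB ⟨_, ⟨p', hr⟩, rfl⟩
  simp only [Matrix.cons_val_zero] at this
  have := Int.self_le_toNat B
  push_cast at hk
  omega

/-- A rank two diagram fixed by both reflections whose Cartan matrix is not of finite type. -/
theorem Tri.not_finite (hω : IsPrimitiveRoot ω M) {a e b : ℕ}
    (h : Tri p 0 1 (ω ^ a) (ω ^ e) (ω ^ b)) {m n : ℕ} (hm : CartanNum M a e m)
    (hn : CartanNum M b e n) (hmn : 4 ≤ m * n) (h1 : M ∣ e + e + a * (2 * m))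
    (h2 : (b + e * m + a * (m * m)) % M = b % M) (h3 : M ∣ e + e + b * (2 * n))
    (h4 : (a + e * n + b * (n * n)) % M = a % M) : ¬ FiniteRootSystem p := by
  refine not_finiteRootSystem (fun p => Tri p 0 1 (ω ^ a) (ω ^ e) (ω ^ b)) hmn ?_ h
  intro p hp
  exact ⟨cij_eq (by simp) (hp.isLeast hω hm), cij_eq (by simp) (hp.symm.isLeast hω hn),
    hp.reflect_pow hω (by simp) hm h1 h2, (hp.symm.reflect_pow hω (by simp) hn h3 h4).symm⟩

end ranktwo

/-! ### Coproducts modulo the multihomogeneous part of the ideal -/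

lemma exists_quotient_hpart {S : BraidedStr θ q} {I : Submodule ℂ (TV θ)}
    (hI : IsPreNicholsIdeal S I) : ∃ (B : Type) (_ : Ring B) (_ : Algebra ℂ B)
    (π : TV θ →ₐ[ℂ] B), Function.Surjective π ∧ ∀ x, π x = 0 ↔ x ∈ hpart I := by
  let t : TwoSidedIdeal (TV θ) := TwoSidedIdeal.mk' (hpart I : Set (TV θ))
    (hpart I).zero_mem (hpart I).add_mem (hpart I).neg_mem
    (fun hx => hpart_mul_left hI _ hx) (fun hx => hpart_mul_right hI _ hx)
  refine ⟨t.ringCon.Quotient, inferInstance, inferInstance, t.ringCon.mkₐ ℂ,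
    t.ringCon.mkₐ_surjective, fun x => ?_⟩
  have h1 : t.ringCon.mkₐ ℂ x = 0 ↔ x ∈ t := by
    rw [TwoSidedIdeal.mem_iff, ← RingCon.eq]
    rfl
  rw [h1]
  exact TwoSidedIdeal.mem_mk' ..

section
variable {S : BraidedStr θ q} {I : Submodule ℂ (TV θ)} {B : Type} [Ring B] [Algebra ℂ B]
  {π : TV θ →ₐ[ℂ] B}

/-- The map `T(V) ⊗ T(V) → B ⊗ B` induced by an algebra map. -/
def tmap (π : TV θ →ₐ[ℂ] B) : TV θ ⊗[ℂ] TV θ →ₗ[ℂ] B ⊗[ℂ] B :=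
  TensorProduct.map π.toLinearMap π.toLinearMap

@[simp] lemma tmap_tmul (a b : TV θ) : tmap π (a ⊗ₜ b) = π a ⊗ₜ π b := rfl

lemma tmap_eq_zero (hs : Function.Surjective π) (hk : ∀ x, π x = 0 ↔ x ∈ hpart I)
    (z : TV θ ⊗[ℂ] TV θ) : tmap π z = 0 ↔ z ∈ mixedSub (hpart I) := by
  have hk' : LinearMap.ker π.toLinearMap = hpart I := by ext x; exact hk x
  have hs' : Function.Surjective π.toLinearMap := hs
  rw [mixedSub, mixedPair_eq_ker, LinearMap.mem_ker]
  let e := (Submodule.quotEquivOfEq _ _ hk'.symm).trans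
    (π.toLinearMap.quotKerEquivOfSurjective hs')
  have : tmap π = (TensorProduct.map e.toLinearMap e.toLinearMap).comp
      (TensorProduct.map (hpart I).mkQ (hpart I).mkQ) := by
    rw [← TensorProduct.map_comp]
    rfl
  rw [this, LinearMap.comp_apply]
  exact (TensorProduct.congr e e).map_eq_zero_iff

lemma tmap_mulB (hI : IsPreNicholsIdeal S I) (hs : Function.Surjective π)
    (hk : ∀ x, π x = 0 ↔ x ∈ hpart I) {U U' V V' : TV θ ⊗[ℂ] TV θ}
    (hU : tmap π U = tmap π U') (hV : tmap π V = tmap π V') :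
    tmap π (S.mulB U V) = tmap π (S.mulB U' V') := by
  rw [← sub_eq_zero, ← map_sub, tmap_eq_zero hs hk] at *
  have := Submodule.add_mem _ (mulB_mem_mixedSub_left hI hU V) (mulB_mem_mixedSub_right hI U' hV)
  convert this using 1
  rw [map_sub, map_sub, LinearMap.sub_apply]
  abel

lemma tmap_coprod_mul (hI : IsPreNicholsIdeal S I) (hs : Function.Surjective π)
    (hk : ∀ x, π x = 0 ↔ x ∈ hpart I) {u v : TV θ} {U V : TV θ ⊗[ℂ] TV θ}
    (hU : tmap π (S.Δ u) = tmap π U) (hV : tmap π (S.Δ v) = tmap π V) :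
    tmap π (S.Δ (u * v)) = tmap π (S.mulB U V) := by
  rw [S.Δ_mul]
  exact tmap_mulB hI hs hk hU hV

lemma tmap_coprod_brk (hI : IsPreNicholsIdeal S I) (hs : Function.Surjective π)
    (hk : ∀ x, π x = 0 ↔ x ∈ hpart I) {u v : TV θ} {U V : TV θ ⊗[ℂ] TV θ} (a b : Fin θ → ℕ)
    (hU : tmap π (S.Δ u) = tmap π U) (hV : tmap π (S.Δ v) = tmap π V) :
    tmap π (S.Δ (brk q a b u v)) = tmap π (S.mulB U V) - qf q a b • tmap π (S.mulB V U) := by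
  rw [brk, map_sub, map_smul, map_sub, map_smul, tmap_coprod_mul hI hs hk hU hV,
    tmap_coprod_mul hI hs hk hV hU]

lemma primMod_iff (hs : Function.Surjective π) (hk : ∀ x, π x = 0 ↔ x ∈ hpart I) (y : TV θ) :
    PrimMod S I y ↔ tmap π (S.Δ y) = π y ⊗ₜ 1 + 1 ⊗ₜ π y := by
  rw [PrimMod, ← tmap_eq_zero hs hk, map_sub, sub_eq_zero]
  simp

end

/-- `x_{ab} = [x_a, x_b]_c`. -/
def x2 (q : Fin θ → Fin θ → ℂˣ) (a b : Fin θ) : TV θ :=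
  gen θ a * gen θ b - (q a b : ℂ) • (gen θ b * gen θ a)

lemma x2_eq_brk (a b : Fin θ) : x2 q a b = brk q (δ θ a) (δ θ b) (gen θ a) (gen θ b) := by
  rw [brk, qf_delta, x2]

lemma x2_mem (a b : Fin θ) : x2 q a b ∈ homogD θ (δ θ a + δ θ b) := by
  rw [x2_eq_brk]
  exact brk_mem_homogD (gen_mem_homogD a) (gen_mem_homogD b)

lemma xw_pair (a b : Fin θ) : xw q [a, b] = x2 q a b := by
  have : degW θ [b] = δ θ b := by simp [degW_singleton]
  simp only [xw, ad1, this, x2_eq_brk]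

lemma coprod_x2 (S : BraidedStr θ q) (a b : Fin θ) :
    S.Δ (x2 q a b) = x2 q a b ⊗ₜ 1 + 1 ⊗ₜ x2 q a b
      + (1 - qtil q a b) • (gen θ a ⊗ₜ[ℂ] gen θ b) := by
  simp only [x2, map_sub, map_smul, S.Δ_mul, S.Δ_gen, map_add, LinearMap.add_apply,
    S.mulB_twist (gen_mem_homogD _), S.mulB_one_right, twist_gen, qf_delta, map_one, mul_one, one_mul]
  simp only [TensorProduct.sub_tmul, TensorProduct.tmul_sub, ← TensorProduct.smul_tmul',
    TensorProduct.tmul_smul, qtil]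
  module

lemma coprod_sq (S : BraidedStr θ q) (a : Fin θ) (h : (q a a : ℂ) = -1) :
    S.Δ (gen θ a * gen θ a) = (gen θ a * gen θ a) ⊗ₜ 1 + 1 ⊗ₜ (gen θ a * gen θ a) := by
  simp only [S.Δ_mul, S.Δ_gen, map_add, LinearMap.add_apply,
    S.mulB_twist (gen_mem_homogD _), S.mulB_one_right, twist_gen, qf_delta, map_one, mul_one, one_mul]
  simp only [← TensorProduct.smul_tmul', h]
  module

lemma sq_mem (a : Fin θ) : gen θ a * gen θ a ∈ homogD θ (δ θ a + δ θ a) :=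
  mul_mem_homogD (gen_mem_homogD a) (gen_mem_homogD a)

lemma sq_primMod (S : BraidedStr θ q) (I : Submodule ℂ (TV θ)) (a : Fin θ)
    (h : (q a a : ℂ) = -1) : PrimMod S I (gen θ a * gen θ a) := by
  simp [PrimMod, coprod_sq S a h]

lemma x2_primMod (S : BraidedStr θ q) (I : Submodule ℂ (TV θ)) (a b : Fin θ)
    (h : qtil q a b = 1) : PrimMod S I (x2 q a b) := by
  simp [PrimMod, coprod_x2, h]

/-- `[x_{ij}, x_k]_c`. -/
def x3 (q : Fin θ → Fin θ → ℂˣ) (i j k : Fin θ) : TV θ :=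
  brk q (δ θ i + δ θ j) (δ θ k) (x2 q i j) (gen θ k)

/-- `[x_{ij}, x_{kj}]_c`. -/
def x4 (q : Fin θ → Fin θ → ℂˣ) (i j k : Fin θ) : TV θ :=
  brk q (δ θ i + δ θ j) (δ θ k + δ θ j) (x2 q i j) (x2 q k j)

/-- `[x_{ij}, [x_{ij}, x_{kj}]_c]_c`. -/
def x6 (q : Fin θ → Fin θ → ℂˣ) (i j k : Fin θ) : TV θ :=
  brk q (δ θ i + δ θ j) (δ θ i + δ θ j + (δ θ k + δ θ j)) (x2 q i j) (x4 q i j k)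

lemma x3_mem (i j k : Fin θ) : x3 q i j k ∈ homogD θ (δ θ i + δ θ j + δ θ k) :=
  brk_mem_homogD (x2_mem i j) (gen_mem_homogD k)

lemma x4_mem (i j k : Fin θ) : x4 q i j k ∈ homogD θ (δ θ i + δ θ j + (δ θ k + δ θ j)) :=
  brk_mem_homogD (x2_mem i j) (x2_mem k j)

lemma x6_mem (i j k : Fin θ) : x6 q i j k ∈
    homogD θ (δ θ i + δ θ j + (δ θ i + δ θ j + (δ θ k + δ θ j))) :=
  brk_mem_homogD (x2_mem i j) (x4_mem i j k)

section
variable {S : BraidedStr θ q} {I : Submodule ℂ (TV θ)} {B : Type} [Ring B] [Algebra ℂ B]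
  {π : TV θ →ₐ[ℂ] B} {i j k : Fin θ}

lemma rel_ij (π : TV θ →ₐ[ℂ] B) (i j : Fin θ) : π (gen θ i) * π (gen θ j)
    = π (x2 q i j) + (q i j : ℂ) • (π (gen θ j) * π (gen θ i)) := by
  simp [x2]

lemma rel_sq (hj : π (gen θ j * gen θ j) = 0) : π (gen θ j) * π (gen θ j) = 0 := by
  simpa using hj

lemma rel_ik (hik : π (x2 q i k) = 0) :
    π (gen θ i) * π (gen θ k) = (q i k : ℂ) • (π (gen θ k) * π (gen θ i)) := by
  rw [rel_ij (q := q), hik, zero_add]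

lemma rel_ij_j (hj : π (gen θ j * gen θ j) = 0) (i : Fin θ) :
    π (x2 q i j) * π (gen θ j) = -(q i j : ℂ) • (π (gen θ j) * π (x2 q i j)) := by
  have h := rel_sq hj
  have h' : ∀ z, π (gen θ j) * (π (gen θ j) * z) = 0 := fun z => by rw [← mul_assoc, h, zero_mul]
  simp [x2, sub_mul, mul_sub, mul_assoc, h, h']

lemma rel_ij_k (π : TV θ →ₐ[ℂ] B) (i j k : Fin θ) : π (x2 q i j) * π (gen θ k)
    = π (x3 q i j k) + ((q i k : ℂ) * q j k) • (π (gen θ k) * π (x2 q i j)) := by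
  simp [x3, brk, qf_add_left, qf_delta]

lemma rel_i_kj (hik : π (x2 q i k) = 0) : π (gen θ i) * π (x2 q k j)
    = ((q i k : ℂ) * q i j) • (π (x2 q k j) * π (gen θ i)) - (q k j : ℂ) • π (x3 q i j k)
      + ((q i k : ℂ) * (1 - q j k * q k j)) • (π (gen θ k) * π (x2 q i j)) := by
  have h1 : π (gen θ i) * π (x2 q k j) = (π (gen θ i) * π (gen θ k)) * π (gen θ j)
      - (q k j : ℂ) • ((π (gen θ i) * π (gen θ j)) * π (gen θ k)) := by
    simp [x2, mul_sub, mul_assoc]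
  rw [h1, rel_ik hik, rel_ij (q := q) π i j, add_mul, rel_ij_k, smul_mul_assoc, smul_mul_assoc,
    mul_assoc, mul_assoc, rel_ij (q := q) π i j, rel_ik hik]
  have h2 : π (x2 q k j) = π (gen θ k) * π (gen θ j) - (q k j : ℂ) • (π (gen θ j) * π (gen θ k)) := by
    simp [x2]
  simp only [h2, sub_mul, mul_add, mul_assoc, smul_mul_assoc, mul_smul_comm]
  module

lemma rel_ij_kj (π : TV θ →ₐ[ℂ] B) (i j k : Fin θ) : π (x2 q i j) * π (x2 q k j)
    = π (x4 q i j k)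
      + ((q i k : ℂ) * q i j * (q j k * q j j)) • (π (x2 q k j) * π (x2 q i j)) := by
  simp [x4, brk, qf_add_left, qf_add_right, qf_delta]
  module

lemma rel_x4_j (hj : π (gen θ j * gen θ j) = 0) (i k : Fin θ) :
    π (x4 q i j k) * π (gen θ j)
      = ((q i j : ℂ) * q k j) • (π (gen θ j) * π (x4 q i j k)) := by
  have h1 := rel_ij_j (q := q) hj i
  have h2 := rel_ij_j (q := q) hj k
  have e : π (x4 q i j k) = π (x2 q i j) * π (x2 q k j) -
     ((q i k : ℂ) * q i j * (q j k * q j j)) • (π (x2 q k j) * π (x2 q i j)) := by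
    rw [rel_ij_kj]; abel
  have h3 : π (x2 q i j) * (π (gen θ j) * π (x2 q k j))
      = -(q i j : ℂ) • (π (gen θ j) * (π (x2 q i j) * π (x2 q k j))) := by
    rw [← mul_assoc, h1, smul_mul_assoc, mul_assoc]
  have h4 : π (x2 q k j) * (π (gen θ j) * π (x2 q i j))
      = -(q k j : ℂ) • (π (gen θ j) * (π (x2 q k j) * π (x2 q i j))) := by
    rw [← mul_assoc, h2, smul_mul_assoc, mul_assoc]
  simp only [e, sub_mul, mul_sub, smul_mul_assoc, mul_smul_comm, mul_assoc, h1, h2, h3, h4]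
  module

theorem tmap_coprod_x4 (hI : IsPreNicholsIdeal S I) (hs : Function.Surjective π)
    (hk : ∀ x, π x = 0 ↔ x ∈ hpart I) (hjj : (q j j : ℂ) = -1)
    (hj : π (gen θ j * gen θ j) = 0) (hik : π (x2 q i k) = 0) (hq : qtil q i k = 1) :
    tmap π (S.Δ (x4 q i j k)) = tmap π (x4 q i j k ⊗ₜ 1 + 1 ⊗ₜ x4 q i j k
      + (1 - qtil q i j * qtil q j k) • (x3 q i j k ⊗ₜ gen θ j + x2 q i j ⊗ₜ x2 q k j
        + (1 - qtil q i j) • (gen θ i ⊗ₜ (gen θ j * x2 q k j)))) := by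
  rw [x4, tmap_coprod_brk hI hs hk _ _ (congrArg _ (coprod_x2 S i j))
    (congrArg _ (coprod_x2 S k j)), ← x4]
  simp only [map_add, map_smul, LinearMap.add_apply, LinearMap.smul_apply,
    S.mulB_twist (gen_mem_homogD _), S.mulB_twist (x2_mem _ _), S.mulB_one_right, map_one, mul_one,
    one_mul, twist_gen, twist_homogD (x2_mem _ _), qf_add_left, qf_add_right, qf_delta, tmap_tmul,
    map_mul, mul_smul_comm, rel_sq hj, rel_ij_j hj, rel_ij_kj π i j k, rel_i_kj hik, rel_ik hik,
    rel_ij_k π i j k, TensorProduct.tmul_add, TensorProduct.add_tmul, TensorProduct.tmul_smul,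
    TensorProduct.sub_tmul, ← TensorProduct.smul_tmul', TensorProduct.tmul_zero, hjj]
  have h0 : (q i k : ℂ) ≠ 0 := (q i k).ne_zero
  have hki : (q k i : ℂ) = (q i k : ℂ)⁻¹ := by
    rw [qtil] at hq; field_simp; linear_combination hq
  simp only [hki, qtil]
  match_scalars <;> field_simp <;> ring

/-- The skew derivative of `x6` at `j`, modulo `x_j²` and `x_{ik}`. -/
def x6pder (q : Fin θ → Fin θ → ℂˣ) (i j k : Fin θ) : TV θ :=
  (1 - qtil q i j * qtil q j k) • (x2 q i j * x3 q i j k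
    + ((q i i : ℂ) * q i j ^ 2 * q j i ^ 2 * q i k * q j k) • (x3 q i j k * x2 q i j))
  + (1 - qtil q i j) • (((q j i : ℂ) * q j k) • (gen θ i * x4 q i j k)
    - ((q i i : ℂ) * q i j ^ 2 * q j i * q i k * q j k) • (x4 q i j k * gen θ i))

theorem tmap_coprod_x6 (hI : IsPreNicholsIdeal S I) (hs : Function.Surjective π)
    (hk : ∀ x, π x = 0 ↔ x ∈ hpart I) (hjj : (q j j : ℂ) = -1)
    (hj : π (gen θ j * gen θ j) = 0) (hik : π (x2 q i k) = 0) (hq : qtil q i k = 1)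
    (hl : 1 + q i i * qtil q i j ^ 2 * qtil q j k = 0) :
    tmap π (S.Δ (x6 q i j k)) = tmap π (x6 q i j k ⊗ₜ 1 + 1 ⊗ₜ x6 q i j k
      + x6pder q i j k ⊗ₜ gen θ j) := by
  have e4 := tmap_coprod_x4 hI hs hk hjj hj hik hq
  rw [x6, tmap_coprod_brk hI hs hk _ _ (congrArg _ (coprod_x2 S i j)) e4, ← x6]
  have h6 : π (x2 q i j) * π (x4 q i j k) = π (x6 q i j k) + qf q (δ θ i + δ θ j)
      (δ θ i + δ θ j + (δ θ k + δ θ j)) • (π (x4 q i j k) * π (x2 q i j)) := by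
    simp [x6, brk]
  have hA : ∀ z, π (x2 q i j) * (π (gen θ j) * z) = -(q i j : ℂ) • (π (gen θ j) * (π (x2 q i j) * z)) := by
    intro z
    rw [← mul_assoc, rel_ij_j hj, smul_mul_assoc, mul_assoc]
  have hJ : ∀ z, π (gen θ j) * (π (gen θ j) * z) = 0 := by
    intro z
    rw [← mul_assoc, rel_sq hj, zero_mul]
  simp only [x6pder, map_add, map_sub, map_smul, LinearMap.add_apply, LinearMap.smul_apply, LinearMap.sub_apply,
    S.mulB_twist (gen_mem_homogD _), S.mulB_twist (x2_mem _ _), S.mulB_twist (x4_mem _ _ _),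
    S.mulB_twist (mul_mem_homogD (gen_mem_homogD j) (x2_mem (q := q) k j)),
    S.mulB_one_right, map_one, mul_one,
    one_mul, twist_gen, twist_homogD (x2_mem _ _), twist_homogD (x3_mem _ _ _),
    twist_homogD (x4_mem _ _ _), qf_add_left, qf_add_right, qf_delta, tmap_tmul,
    map_mul, mul_smul_comm, smul_mul_assoc, mul_add, mul_assoc, rel_sq hj, hJ, hA, rel_ij_j hj, h6,
    rel_ij_kj π i j k, rel_x4_j hj,
    TensorProduct.tmul_add, TensorProduct.add_tmul, TensorProduct.tmul_smul,
    TensorProduct.sub_tmul, ← TensorProduct.smul_tmul', TensorProduct.tmul_zero, hjj, mul_zero, smul_zero]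
  have h0 : (q i k : ℂ) ≠ 0 := (q i k).ne_zero
  have h1 : (q i j : ℂ) ≠ 0 := (q i j).ne_zero
  have h2 : (q j i : ℂ) ≠ 0 := (q j i).ne_zero
  have h3 : (q j k : ℂ) ≠ 0 := (q j k).ne_zero
  have h4 : (q k j : ℂ) ≠ 0 := (q k j).ne_zero
  have hki : (q k i : ℂ) = (q i k : ℂ)⁻¹ := by
    rw [qtil] at hq; field_simp; linear_combination hq
  have hii : (q i i : ℂ) = -((q i j : ℂ) ^ 2 * q j i ^ 2 * (q j k * q k j))⁻¹ := by
    simp only [qtil] at hl; field_simp; linear_combination hl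
  simp only [hki, hii, qtil]
  match_scalars <;> field_simp <;> ring
end

section
variable {S : BraidedStr θ q} {I : Submodule ℂ (TV θ)} {B : Type} [Ring B] [Algebra ℂ B]
  {π : TV θ →ₐ[ℂ] B} {i j k : Fin θ}

lemma map_xw_triple (hik : π (x2 q i k) = 0) : π (xw q [i, j, k]) = π (x3 q i j k) := by
  have h1 : degW θ [j, k] = δ θ j + δ θ k := by simp [degW_cons, degW_nil]
  have h2 : xw q [i, j, k] = brk q (δ θ i) (δ θ j + δ θ k) (gen θ i) (x2 q j k) := by
    rw [← xw_pair, ← h1]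
    rfl
  have hx : ∀ z, π (gen θ i) * (π (gen θ k) * z)
      = (q i k : ℂ) • (π (gen θ k) * (π (gen θ i) * z)) := by
    intro z
    rw [← mul_assoc, rel_ik hik, smul_mul_assoc, mul_assoc]
  rw [h2]
  simp only [brk, x2, x3, qf_add_right, qf_add_left, qf_delta, map_sub, map_mul, map_smul, sub_mul,
    mul_sub, mul_assoc, smul_mul_assoc, mul_smul_comm, hx, rel_ik hik]
  module

lemma rel_x3_j (hj : π (gen θ j * gen θ j) = 0) (hjj : (q j j : ℂ) = -1) (i k : Fin θ) :
    π (x3 q i j k) * π (gen θ j)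
      = π (x4 q i j k) - ((q i j : ℂ) * q k j) • (π (gen θ j) * π (x3 q i j k)) := by
  have hA : ∀ z, π (x2 q i j) * (π (gen θ j) * z)
      = -(q i j : ℂ) • (π (gen θ j) * (π (x2 q i j) * z)) := by
    intro z
    rw [← mul_assoc, rel_ij_j hj, smul_mul_assoc, mul_assoc]
  have hkj : π (x2 q k j)
      = π (gen θ k) * π (gen θ j) - (q k j : ℂ) • (π (gen θ j) * π (gen θ k)) := by simp [x2]
  simp only [x3, x4, brk, qf_add_right, qf_add_left, qf_delta, map_sub, map_mul, map_smul, sub_mul,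
    mul_sub, mul_assoc, smul_mul_assoc, mul_smul_comm, hkj, hA, rel_ij_j hj, hjj]
  module

lemma map_bracket_eq (hjj : (q j j : ℂ) = -1) (hj : π (gen θ j * gen θ j) = 0)
    (hik : π (x2 q i k) = 0) :
    π (brk q (δ θ i + δ θ j + (δ θ i + δ θ j + δ θ k)) (δ θ j)
      (brk q (δ θ i + δ θ j) (δ θ i + δ θ j + δ θ k) (xw q [i, j]) (xw q [i, j, k]))
      (gen θ j)) = π (x6 q i j k) := by
  have hA : ∀ z, π (x2 q i j) * (π (gen θ j) * z)
      = -(q i j : ℂ) • (π (gen θ j) * (π (x2 q i j) * z)) := by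
    intro z
    rw [← mul_assoc, rel_ij_j hj, smul_mul_assoc, mul_assoc]
  have hX : ∀ z, π (x3 q i j k) * (π (gen θ j) * z) = π (x4 q i j k) * z
      - ((q i j : ℂ) * q k j) • (π (gen θ j) * (π (x3 q i j k) * z)) := by
    intro z
    rw [← mul_assoc, rel_x3_j hj hjj, sub_mul, smul_mul_assoc, mul_assoc]
  simp only [xw_pair, x6, brk, qf_add_right, qf_add_left, qf_delta, map_sub, map_mul, map_smul,
    map_xw_triple hik, sub_mul, mul_sub, mul_assoc, smul_mul_assoc, mul_smul_comm, hA, hX,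
    rel_ij_j hj, rel_x3_j hj hjj, hjj]
  module

lemma map_x6pder_of_sq (hii : (q i i : ℂ) = -1) (hi : π (gen θ i * gen θ i) = 0)
    (hik : π (x2 q i k) = 0) (hjj : (q j j : ℂ) = -1) (hl : qtil q i j ^ 2 * qtil q j k = 1) :
    π (x6pder q i j k) = 0 := by
  have hi' : ∀ z, π (gen θ i) * (π (gen θ i) * z) = 0 := by
    intro z
    rw [← mul_assoc, rel_sq hi, zero_mul]
  have h1 : π (gen θ i) * π (x2 q i j) = -(q i j : ℂ) • (π (x2 q i j) * π (gen θ i)) := by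
    simp only [x2, map_sub, map_mul, map_smul, mul_sub, sub_mul, smul_mul_assoc, mul_smul_comm,
      mul_assoc, rel_sq hi, hi', mul_zero]
    module
  have h2 : ∀ z, π (gen θ i) * (π (x2 q i j) * z)
      = -(q i j : ℂ) • (π (x2 q i j) * (π (gen θ i) * z)) := by
    intro z
    rw [← mul_assoc, h1, smul_mul_assoc, mul_assoc]
  have h3 : ∀ z, π (gen θ i) * (π (x2 q k j) * z)
    = ((q i k : ℂ) * q i j) • (π (x2 q k j) * (π (gen θ i) * z)) - (q k j : ℂ) • (π (x3 q i j k) * z)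
      + ((q i k : ℂ) * (1 - q j k * q k j)) • (π (gen θ k) * (π (x2 q i j) * z)) := by
    intro z
    rw [← mul_assoc, rel_i_kj hik, add_mul, sub_mul, smul_mul_assoc, smul_mul_assoc,
      smul_mul_assoc, mul_assoc, mul_assoc]
  have h4 : π (x4 q i j k) = π (x2 q i j) * π (x2 q k j)
      - ((q i k : ℂ) * q i j * (q j k * q j j)) • (π (x2 q k j) * π (x2 q i j)) := by
    rw [rel_ij_kj]; abel
  have h5 : π (gen θ k) * π (x2 q i j) = ((q i k : ℂ) * q j k)⁻¹ •
      (π (x2 q i j) * π (gen θ k) - π (x3 q i j k)) := by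
    rw [rel_ij_k, add_sub_cancel_left, smul_smul, inv_mul_cancel₀ (by simp), one_smul]
  have h6 : ∀ z, π (gen θ k) * (π (x2 q i j) * z) = ((q i k : ℂ) * q j k)⁻¹ •
      (π (x2 q i j) * (π (gen θ k) * z) - π (x3 q i j k) * z) := by
    intro z
    rw [← mul_assoc, h5, smul_mul_assoc, sub_mul, mul_assoc]
  simp only [x6pder, map_add, map_sub, map_mul, map_smul, h4, mul_sub, sub_mul, mul_add, add_mul,
    smul_mul_assoc, mul_smul_comm, mul_assoc, h1, h2, h3, h5, h6, rel_i_kj hik, hii, hjj]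
  have a0 : (q i k : ℂ) ≠ 0 := (q i k).ne_zero
  have a1 : (q i j : ℂ) ≠ 0 := (q i j).ne_zero
  have a2 : (q j i : ℂ) ≠ 0 := (q j i).ne_zero
  have a3 : (q j k : ℂ) ≠ 0 := (q j k).ne_zero
  have a4 : (q k j : ℂ) = (q i j ^ 2 * q j i ^ 2 * q j k : ℂ)⁻¹ := by
    simp only [qtil] at hl; field_simp; linear_combination hl
  simp only [a4, qtil]
  match_scalars <;> field_simp <;> ring
end

lemma pder_word_mem_span (a : Fin θ) (w : List (Fin θ)) : pder q a (wordElem θ w) ∈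
    Submodule.span ℂ {x | ∃ v, degW θ v + δ θ a = degW θ w ∧ x = wordElem θ v} := by
  induction w with
  | nil => simp [pder_one]
  | cons l w ih =>
    rw [wordElem_cons, pder_gen_mul]
    refine Submodule.add_mem _ ?_ ?_
    · rw [← LinearMap.mulLeft_apply (R := ℂ)]
      refine (Submodule.map_span_le _ _ _).2 ?_ (Submodule.mem_map_of_mem ih)
      rintro _ ⟨v, hv, rfl⟩
      exact Submodule.subset_span ⟨l :: v, by rw [degW_cons, degW_cons, ← hv, add_assoc],
        by simp [wordElem_cons]⟩
    · split_ifs with h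
      · subst h
        rw [twist_word]
        exact Submodule.smul_mem _ _
          (Submodule.subset_span ⟨w, by rw [degW_cons, add_comm], rfl⟩)
      · exact Submodule.zero_mem _

lemma pder_mem_homogD {d : Fin θ → ℕ} {x : TV θ} (hx : x ∈ homogD θ d) (a : Fin θ) :
    pder q a x ∈ homogD θ (d - δ θ a) := by
  refine (Submodule.map_span_le _ _ _).2 ?_ (Submodule.mem_map_of_mem hx)
  rintro _ ⟨w, rfl, rfl⟩
  refine Submodule.span_mono ?_ (pder_word_mem_span a w)
  rintro _ ⟨v, hv, rfl⟩
  exact ⟨v, by rw [← hv, add_tsub_cancel_right], rfl⟩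

lemma pder_mem_hpart {S : BraidedStr θ q} {I : Submodule ℂ (TV θ)}
    (hI : IsPreNicholsIdeal S I) {x : TV θ} (hx : x ∈ hpart I) (a : Fin θ) :
    pder q a x ∈ hpart I := by
  refine (Submodule.map_span_le _ _ _).2 ?_ (Submodule.mem_map_of_mem hx)
  rintro x ⟨hx, d, hd⟩
  exact mem_hpart (pder_mem_preNichols hI hx a) (pder_mem_homogD hd a)

/-- If `u` is primitive up to a term `F ⊗ x_a`, then the skew derivative `∂_a u` is primitive, and
`u` is primitive as soon as `∂_a u` vanishes. -/
lemma primMod_pder {S : BraidedStr θ q} {I : Submodule ℂ (TV θ)} (hI : IsPreNicholsIdeal S I)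
    {u F : TV θ} {d : Fin θ → ℕ} (hu : u ∈ homogD θ d) (hd : 2 ≤ ∑ l, d l) {a : Fin θ}
    (h : S.Δ u - (u ⊗ₜ 1 + 1 ⊗ₜ u + F ⊗ₜ gen θ a) ∈ mixedSub (hpart I)) :
    PrimMod S I (pder q a u) ∧ (pder q a u ∈ I → PrimMod S I u) := by
  have hev : evalW q [a] u = 0 :=
    evalW_homogTot (q := q) [a] (by simp; omega) (homogD_le_homogTot d hu)
  have h1 : pder q a u - F ∈ hpart I := by
    have h2 := contr_mem_of_mixedPair (ψ := evalW q [a])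
      (fun x hx => evalW_preNichols hI (hpart_le I hx) (by simp)) h
    rw [map_sub, contr_evalW_coprod] at h2
    simpa [hev, evalW_cons, evalW_nil, pder_one, pder_gen, pders_cons, pders_nil] using h2
  constructor
  · have h2 : LinearMap.lTensor (TV θ) (pder q a) (S.Δ u - (u ⊗ₜ 1 + 1 ⊗ₜ u + F ⊗ₜ gen θ a))
        ∈ mixedSub (hpart I) := by
      refine (Submodule.map_span_le _ _ _).2 ?_ (Submodule.mem_map_of_mem h)
      rintro _ (⟨b, c, hb, rfl⟩ | ⟨b, c, hc, rfl⟩)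
      · exact tmul_mem_mixedSub_left hb _
      · exact tmul_mem_mixedSub_right (pder_mem_hpart hI hc a) _
    rw [map_sub, coprod_pder] at h2
    have h3 := Submodule.sub_mem _ h2 (tmul_mem_mixedSub_left h1 1)
    rw [PrimMod]
    convert h3 using 1
    simp [pder_one, pder_gen, TensorProduct.sub_tmul]
    abel
  · intro h2
    have h3 : F ∈ hpart I := by
      have := Submodule.sub_mem _ (mem_hpart h2 (pder_mem_homogD hu a)) h1
      simpa using this
    have h4 := Submodule.add_mem _ h (tmul_mem_mixedSub_left h3 (gen θ a))
    rw [PrimMod]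
    convert h4 using 1
    abel

section
variable {S : BraidedStr θ q} {I : Submodule ℂ (TV θ)} {i j k : Fin θ}

lemma x4_primMod (hI : IsPreNicholsIdeal S I) (hjj : (q j j : ℂ) = -1)
    (hj : gen θ j * gen θ j ∈ I) (hik : x2 q i k ∈ I) (hq : qtil q i k = 1)
    (hκ : qtil q i j * qtil q j k = 1) : PrimMod S I (x4 q i j k) := by
  obtain ⟨B, _, _, π, hs, hk⟩ := exists_quotient_hpart hI
  have h := tmap_coprod_x4 (S := S) (i := i) (k := k) hI hs hk hjj
    ((hk _).2 (mem_hpart hj (sq_mem j))) ((hk _).2 (mem_hpart hik (x2_mem i k))) hq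
  rw [primMod_iff hs hk, h]
  simp [hκ]

lemma x6_primMod (hI : IsPreNicholsIdeal S I) (hjj : (q j j : ℂ) = -1)
    (hj : gen θ j * gen θ j ∈ I) (hik : x2 q i k ∈ I) (hq : qtil q i k = 1)
    (hl : 1 + q i i * qtil q i j ^ 2 * qtil q j k = 0) :
    PrimMod S I (pder q j (x6 q i j k)) ∧
      (pder q j (x6 q i j k) ∈ I → PrimMod S I (x6 q i j k)) := by
  obtain ⟨B, _, _, π, hs, hk⟩ := exists_quotient_hpart hI
  have h := tmap_coprod_x6 (S := S) (i := i) (k := k) hI hs hk hjj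
    ((hk _).2 (mem_hpart hj (sq_mem j))) ((hk _).2 (mem_hpart hik (x2_mem i k))) hq hl
  refine primMod_pder hI (F := x6pder q i j k) (x6_mem i j k) ?_ ?_
  · simp [Finset.sum_add_distrib, δ]
  · rwa [← tmap_eq_zero hs hk, map_sub, sub_eq_zero]

lemma x6_primMod_of_sq (hI : IsPreNicholsIdeal S I) (hii : (q i i : ℂ) = -1)
    (hjj : (q j j : ℂ) = -1) (hi : gen θ i * gen θ i ∈ I)
    (hj : gen θ j * gen θ j ∈ I) (hik : x2 q i k ∈ I) (hq : qtil q i k = 1)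
    (hl : qtil q i j ^ 2 * qtil q j k = 1) : PrimMod S I (x6 q i j k) := by
  obtain ⟨B, _, _, π, hs, hk⟩ := exists_quotient_hpart hI
  have hik' := (hk _).2 (mem_hpart hik (x2_mem i k))
  have h := tmap_coprod_x6 (S := S) (i := i) (k := k) hI hs hk hjj
    ((hk _).2 (mem_hpart hj (sq_mem j))) hik' hq
    (by rw [hii]; linear_combination -hl)
  have h' := map_x6pder_of_sq (j := j) hii ((hk _).2 (mem_hpart hi (sq_mem i))) hik' hjj hl
  rw [primMod_iff hs hk, h]
  simp [h']

lemma bracket_mem_of_x6 (hI : IsPreNicholsIdeal S I) (hjj : (q j j : ℂ) = -1)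
    (hj : gen θ j * gen θ j ∈ I) (hik : x2 q i k ∈ I) (h6 : x6 q i j k ∈ I) :
    brk q (δ θ i + δ θ j + (δ θ i + δ θ j + δ θ k)) (δ θ j)
      (brk q (δ θ i + δ θ j) (δ θ i + δ θ j + δ θ k) (xw q [i, j]) (xw q [i, j, k]))
      (gen θ j) ∈ I := by
  obtain ⟨B, _, _, π, hs, hk⟩ := exists_quotient_hpart hI
  refine hpart_le I ((hk _).1 ?_)
  rw [map_bracket_eq hjj ((hk _).2 (mem_hpart hj (sq_mem j)))
    ((hk _).2 (mem_hpart hik (x2_mem i k)))]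
  exact (hk _).2 (mem_hpart h6 (x6_mem i j k))

lemma x6_mem_of_x4 (hI : IsPreNicholsIdeal S I) (h : x4 q i j k ∈ I) : x6 q i j k ∈ I :=
  Submodule.sub_mem _ (hI.mul_left _ _ h) (Submodule.smul_mem _ _ (hI.mul_right _ _ h))
end

/-! ### Vanishing of primitive elements -/

lemma pairMat_tri (q : Fin θ → Fin θ → ℂˣ) (a b : Fin θ → ℕ) :
    Tri (pairMat q a b) 0 1 (qf q a a) (qf q a b * qf q b a) (qf q b b) :=
  ⟨rfl, rfl, rfl⟩

lemma Tri.edge_eq_one {p p' : Fin 2 → Fin 2 → ℂˣ} {s t : Fin 2} {a e b : ℂ} (h : Tri p' s t a e b)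
    (hst : t ≠ s) (ha : a = 1) (hf : FiniteRootSystem p) (hr : Reach p p') : e = 1 := by
  rw [← h.edge]
  exact hf.qtil_eq_one hr hst (h.fst.trans ha)

section
variable {S : BraidedStr θ q} {I : Submodule ℂ (TV θ)} {i j k : Fin θ}

/-- A primitive element `w` with trivial self-braiding vanishes if it is connected to a
generator. -/
lemma mem_of_qf_eq_one (hI : IsPreNicholsIdeal S I) (hGK : FinGK I) (hAAH : AAH) (l : Fin θ)
    {w : TV θ} {d : Fin θ → ℕ} (hw : w ∈ homogD θ d) (hd : 2 ≤ ∑ l, d l) (hp : PrimMod S I w)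
    (h1 : qf q d d = 1) (h2 : qf q (δ θ l) d * qf q d (δ θ l) ≠ 1) : w ∈ I := by
  by_contra hwI
  have hf := finiteRootSystem_pair hI hGK hAAH l hw hd hp hwI
  exact h2 ((pairMat_tri q (δ θ l) d).symm.edge_eq_one (by simp) h1 hf (Reach.refl _ 0))

lemma sq_mem_ideal (hI : IsPreNicholsIdeal S I) (hGK : FinGK I) (hAAH : AAH) (l : Fin θ)
    (hjj : (q j j : ℂ) = -1) (h : qtil q l j ^ 2 ≠ 1) : gen θ j * gen θ j ∈ I := by
  refine mem_of_qf_eq_one hI hGK hAAH l (sq_mem j) ?_ (sq_primMod S I j hjj) ?_ ?_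
  · simp [Finset.sum_add_distrib, δ]
  · simp [qf_add_left, qf_add_right, qf_delta, hjj]
  · convert h using 1
    simp only [qf_add_left, qf_add_right, qf_delta, qtil]
    ring

/-- A primitive element vanishes if it forms with some generator a diagram of infinite type fixed
by the reflections. -/
lemma mem_of_tri (hI : IsPreNicholsIdeal S I) (hGK : FinGK I) (hAAH : AAH) (l : Fin θ)
    {w : TV θ} {d : Fin θ → ℕ} (hw : w ∈ homogD θ d) (hd : 2 ≤ ∑ l, d l) (hp : PrimMod S I w)
    {ω : ℂ} {M : ℕ} (hω : IsPrimitiveRoot ω M) {a e b : ℕ} (ha : (q l l : ℂ) = ω ^ a)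
    (he : qf q (δ θ l) d * qf q d (δ θ l) = ω ^ e) (hb : qf q d d = ω ^ b) {m n : ℕ}
    (hm : CartanNum M a e m) (hn : CartanNum M b e n) (hmn : 4 ≤ m * n)
    (h1 : M ∣ e + e + a * (2 * m)) (h2 : (b + e * m + a * (m * m)) % M = b % M)
    (h3 : M ∣ e + e + b * (2 * n)) (h4 : (a + e * n + b * (n * n)) % M = a % M) : w ∈ I := by
  by_contra hwI
  have hf := finiteRootSystem_pair hI hGK hAAH l hw hd hp hwI
  have ht := pairMat_tri q (δ θ l) d
  rw [he, hb, qf_delta, ha] at ht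
  exact ht.not_finite hω hm hn hmn h1 h2 h3 h4 hf

lemma qf_ik_self (hq : qtil q i k = 1) :
    qf q (δ θ i + δ θ k) (δ θ i + δ θ k) = q i i * q k k := by
  simp only [qf_add_left, qf_add_right, qf_delta]
  rw [qtil] at hq
  linear_combination (q i i : ℂ) * q k k * hq

lemma qf_i_ik (hq : qtil q i k = 1) :
    qf q (δ θ i) (δ θ i + δ θ k) * qf q (δ θ i + δ θ k) (δ θ i) = (q i i : ℂ) ^ 2 := by
  simp only [qf_add_left, qf_add_right, qf_delta]
  rw [qtil] at hq
  linear_combination (q i i : ℂ) ^ 2 * hq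

lemma qf_x6_self (hq : qtil q i k = 1) :
    qf q (δ θ i + δ θ j + (δ θ i + δ θ j + (δ θ k + δ θ j)))
      (δ θ i + δ θ j + (δ θ i + δ θ j + (δ θ k + δ θ j)))
      = (q i i : ℂ) ^ 4 * q j j ^ 9 * q k k * qtil q i j ^ 6 * qtil q j k ^ 3 := by
  rw [← mul_one (_ * _), ← one_pow 2, ← hq]
  simp only [qf_add_left, qf_add_right, qf_delta, qtil]
  ring

lemma qf_i_x6 (hq : qtil q i k = 1) :
    qf q (δ θ i) (δ θ i + δ θ j + (δ θ i + δ θ j + (δ θ k + δ θ j)))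
      * qf q (δ θ i + δ θ j + (δ θ i + δ θ j + (δ θ k + δ θ j))) (δ θ i)
      = (q i i : ℂ) ^ 4 * qtil q i j ^ 3 := by
  rw [← mul_one (_ * qtil q i j ^ 3), ← hq]
  simp only [qf_add_left, qf_add_right, qf_delta, qtil]
  ring

lemma qf_pder_x6_self (hq : qtil q i k = 1) :
    qf q (δ θ i + δ θ j + (δ θ i + δ θ j + δ θ k)) (δ θ i + δ θ j + (δ θ i + δ θ j + δ θ k))
      = (q i i : ℂ) ^ 4 * q j j ^ 4 * q k k * qtil q i j ^ 4 * qtil q j k ^ 2 := by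
  rw [← mul_one (_ * _), ← one_pow 2, ← hq]
  simp only [qf_add_left, qf_add_right, qf_delta, qtil]
  ring

lemma qf_j_pder_x6 :
    qf q (δ θ j) (δ θ i + δ θ j + (δ θ i + δ θ j + δ θ k))
      * qf q (δ θ i + δ θ j + (δ θ i + δ θ j + δ θ k)) (δ θ j)
      = (q j j : ℂ) ^ 4 * qtil q i j ^ 2 * qtil q j k := by
  simp only [qf_add_left, qf_add_right, qf_delta, qtil]
  ring

lemma pder_x6_mem (i j k : Fin θ) : pder q j (x6 q i j k)
    ∈ homogD θ (δ θ i + δ θ j + (δ θ i + δ θ j + δ θ k)) := by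
  have h := pder_mem_homogD (q := q) (x6_mem (q := q) i j k) j
  rwa [show δ θ i + δ θ j + (δ θ i + δ θ j + (δ θ k + δ θ j)) - δ θ j
    = δ θ i + δ θ j + (δ θ i + δ θ j + δ θ k) by ext l; simp; omega] at h

/-- The diagram of `x_j` and `∂_j x6` of sixth roots of unity has infinite root system. -/
lemma Tri.not_finite_six {p : Fin 2 → Fin 2 → ℂˣ} {ω : ℂ} (hω : IsPrimitiveRoot ω 6)
    (h : Tri p 0 1 (ω ^ 3) (ω ^ 1) (ω ^ 1)) : ¬ FiniteRootSystem p := by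
  refine not_finiteRootSystem (m := 1) (n := 5) (fun p => Tri p 0 1 (ω ^ 3) (ω ^ 1) (ω ^ 1) ∨
    Tri p 0 1 (ω ^ 3) (ω ^ 5) (ω ^ 5)) (by norm_num) ?_ (Or.inl h)
  rintro p (hp | hp)
  · exact ⟨cij_eq (by simp) (hp.isLeast hω (by decide)),
      cij_eq (by simp) (hp.symm.isLeast hω (by decide)),
      Or.inr (hp.reflect_pow (n := 1) hω (by simp) (by decide) (by decide) (by decide)),
      Or.inl (hp.symm.reflect_pow (n := 5) hω (by simp) (by decide) (by decide) (by decide)).symm⟩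
  · exact ⟨cij_eq (by simp) (hp.isLeast hω (by decide)),
      cij_eq (by simp) (hp.symm.isLeast hω (by decide)),
      Or.inl (hp.reflect_pow (n := 1) hω (by simp) (by decide) (by decide) (by decide)),
      Or.inr (hp.symm.reflect_pow (n := 5) hω (by simp) (by decide) (by decide) (by decide)).symm⟩

lemma x6_mem_of_six (hI : IsPreNicholsIdeal S I) (hGK : FinGK I) (hAAH : AAH) {ω : ℂ}
    (hω : IsPrimitiveRoot ω 6) {τ : ℕ} (hτ : τ = 5 ∨ τ = 2) (hii : (q i i : ℂ) = ω ^ 2)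
    (hjj : (q j j : ℂ) = ω ^ 3) (hkk : (q k k : ℂ) = ω ^ 3) (hij : qtil q i j = ω ^ τ)
    (hjk : qtil q j k = ω ^ 3) (hik : qtil q i k = 1) :
    (q j j : ℂ) = -1 ∧ gen θ j * gen θ j ∈ I ∧ x2 q i k ∈ I ∧ x6 q i j k ∈ I := by
  have h3 : ω ^ 3 = -1 := by
    have h1 : (ω ^ 3 - 1) * (ω ^ 3 + 1) = 0 := by linear_combination hω.pow_eq_one
    have h2 : ω ^ 3 ≠ 1 := fun h => by
      have := (hω.pow_eq_one_iff_dvd 3).1 h; omega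
    rcases mul_eq_zero.1 h1 with h | h
    · exact absurd (by linear_combination h) h2
    · linear_combination h
  have hj1 : (q j j : ℂ) = -1 := hjj.trans h3
  have hsq : gen θ j * gen θ j ∈ I := by
    refine sq_mem_ideal hI hGK hAAH i hj1 ?_
    rw [hij, ← pow_mul, Ne, hω.pow_eq_one_iff_dvd]
    omega
  have hx2 : x2 q i k ∈ I := by
    refine mem_of_tri (a := 2) (e := 4) (b := 5) (m := 1) (n := 4) hI hGK hAAH i (x2_mem i k) ?_
      (x2_primMod S I i k hik) hω hii ?_ ?_ (by decide) (by decide) (by decide) (by decide)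
      (by decide) (by decide) (by decide)
    · simp [Finset.sum_add_distrib, δ]
    · rw [qf_i_ik hik, hii, ← pow_mul]
    · rw [qf_ik_self hik, hii, hkk, ← pow_add]
  obtain ⟨hp, hpu⟩ := x6_primMod (S := S) hI hj1 hsq hx2 hik (by
    rw [hii, hij, hjk, ← pow_mul, ← pow_add, ← pow_add,
      pow_eq_pow_of_modEq hω (b := 3) (by omega), h3]
    norm_num)
  have hF : pder q j (x6 q i j k) ∈ I := by
    by_contra hFI
    have hf := finiteRootSystem_pair hI hGK hAAH j (pder_x6_mem i j k)
      (by simp [Finset.sum_add_distrib, δ]) hp hFI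
    have ht := pairMat_tri q (δ θ j) (δ θ i + δ θ j + (δ θ i + δ θ j + δ θ k))
    rw [qf_j_pder_x6, qf_pder_x6_self hik, qf_delta, hii, hjj, hkk, hij, hjk] at ht
    simp only [← pow_mul, ← pow_add] at ht
    rw [pow_eq_pow_of_modEq hω (a := 3 * 4 + τ * 2 + 3) (b := 1) (by omega),
      pow_eq_pow_of_modEq hω (a := 2 * 4 + 3 * 4 + 3 + τ * 4 + 3 * 2) (b := 1) (by omega)] at ht
    exact ht.not_finite_six hω hf
  refine ⟨hj1, hsq, hx2, ?_⟩
  have hb : qf q (δ θ i + δ θ j + (δ θ i + δ θ j + (δ θ k + δ θ j)))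
      (δ θ i + δ θ j + (δ θ i + δ θ j + (δ θ k + δ θ j))) = ω ^ 5 := by
    rw [qf_x6_self hik, hii, hjj, hkk, hij, hjk]
    simp only [← pow_mul, ← pow_add]
    exact pow_eq_pow_of_modEq hω (by omega)
  rcases hτ with rfl | rfl
  · refine mem_of_tri (a := 2) (e := 5) (b := 5) (m := 2) (n := 5) hI hGK hAAH i (x6_mem i j k) ?_
      (hpu hF) hω hii ?_ hb (by decide) (by decide) (by decide) (by decide)
      (by decide) (by decide) (by decide)
    · simp [Finset.sum_add_distrib, δ]
    · rw [qf_i_x6 hik, hii, hij, ← pow_mul, ← pow_mul, ← pow_add]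
      exact pow_eq_pow_of_modEq hω (by decide)
  · refine mem_of_tri (a := 2) (e := 2) (b := 5) (m := 2) (n := 2) hI hGK hAAH i (x6_mem i j k) ?_
      (hpu hF) hω hii ?_ hb (by decide) (by decide) (by decide) (by decide)
      (by decide) (by decide) (by decide)
    · simp [Finset.sum_add_distrib, δ]
    · rw [qf_i_x6 hik, hii, hij, ← pow_mul, ← pow_mul, ← pow_add]
      exact pow_eq_pow_of_modEq hω (by decide)

lemma x6_mem_of_ten (hI : IsPreNicholsIdeal S I) (hGK : FinGK I) (hAAH : AAH) {ω : ℂ}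
    (hω : IsPrimitiveRoot ω 10) (hii : (q i i : ℂ) = ω ^ 1)
    (hjj : (q j j : ℂ) = -1) (hkk : (q k k : ℂ) = ω ^ 8) (hij : qtil q i j = ω ^ 8)
    (hjk : qtil q j k = ω ^ 2) (hik : qtil q i k = 1) :
    gen θ j * gen θ j ∈ I ∧ x2 q i k ∈ I ∧ x6 q i j k ∈ I := by
  have hsq : gen θ j * gen θ j ∈ I := by
    refine sq_mem_ideal hI hGK hAAH i hjj ?_
    rw [hij, ← pow_mul, Ne, hω.pow_eq_one_iff_dvd]
    omega
  have hx2 : x2 q i k ∈ I := by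
    refine mem_of_tri (a := 1) (e := 2) (b := 9) (m := 8) (n := 2) hI hGK hAAH i (x2_mem i k) ?_
      (x2_primMod S I i k hik) hω hii ?_ ?_ (by decide) (by decide) (by decide) (by decide)
      (by decide) (by decide) (by decide)
    · simp [Finset.sum_add_distrib, δ]
    · rw [qf_i_ik hik, hii, ← pow_mul]
    · rw [qf_ik_self hik, hii, hkk, ← pow_add]
  refine ⟨hsq, hx2, x6_mem_of_x4 hI ?_⟩
  have hp : PrimMod S I (x4 q i j k) := x4_primMod hI hjj hsq hx2 hik (by
    rw [hij, hjk, ← pow_add]; exact hω.pow_eq_one)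
  refine mem_of_tri (a := 1) (e := 8) (b := 9) (m := 2) (n := 8) hI hGK hAAH i (x4_mem i j k) ?_
    hp hω hii ?_ ?_ (by decide) (by decide) (by decide) (by decide)
    (by decide) (by decide) (by decide)
  · simp [Finset.sum_add_distrib, δ]
  · have : qf q (δ θ i) (δ θ i + δ θ j + (δ θ k + δ θ j))
        * qf q (δ θ i + δ θ j + (δ θ k + δ θ j)) (δ θ i)
        = (q i i : ℂ) ^ 2 * qtil q i j ^ 2 * qtil q i k := by
      simp only [qf_add_left, qf_add_right, qf_delta, qtil]
      ring
    rw [this, hii, hij, hik, mul_one, ← pow_mul, ← pow_mul, ← pow_add]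
    exact pow_eq_pow_of_modEq hω (by decide)
  · have : qf q (δ θ i + δ θ j + (δ θ k + δ θ j)) (δ θ i + δ θ j + (δ θ k + δ θ j))
        = (q i i : ℂ) * q j j ^ 4 * q k k * qtil q i j ^ 2 * qtil q j k ^ 2 * qtil q i k := by
      simp only [qf_add_left, qf_add_right, qf_delta, qtil]
      ring
    rw [this, hii, hij, hik, hjk, hkk, hjj, mul_one, show (-1 : ℂ) ^ 4 = 1 by norm_num, mul_one]
    simp only [← pow_mul, ← pow_add]
    exact pow_eq_pow_of_modEq hω (by decide)

lemma x6_mem_of_neg_one (hI : IsPreNicholsIdeal S I) (hGK : FinGK I) (hAAH : AAH)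
    (hii : (q i i : ℂ) = -1) (hjj : (q j j : ℂ) = -1) (hkk : (q k k : ℂ) = -1)
    (hjk : qtil q j k = -qtil q i j) (hω : IsPrimitiveRoot (qtil q j k) 3)
    (hik : qtil q i k = 1) :
    gen θ j * gen θ j ∈ I ∧ x2 q i k ∈ I ∧ x6 q i j k ∈ I := by
  have hij : qtil q i j = -qtil q j k := by rw [hjk, neg_neg]
  set s := qtil q j k with hs
  have h3 : s ^ 3 = 1 := hω.pow_eq_one
  have h2 : s ^ 2 ≠ 1 := by
    rw [Ne, hω.pow_eq_one_iff_dvd]; omega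
  have hn : -s ^ 2 ≠ 1 := fun h => by
    have : (-s ^ 2) ^ 3 = 1 := by rw [h]; norm_num
    have h' : (-1 : ℂ) = 1 := by linear_combination this + (s ^ 3 + 1) * h3
    norm_num at h'
  have hsq : gen θ j * gen θ j ∈ I := by
    refine sq_mem_ideal hI hGK hAAH i hjj ?_
    rwa [hij, neg_sq]
  have hsqi : gen θ i * gen θ i ∈ I := by
    refine sq_mem_ideal hI hGK hAAH j hii ?_
    rwa [qtil_comm, hij, neg_sq]
  have hx2 : x2 q i k ∈ I := by
    refine mem_of_qf_eq_one hI hGK hAAH j (x2_mem i k) ?_ (x2_primMod S I i k hik) ?_ ?_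
    · simp [Finset.sum_add_distrib, δ]
    · rw [qf_ik_self hik, hii, hkk]; norm_num
    · have : qf q (δ θ j) (δ θ i + δ θ k) * qf q (δ θ i + δ θ k) (δ θ j)
          = qtil q i j * qtil q j k := by
        simp only [qf_add_left, qf_add_right, qf_delta, qtil]
        ring
      rw [this, hij, ← hs]
      convert hn using 1
      ring
  refine ⟨hsq, hx2, ?_⟩
  refine mem_of_qf_eq_one hI hGK hAAH i (x6_mem i j k) ?_
    (x6_primMod_of_sq hI hii hjj hsqi hsq hx2 hik ?_) ?_ ?_
  · simp [Finset.sum_add_distrib, δ]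
  · rw [hij, ← hs]; linear_combination h3
  · rw [qf_x6_self hik, hii, hjj, hkk, hij, ← hs]
    linear_combination (s ^ 6 + s ^ 3 + 1) * h3
  · rw [qf_i_x6 hik, hii, hij]
    intro h
    have h' : (-1 : ℂ) = 1 := by linear_combination h + h3
    norm_num at h'
end

/-! ### A family with finite-dimensional Nichols algebra only at special parameters -/

lemma pder_x2 (c : Fin θ) {a b : Fin θ} (hab : a ≠ b) :
    pder q c (x2 q a b) = if c = b then (1 - qtil q a b) • gen θ a else 0 := by
  rw [x2, map_sub, map_smul, pder_gen_mul, pder_gen_mul, pder_gen, pder_gen]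
  rcases eq_or_ne b c with rfl | hb
  · simp [hab, twist_gen, qf_delta, qtil, sub_smul, smul_smul]
  · rcases eq_or_ne a c with rfl | ha
    · simp [hb, hb.symm, twist_gen, qf_delta]
    · simp [ha, hb, hb.symm]

section
variable {i j k : Fin θ}

lemma exists_primitiveRoot_of_finite {p : Fin 2 → Fin 2 → ℂˣ} (hf : FiniteRootSystem p) {a b : ℂ}
    {e : ℕ} (h : Tri p 0 1 a (a ^ e) b) (he : e ≠ 0) (ha : a ≠ 1) : ∃ N, N ≠ 0 ∧ IsPrimitiveRoot a N := by
  obtain ⟨n, hn⟩ := hf.nonempty_cSet (Reach.refl p 0) (i := 0) (j := 1) (by simp)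
  rw [mem_cSet (by rw [h.fst]; exact ha), h.fst, h.edge, ← pow_add] at hn
  have h' : ∃ m, m ≠ 0 ∧ a ^ m = 1 := by
    rcases hn with hn | hn
    · exact ⟨_, n.succ_ne_zero, hn⟩
    · exact ⟨_, by omega, hn⟩
  obtain ⟨m, hm, hm'⟩ := h'
  exact ⟨orderOf a, (orderOf_pos_iff.2 (isOfFinOrder_iff_pow_eq_one.2 ⟨m, Nat.pos_of_ne_zero hm,
    hm'⟩)).ne', IsPrimitiveRoot.orderOf a⟩

lemma primitiveRoot_five_or_six (hconn : (dynkin q).Connected) (hfin : FiniteRootSystem q)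
    (hGK : FinGK (rad q)) (hAAH : AAH) (hij : i ≠ j) (hik : i ≠ k) (hjk : j ≠ k) {a : ℂ}
    (hii : (q i i : ℂ) * a = -1) (hjj : (q j j : ℂ) = -1) (hkk : (q k k : ℂ) * a ^ 3 = 1)
    (tij : qtil q i j = a ^ 2) (tjk : qtil q j k = a ^ 3) (tik : qtil q i k = 1)
    (ht : qtil q i j ≠ 1) : IsPrimitiveRoot a 5 ∨ IsPrimitiveRoot a 6 := by
  have ha : a ≠ 1 := fun h => ht (by rw [tij, h, one_pow])
  have hc : 1 - qtil q j i ≠ 0 := by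
    rw [qtil_comm]; exact sub_ne_zero.2 ht.symm
  have hself : qf q (δ θ j + δ θ i) (δ θ j + δ θ i) = a := by
    have : qf q (δ θ j + δ θ i) (δ θ j + δ θ i) = (q i i : ℂ) * q j j * qtil q i j := by
      simp only [qf_add_left, qf_add_right, qf_delta, qtil]
      ring
    rw [this, hjj, tij]
    linear_combination -a * hii
  have hf := finiteRootSystem_dual hGK hAAH (x2_mem (q := q) j i) (gen_mem_homogD k) i k [j] []
    (by simp [degW_cons, add_comm]) (by simp [degW_cons])
    (by simp [pder_x2 _ hij.symm, pder_gen, hij.symm, hjk.symm]) hc one_ne_zero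
    (by simp [pders_cons, pder_x2 _ hij.symm, pder_gen])
    (by simp [pders_cons, pder_gen, hik.symm])
    (by simp [pders_cons, pder_x2 _ hij.symm, hik.symm])
    (by simp [pders_cons, pder_gen])
  have hT := pairMat_tri q (δ θ j + δ θ i) (δ θ k)
  have hedge : qf q (δ θ j + δ θ i) (δ θ k) * qf q (δ θ k) (δ θ j + δ θ i) = a ^ 3 := by
    rw [← tjk, ← mul_one (qtil q j k), ← tik]
    simp only [qf_add_left, qf_add_right, qf_delta, qtil]
    ring
  rw [hself, hedge, qf_delta] at hT
  obtain ⟨N, hN0, hN⟩ := exists_primitiveRoot_of_finite hf hT three_ne_zero ha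
  have hN2 : ¬ N ∣ 2 := fun h => ht (by rw [tij]; exact (hN.pow_eq_one_iff_dvd 2).2 h)
  have hN3 : N ≠ 3 := by
    rintro rfl
    rw [hN.pow_eq_one, mul_one] at hkk
    have : Nontrivial (Fin θ) := ⟨_, _, hij⟩
    obtain ⟨l, hl⟩ := hconn.preconnected.exists_adj_of_nontrivial k
    rw [dynkin, SimpleGraph.fromRel_adj] at hl
    have := hfin.qtil_eq_one (Reach.refl q k) hl.1.symm hkk
    rw [qtil_comm l k, this] at hl
    simp at hl
  have hN4 : N ≠ 4 := by
    rintro rfl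
    have h2 : a ^ 2 = -1 := by
      have h : (a ^ 2 - 1) * (a ^ 2 + 1) = 0 := by linear_combination hN.pow_eq_one
      rw [tij] at ht
      linear_combination (mul_eq_zero.1 h).resolve_left (sub_ne_zero.2 ht)
    have hc' : 1 - qtil q j k ≠ 0 := by
      rw [tjk, sub_ne_zero]
      intro h
      have := (hN.pow_eq_one_iff_dvd 3).1 h.symm
      omega
    have hf' := finiteRootSystem_dual hGK hAAH (x2_mem (q := q) j i) (x2_mem (q := q) j k)
      i k [j] [j] (by simp [degW_cons, add_comm]) (by simp [degW_cons, add_comm])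
      (by simp [pder_x2 _ hij.symm, pder_x2 _ hjk, hij.symm, hjk]) hc hc'
      (by simp [pders_cons, pder_x2 _ hij.symm, pder_gen])
      (by simp [pders_cons, pder_x2 _ hjk, hik])
      (by simp [pders_cons, pder_x2 _ hij.symm, hik.symm])
      (by simp [pders_cons, pder_x2 _ hjk, pder_gen])
    have hT' := pairMat_tri q (δ θ j + δ θ i) (δ θ j + δ θ k)
    have hedge' : qf q (δ θ j + δ θ i) (δ θ j + δ θ k) * qf q (δ θ j + δ θ k) (δ θ j + δ θ i)
        = (q j j : ℂ) ^ 2 * qtil q i j * qtil q j k * qtil q i k := by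
      simp only [qf_add_left, qf_add_right, qf_delta, qtil]
      ring
    have hself' : qf q (δ θ j + δ θ k) (δ θ j + δ θ k) = (q j j : ℂ) * q k k * qtil q j k := by
      simp only [qf_add_left, qf_add_right, qf_delta, qtil]
      ring
    rw [hself, hedge', hself', hjj, tij, tjk, tik, show (-1 : ℂ) * q k k * a ^ 3 = a ^ 2 by
        linear_combination -hkk - h2, show (-1 : ℂ) ^ 2 * a ^ 2 * a ^ 3 * 1 = a ^ 1 by
        linear_combination a * hN.pow_eq_one] at hT'
    nth_rw 1 [← pow_one a] at hT'
    have hT'' := hT'.symm.reflect_pow (n := 1) (e' := 3) (b' := 0) hN (by simp) (by decide)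
      (by decide) (by decide)
    have := hT''.symm.edge_eq_one (by simp) (pow_zero a) hf' ((Reach.refl _ 0).step 1)
    have := (hN.pow_eq_one_iff_dvd 3).1 this
    omega
  have hN7 : N < 7 := by
    by_contra! hlt
    obtain ⟨n, rfl⟩ := Nat.exists_eq_add_of_le hlt
    have hb : (q k k : ℂ) = a ^ (4 + n) := by
      have h : a ^ 3 * a ^ (4 + n) = 1 := by
        rw [← pow_add, ← hN.pow_eq_one]; congr 1; omega
      linear_combination (-(q k k : ℂ)) * h + a ^ (4 + n) * hkk
    have hnd : ∀ m, 0 < m → m < 7 + n → ¬ 7 + n ∣ m := fun m => Nat.not_dvd_of_pos_of_lt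
    rw [hb] at hT
    nth_rw 1 [← pow_one a] at hT
    refine hT.not_finite (m := 4 + n) (n := 1) hN ⟨hnd _ (by omega) (by omega), Or.inr ?_, ?_⟩
      ⟨hnd _ (by omega) (by omega), Or.inr ?_, ?_⟩ (by omega) ?_ ?_ ?_ ?_ hf
    · exact ⟨1, by ring⟩
    · exact fun l hl => ⟨hnd _ (by omega) (by omega), hnd _ (by omega) (by omega)⟩
    · exact ⟨1, by ring⟩
    · intro l hl
      obtain rfl : l = 0 := by omega
      exact ⟨hnd _ (by omega) (by omega), hnd _ (by omega) (by omega)⟩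
    · exact ⟨2, by ring⟩
    · rw [show 4 + n + 3 * (4 + n) + 1 * ((4 + n) * (4 + n)) = 4 + n + (7 + n) * (4 + n) by ring]
      exact Nat.add_mul_mod_self_left _ _ _
    · exact ⟨2, by ring⟩
    · rw [show 1 + 3 * 1 + (4 + n) * (1 * 1) = 1 + (7 + n) by ring]
      exact Nat.add_mod_right _ _
  have : N = 5 ∨ N = 6 := by
    have : N ≠ 1 := by rintro rfl; simp at hN2
    have : N ≠ 2 := by rintro rfl; simp at hN2
    omega
  rcases this with rfl | rfl
  · exact Or.inl hN
  · exact Or.inr hN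

end

/-! ### A family with infinite-dimensional Nichols algebra -/

lemma pder_brk_gen (a l : Fin θ) {d : Fin θ → ℕ} {y : TV θ} (hy : y ∈ homogD θ d) :
    pder q l (brk q (δ θ a) d (gen θ a) y)
      = gen θ a * pder q l y - (qf q (δ θ a) d * q l a) • (pder q l y * gen θ a) := by
  rw [brk, map_sub, map_smul, pder_gen_mul, pder_mul, pder_gen, twist_gen, twist_homogD hy, qf_delta]
  rcases eq_or_ne a l with rfl | h
  · simp [smul_smul]; abel
  · simp [h, smul_smul]

section
variable {i j k : Fin θ}

lemma finiteRootSystem_aab (hGK : FinGK (rad q)) (hAAH : AAH) {a b c : Fin θ} (hab : a ≠ b)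
    (hac : a ≠ c) (hbc : b ≠ c) (h1 : 1 + (q a a : ℂ) ≠ 0) (h2 : 1 - qtil q a b ≠ 0)
    (h3 : 1 - q a a * qtil q a b ≠ 0) :
    FiniteRootSystem (pairMat q (δ θ c) (δ θ a + (δ θ a + δ θ b))) := by
  have hx := x2_mem (q := q) a b
  have key : ∀ l, pder q l (brk q (δ θ a) (δ θ a + δ θ b) (gen θ a) (x2 q a b))
      = if l = b then ((1 - qtil q a b) * (1 - q a a * qtil q a b)) • (gen θ a * gen θ a)
        else 0 := by
    intro l
    rw [pder_brk_gen _ _ hx, pder_x2 _ hab]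
    split_ifs with h
    · subst h
      simp only [qf_add_right, qf_delta, mul_smul_comm, smul_mul_assoc, qtil]
      module
    · simp
  refine finiteRootSystem_dual hGK hAAH (gen_mem_homogD c)
    (brk_mem_homogD (q := q) (gen_mem_homogD a) hx) c b [] [a, a] (by simp [degW_cons])
    (by simp only [degW_cons, degW_nil]; abel)
    (by simp [key, hab, pder_gen, hac.symm]) one_ne_zero (mul_ne_zero (mul_ne_zero h2 h3) h1)
    (by simp [pders_cons, pder_gen]) (by simp [pders_cons, key, hbc.symm])
    (by simp [pders_cons, pder_gen, hbc.symm]) ?_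
  simp [pders_cons, key, pder_gen_mul, pder_gen, twist_gen, qf_delta, smul_smul]
  module

/-- The diagram of two elements of the same degree with self-braiding of order at least four. -/
lemma order_le_three {p : Fin 2 → Fin 2 → ℂˣ} (hf : FiniteRootSystem p) {a : ℂ}
    (h : Tri p 0 1 a (a ^ 2) a) : a ^ 2 = 1 ∨ a ^ 3 = 1 := by
  by_cases ha : a = 1
  · simp [ha]
  obtain ⟨N, hN0, hN⟩ := exists_primitiveRoot_of_finite hf h two_ne_zero ha
  suffices hN4 : N < 4 by
    have : N ≠ 1 := by rintro rfl; exact ha (by simpa using hN.pow_eq_one)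
    have : N = 2 ∨ N = 3 := by omega
    rcases this with rfl | rfl
    · exact Or.inl hN.pow_eq_one
    · exact Or.inr hN.pow_eq_one
  by_contra! hlt
  obtain ⟨n, rfl⟩ := Nat.exists_eq_add_of_le hlt
  have hnd : ∀ m, 0 < m → m < 4 + n → ¬ 4 + n ∣ m := fun m => Nat.not_dvd_of_pos_of_lt
  have hC : CartanNum (4 + n) 1 2 (2 + n) :=
    ⟨hnd _ (by omega) (by omega), Or.inr ⟨1, by ring⟩,
      fun l hl => ⟨hnd _ (by omega) (by omega), hnd _ (by omega) (by omega)⟩⟩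
  have hfix : (1 + 2 * (2 + n) + 1 * ((2 + n) * (2 + n))) % (4 + n) = 1 % (4 + n) := by
    rw [show 1 + 2 * (2 + n) + 1 * ((2 + n) * (2 + n)) = 1 + (4 + n) * (2 + n) by ring]
    exact Nat.add_mul_mod_self_left _ _ _
  have h' : Tri p 0 1 (a ^ 1) (a ^ 2) (a ^ 1) := by rwa [pow_one]
  exact h'.not_finite hN hC hC (by nlinarith) ⟨2, by ring⟩ hfix ⟨2, by ring⟩ hfix hf

/-- The element `x_{ijijk}`. -/
def xijijk (q : Fin θ → Fin θ → ℂˣ) (i j k : Fin θ) : TV θ :=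
  brk q (δ θ i) (δ θ j + (δ θ i + (δ θ j + δ θ k))) (gen θ i)
    (brk q (δ θ j) (δ θ i + (δ θ j + δ θ k)) (gen θ j)
      (brk q (δ θ i) (δ θ j + δ θ k) (gen θ i) (x2 q j k)))

/-- The element `x_{jiijk}`. -/
def xjiijk (q : Fin θ → Fin θ → ℂˣ) (i j k : Fin θ) : TV θ :=
  brk q (δ θ j) (δ θ i + (δ θ i + (δ θ j + δ θ k))) (gen θ j)
    (brk q (δ θ i) (δ θ i + (δ θ j + δ θ k)) (gen θ i)
      (brk q (δ θ i) (δ θ j + δ θ k) (gen θ i) (x2 q j k)))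

lemma xijijk_mem (i j k : Fin θ) : xijijk q i j k
    ∈ homogD θ (δ θ i + (δ θ j + (δ θ i + (δ θ j + δ θ k)))) :=
  brk_mem_homogD (gen_mem_homogD i) (brk_mem_homogD (gen_mem_homogD j)
    (brk_mem_homogD (gen_mem_homogD i) (x2_mem j k)))

lemma xjiijk_mem (i j k : Fin θ) : xjiijk q i j k
    ∈ homogD θ (δ θ i + (δ θ j + (δ θ i + (δ θ j + δ θ k)))) := by
  rw [show δ θ i + (δ θ j + (δ θ i + (δ θ j + δ θ k)))
    = δ θ j + (δ θ i + (δ θ i + (δ θ j + δ θ k))) by abel]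
  exact brk_mem_homogD (gen_mem_homogD j) (brk_mem_homogD (gen_mem_homogD i)
    (brk_mem_homogD (gen_mem_homogD i) (x2_mem j k)))

lemma pder_xijijk (l : Fin θ) (hjk : j ≠ k) (hlk : l ≠ k) : pder q l (xijijk q i j k) = 0 := by
  rw [xijijk, pder_brk_gen _ _ (brk_mem_homogD (gen_mem_homogD j)
    (brk_mem_homogD (gen_mem_homogD i) (x2_mem j k))), pder_brk_gen _ _
    (brk_mem_homogD (gen_mem_homogD i) (x2_mem j k)), pder_brk_gen _ _ (x2_mem j k),
    pder_x2 _ hjk]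
  simp [hlk]

lemma pder_xjiijk (l : Fin θ) (hjk : j ≠ k) (hlk : l ≠ k) : pder q l (xjiijk q i j k) = 0 := by
  rw [xjiijk, pder_brk_gen _ _ (brk_mem_homogD (gen_mem_homogD i)
    (brk_mem_homogD (gen_mem_homogD i) (x2_mem j k))), pder_brk_gen _ _
    (brk_mem_homogD (gen_mem_homogD i) (x2_mem j k)), pder_brk_gen _ _ (x2_mem j k),
    pder_x2 _ hjk]
  simp [hlk]

lemma eq_neg_inv_of_qtil (tij : qtil q i j = -1) : (q j i : ℂ) = -(q i j : ℂ)⁻¹ := by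
  have : (q i j : ℂ) * -(q j i : ℂ) = 1 := by
    rw [qtil] at tij
    linear_combination -tij
  rw [← eq_inv_of_mul_eq_one_right this, neg_neg]

lemma pder_xijijk_last (hjk : j ≠ k) (tik : qtil q i k = 1) :
    pder q k (xijijk q i j k)
      = (1 - qtil q j k) • (gen θ i * (gen θ j * x2 q i j
        - (q j i * q j j * qtil q j k) • (x2 q i j * gen θ j))
        - (q i j ^ 2 * q i i : ℂ) • ((gen θ j * x2 q i j
        - (q j i * q j j * qtil q j k) • (x2 q i j * gen θ j)) * gen θ i)) := by
  have hki : (q k i : ℂ) = (q i k : ℂ)⁻¹ := eq_inv_of_mul_eq_one_right tik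
  rw [xijijk, pder_brk_gen _ _ (brk_mem_homogD (gen_mem_homogD j)
    (brk_mem_homogD (gen_mem_homogD i) (x2_mem j k))), pder_brk_gen _ _
    (brk_mem_homogD (gen_mem_homogD i) (x2_mem j k)), pder_brk_gen _ _ (x2_mem j k),
    pder_x2 _ hjk, if_pos rfl]
  simp only [x2, qf_delta, qf_add_right, mul_smul_comm, smul_mul_assoc, mul_sub, sub_mul, mul_assoc,
    hki, qtil]
  match_scalars <;> field_simp

lemma pder_xjiijk_last (hjk : j ≠ k) (tik : qtil q i k = 1) :
    pder q k (xjiijk q i j k)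
      = (1 - qtil q j k) • (gen θ j * (gen θ i * x2 q i j
        - (q i i * q i j : ℂ) • (x2 q i j * gen θ i))
        - (q j i ^ 2 * q j j * qtil q j k) • ((gen θ i * x2 q i j
        - (q i i * q i j : ℂ) • (x2 q i j * gen θ i)) * gen θ j)) := by
  have hki : (q k i : ℂ) = (q i k : ℂ)⁻¹ := eq_inv_of_mul_eq_one_right tik
  rw [xjiijk, pder_brk_gen _ _ (brk_mem_homogD (gen_mem_homogD i)
    (brk_mem_homogD (gen_mem_homogD i) (x2_mem j k))), pder_brk_gen _ _
    (brk_mem_homogD (gen_mem_homogD i) (x2_mem j k)), pder_brk_gen _ _ (x2_mem j k),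
    pder_x2 _ hjk, if_pos rfl]
  simp only [x2, qf_delta, qf_add_right, mul_smul_comm, smul_mul_assoc, mul_sub, sub_mul, mul_assoc,
    hki, qtil]
  match_scalars <;> field_simp

lemma pders_xijijk (hij : i ≠ j) (hjk : j ≠ k) (hjj : (q j j : ℂ) = -1)
    (tij : qtil q i j = -1) (tik : qtil q i k = 1) :
    pders q [k, j, i, i, j] (xijijk q i j k)
      = (2 * (1 - qtil q j k ^ 2) * (1 + q i i) ^ 2 * q i j) • (1 : TV θ) ∧
    pders q [k, j, i, j, i] (xijijk q i j k)
      = (2 * (1 - qtil q j k ^ 2) * (1 - q i i ^ 2)) • (1 : TV θ) := by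
  rw [pders_cons, pders_cons k, pder_xijijk_last hjk tik]
  simp only [x2, pders_cons, pders_nil, map_sub, map_smul, map_add, pder_gen_mul, pder_gen, map_mul,
    twist_gen, qf_delta, if_true, hij, hij.symm, if_false, mul_smul_comm,
    smul_mul_assoc, mul_sub, sub_mul, mul_add, add_mul, mul_one, mul_zero, zero_mul,
    add_zero, zero_add, smul_zero, sub_zero, zero_sub, map_neg, map_zero, mul_assoc, hjj,
    pder_one, smul_neg, eq_neg_inv_of_qtil tij]
  constructor <;> match_scalars <;> field_simp <;> ring

lemma pders_xjiijk (hij : i ≠ j) (hjk : j ≠ k) (hjj : (q j j : ℂ) = -1)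
    (tij : qtil q i j = -1) (tik : qtil q i k = 1) :
    pders q [k, j, i, i, j] (xjiijk q i j k)
      = (2 * (1 - qtil q j k) ^ 2 * (1 + q i i) ^ 2) • (1 : TV θ) ∧
    pders q [k, j, i, j, i] (xjiijk q i j k)
      = (2 * (1 - qtil q j k ^ 2) * (1 + q i i) ^ 2 * q j i) • (1 : TV θ) := by
  rw [pders_cons, pders_cons k, pder_xjiijk_last hjk tik]
  simp only [x2, pders_cons, pders_nil, map_sub, map_smul, map_add, pder_gen_mul, pder_gen, map_mul,
    twist_gen, qf_delta, if_true, hij, hij.symm, if_false, mul_smul_comm,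
    smul_mul_assoc, mul_sub, sub_mul, mul_add, add_mul, mul_one, mul_zero, zero_mul,
    add_zero, zero_add, smul_zero, sub_zero, zero_sub, map_neg, map_zero, mul_assoc, hjj,
    pder_one, smul_neg, eq_neg_inv_of_qtil tij]
  constructor <;> match_scalars <;> field_simp <;> ring

/-- Two independent elements of degree `2 α_i + 2 α_j + α_k` in the Nichols algebra. -/
lemma finiteRootSystem_ijijk (hGK : FinGK (rad q)) (hAAH : AAH) (hij : i ≠ j) (hik : i ≠ k)
    (hjk : j ≠ k) (hjj : (q j j : ℂ) = -1) (tij : qtil q i j = -1) (tik : qtil q i k = 1)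
    (h1 : 1 - qtil q j k ^ 2 ≠ 0) (h2 : 1 + (q i i : ℂ) ≠ 0) (h3 : 1 + q i i * qtil q j k ≠ 0) :
    FiniteRootSystem (pairMat q (δ θ i + (δ θ j + (δ θ i + (δ θ j + δ θ k))))
      (δ θ i + (δ θ j + (δ θ i + (δ θ j + δ θ k))))) := by
  obtain ⟨e11, e21⟩ := pders_xijijk hij hjk hjj tij tik
  obtain ⟨e12, e22⟩ := pders_xjiijk hij hjk hjj tij tik
  have hy₀ := xijijk_mem (q := q) i j k
  have hy₁ := xjiijk_mem (q := q) i j k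
  generalize hm11 : 2 * (1 - qtil q j k ^ 2) * (1 + q i i) ^ 2 * q i j = m11 at e11
  generalize hm21 : 2 * (1 - qtil q j k ^ 2) * (1 - (q i i : ℂ) ^ 2) = m21 at e21
  generalize hm12 : 2 * (1 - qtil q j k) ^ 2 * (1 + (q i i : ℂ)) ^ 2 = m12 at e12
  generalize hm22 : 2 * (1 - qtil q j k ^ 2) * (1 + q i i) ^ 2 * q j i = m22 at e22
  have hdet : m11 * m22 - m21 * m12 ≠ 0 := by
    have h4 : 1 - qtil q j k ≠ 0 := fun h => h1 (by linear_combination (1 + qtil q j k) * h)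
    have : m11 * m22 - m21 * m12 = -8 * (1 - qtil q j k ^ 2) * (1 - qtil q j k)
        * (1 + q i i) ^ 3 * (1 + q i i * qtil q j k) := by
      rw [← hm11, ← hm21, ← hm12, ← hm22]
      have tij' : (q i j : ℂ) * q j i = -1 := tij
      linear_combination 4 * (1 - qtil q j k ^ 2) ^ 2 * (1 + (q i i : ℂ)) ^ 4 * tij'
    rw [this]
    simp [h1, h2, h3, h4]
  have hw : ∀ l, l ∈ [j, i, i, j] ∨ l ∈ [j, i, j, i] → l ≠ k := by
    intro l hl
    have : l = i ∨ l = j := by simp at hl; tauto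
    rcases this with rfl | rfl <;> assumption
  refine finiteRootSystem_dual hGK hAAH
    (Submodule.sub_mem _ (Submodule.smul_mem _ m22 hy₀) (Submodule.smul_mem _ m21 hy₁))
    (Submodule.sub_mem _ (Submodule.smul_mem _ m11 hy₁) (Submodule.smul_mem _ m12 hy₀)) k k
    [j, i, i, j] [j, i, j, i] ?_ ?_ ?_ hdet hdet ?_ ?_ ?_ ?_
  · simp only [degW_cons, degW_nil]; abel
  · simp only [degW_cons, degW_nil]; abel
  · intro l hl
    simp [pder_xijijk l hjk (hw l hl), pder_xjiijk l hjk (hw l hl)]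
  · rw [map_sub, map_smul, map_smul, e11, e12]; module
  · rw [map_sub, map_smul, map_smul, e11, e12]; module
  · rw [map_sub, map_smul, map_smul, e21, e22]; module
  · rw [map_sub, map_smul, map_smul, e21, e22]; module

lemma not_finGK_of_twelve (hGK : FinGK (rad q)) (hAAH : AAH) (hij : i ≠ j) (hik : i ≠ k)
    (hjk : j ≠ k) {p : ℂ} (hp : IsPrimitiveRoot p 12) (hii : (q i i : ℂ) = p ^ 8)
    (hjj : (q j j : ℂ) = p ^ 6) (tij : qtil q i j = p ^ 6) (tjk : qtil q j k = p ^ 1)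
    (tik : qtil q i k = 1) : False := by
  have h6 : p ^ 6 = -1 := by
    have h : (p ^ 6 - 1) * (p ^ 6 + 1) = 0 := by linear_combination hp.pow_eq_one
    have h' : p ^ 6 ≠ 1 := hp.pow_ne_one_of_pos_of_lt (by norm_num) (by norm_num)
    linear_combination (mul_eq_zero.1 h).resolve_left (sub_ne_zero.2 h')
  have hsub : ∀ m, 0 < m → m < 12 → 1 - p ^ m ≠ 0 := fun m h0 h12 =>
    sub_ne_zero.2 (hp.pow_ne_one_of_pos_of_lt h0.ne' h12).symm
  have hadd : ∀ m, ¬ 12 ∣ m + 6 → 1 + p ^ m ≠ 0 := fun m hm h =>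
    hm ((hp.pow_eq_one_iff_dvd _).1 (by rw [pow_add, h6]; linear_combination -h))
  have hf := finiteRootSystem_ijijk hGK hAAH hij hik hjk (hjj.trans h6) (tij.trans h6) tik
    (by rw [tjk, ← pow_mul]; exact hsub _ (by norm_num) (by norm_num))
    (by rw [hii]; exact hadd _ (by decide))
    (by rw [hii, tjk, ← pow_add]; exact hadd _ (by decide))
  have hT := pairMat_tri q (δ θ i + (δ θ j + (δ θ i + (δ θ j + δ θ k))))
    (δ θ i + (δ θ j + (δ θ i + (δ θ j + δ θ k))))
  have hself : qf q (δ θ i + (δ θ j + (δ θ i + (δ θ j + δ θ k))))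
      (δ θ i + (δ θ j + (δ θ i + (δ θ j + δ θ k)))) = q k k * p ^ 10 := by
    have : qf q (δ θ i + (δ θ j + (δ θ i + (δ θ j + δ θ k))))
        (δ θ i + (δ θ j + (δ θ i + (δ θ j + δ θ k))))
        = (q i i : ℂ) ^ 4 * q j j ^ 4 * qtil q i j ^ 4 * qtil q j k ^ 2 * q k k
          * qtil q i k ^ 2 := by
      simp only [qf_add_left, qf_add_right, qf_delta, qtil]
      ring
    rw [this, hii, hjj, tij, tjk, tik, one_pow, mul_one, mul_comm (q k k : ℂ)]
    simp only [← pow_mul, ← pow_add]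
    rw [pow_eq_pow_of_modEq hp (b := 10) (by decide)]
  rw [hself, ← sq] at hT
  obtain ⟨n, hn, hkk⟩ : ∃ n, (n = 2 ∨ n = 8 ∨ n = 10 ∨ n = 6) ∧ (q k k : ℂ) = p ^ n := by
    have h := order_le_three hf hT
    obtain ⟨m, hm, hpm⟩ := hp.eq_pow_of_pow_eq_one (ξ := q k k * p ^ 10) (by
      rcases h with h | h
      · rw [pow_mul _ 2 6, h, one_pow]
      · rw [pow_mul _ 3 4, h, one_pow])
    rw [← hpm, ← pow_mul, ← pow_mul, hp.pow_eq_one_iff_dvd, hp.pow_eq_one_iff_dvd] at h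
    refine ⟨m + 2, by omega, ?_⟩
    linear_combination -(q k k : ℂ) * hp.pow_eq_one - p ^ 2 * hpm
  have hself' : ∀ a b, qf q (δ θ a + (δ θ a + δ θ b)) (δ θ a + (δ θ a + δ θ b))
      = (q a a : ℂ) ^ 4 * q b b * qtil q a b ^ 2 := fun a b => by
    simp only [qf_add_left, qf_add_right, qf_delta, qtil]
    ring
  have hedge : ∀ a b c, qf q (δ θ c) (δ θ a + (δ θ a + δ θ b))
      * qf q (δ θ a + (δ θ a + δ θ b)) (δ θ c) = qtil q c a ^ 2 * qtil q c b := fun a b c => by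
    simp only [qf_add_left, qf_add_right, qf_delta, qtil]
    ring
  by_cases hn6 : n = 6
  · subst hn6
    have hf' := finiteRootSystem_aab hGK hAAH hij hik hjk (by rw [hii]; exact hadd _ (by decide))
      (by rw [tij]; exact hsub _ (by norm_num) (by norm_num))
      (by rw [hii, tij, ← pow_add, pow_eq_pow_of_modEq hp (b := 2) (by decide)]
          exact hsub _ (by norm_num) (by norm_num))
    have hT' := pairMat_tri q (δ θ k) (δ θ i + (δ θ i + δ θ j))
    rw [hself', hedge, qtil_comm k i, qtil_comm k j, hii, hjj, tij, tjk, tik, qf_delta, hkk,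
      one_pow, one_mul, ← pow_mul, ← pow_mul, ← pow_add, ← pow_add,
      pow_eq_pow_of_modEq hp (a := 8 * 4 + 6 + 6 * 2) (b := 2) (by decide)] at hT'
    have hT₁ := hT'.reflect_pow (n := 1) (e' := 11) (b' := 9) hp (by simp) (by decide)
      (by decide) (by decide)
    have hT₂ := hT₁.symm.reflect_pow (n := 3) (e' := 7) (b' := 0) hp (by simp) (by decide)
      (by decide) (by decide)
    have := hT₂.symm.edge_eq_one (by simp) (pow_zero p) hf' (((Reach.refl _ 0).step 0).step 1)
    exact hp.pow_ne_one_of_pos_of_lt (by norm_num) (by norm_num) this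
  · have hf' := finiteRootSystem_aab hGK hAAH hjk.symm hik.symm hij.symm
      (by rw [hkk]; exact hadd _ (by omega))
      (by rw [qtil_comm, tjk]; exact hsub _ (by norm_num) (by norm_num))
      (by rw [hkk, qtil_comm, tjk, ← pow_add]; exact hsub _ (by omega) (by omega))
    have hT' := pairMat_tri q (δ θ i) (δ θ k + (δ θ k + δ θ j))
    rw [hself', hedge, qtil_comm k j, hjj, tij, tjk, tik, qf_delta, hii, hkk,
      one_pow, one_mul, ← pow_mul, ← pow_mul, ← pow_add, ← pow_add] at hT'
    by_cases hn10 : n = 10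
    · rw [pow_eq_pow_of_modEq hp (a := n * 4 + 6 + 1 * 2) (b := 0) (by omega)] at hT'
      have := hT'.symm.edge_eq_one (by simp) (pow_zero p) hf' (Reach.refl _ 0)
      exact hp.pow_ne_one_of_pos_of_lt (by norm_num) (by norm_num) this
    · rw [pow_eq_pow_of_modEq hp (a := n * 4 + 6 + 1 * 2) (b := 4) (by omega)] at hT'
      have hT₁ := hT'.reflect_pow (n := 2) (e' := 10) (b' := 0) hp (by simp) (by decide)
        (by decide) (by decide)
      have := hT₁.symm.edge_eq_one (by simp) (pow_zero p) hf' ((Reach.refl _ 0).step 0)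
      exact hp.pow_ne_one_of_pos_of_lt (by norm_num) (by norm_num) this

end

end

/-! ### The main theorem -/

lemma _root_.IsPrimitiveRoot.neg_of_odd {x : ℂ} {n : ℕ} (h : IsPrimitiveRoot x n) (hn : Odd n) :
    IsPrimitiveRoot (-x) (2 * n) := by
  have h2 : IsPrimitiveRoot (-1 : ℂ) 2 := IsPrimitiveRoot.neg_one 0 two_ne_zero.symm
  rw [h.eq_orderOf, h2.eq_orderOf, ← Commute.orderOf_mul_eq_mul_orderOf_of_coprime
    (Commute.all _ _) (by rw [← h.eq_orderOf, ← h2.eq_orderOf]; exact hn.coprime_two_left),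
    neg_one_mul]
  exact IsPrimitiveRoot.orderOf _

lemma isPrimitiveRoot_twelve {p : ℂ} (h6 : p ^ 6 = -1) (h4 : p ^ 4 ≠ 1) : IsPrimitiveRoot p 12 := by
  have h12 : p ^ 12 = 1 := by linear_combination (p ^ 6 - 1) * h6
  have hd : orderOf p ∣ 12 := orderOf_dvd_of_pow_eq_one h12
  have hd6 : ¬ orderOf p ∣ 6 := fun h => by
    rw [orderOf_dvd_iff_pow_eq_one, h6] at h
    norm_num at h
  have hd4 : ¬ orderOf p ∣ 4 := fun h => h4 (orderOf_dvd_iff_pow_eq_one.1 h)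
  have h : orderOf p = 12 := by
    have := Nat.le_of_dvd (by norm_num) hd
    interval_cases orderOf p <;> omega
  exact h ▸ IsPrimitiveRoot.orderOf p

/-- Lemma 3.2: under any of the four listed conditions (a)–(d),
`[[x_{ij}, x_{ijk}]_c, x_j]_c = 0` in every finite-GKdim pre-Nichols algebra of `q`. -/
theorem statement_6 (θ : ℕ) (q : Fin θ → Fin θ → ℂˣ) (S : BraidedStr θ q)
    (hconn : (dynkin q).Connected)
    (hfd : FiniteDimensional ℂ (TV θ ⧸ Jq S))
    (hAAH : AAH)
    (I : Submodule ℂ (TV θ)) (hI : IsPreNicholsIdeal S I) (hGK : FinGK I)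
    (i j k : Fin θ) (hij : i ≠ j) (hik : i ≠ k) (hjk : j ≠ k)
    (hyp :
      -- (a)
      (qtil q i j = -1 ∧ (q j j : ℂ) = -1 ∧ (q i i : ℂ) = -(qtil q j k) ^ 2 ∧
        IsPrimitiveRoot (q i i : ℂ) 3 ∧ qtil q i k = 1) ∨
      -- (b)
      ((q k k : ℂ) = -1 ∧ qtil q j k = -1 ∧ (q j j : ℂ) = -1 ∧
        (q i i : ℂ) = -(qtil q i j) ∧ IsPrimitiveRoot (q i i : ℂ) 3 ∧ qtil q i k = 1) ∨
      -- (c)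
      ((q j j : ℂ) = -1 ∧ qtil q i j = ((q i i : ℂ) ^ 2)⁻¹ ∧ qtil q i j ≠ 1 ∧
        (q k k : ℂ) = -(q i i : ℂ) ^ 3 ∧ (qtil q j k)⁻¹ = -(q i i : ℂ) ^ 3 ∧
        qtil q i k = 1) ∨
      -- (d)
      ((q i i : ℂ) = -1 ∧ (q j j : ℂ) = -1 ∧ (q k k : ℂ) = -1 ∧
        qtil q j k = -(qtil q i j) ∧ IsPrimitiveRoot (qtil q j k) 3 ∧ qtil q i k = 1)) :
    brk q (δ θ i + δ θ j + (δ θ i + δ θ j + δ θ k)) (δ θ j)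
      (brk q (δ θ i + δ θ j) (δ θ i + δ θ j + δ θ k) (xw q [i, j]) (xw q [i, j, k]))
      (gen θ j) ∈ I := by
  have hGKr : FinGK (rad q) := Jq_eq_rad S ▸ finGK_of_finiteDimensional hfd
  have hfin : FiniteRootSystem q := hAAH θ q S (finGK_of_finiteDimensional hfd)
  rcases hyp with ⟨tij, hjj, hii, h3, tik⟩ | ⟨hkk, tjk, hjj, hii, h3, tik⟩ |
    ⟨hjj, tij, ht, hkk, tjk, tik⟩ | ⟨hii, hjj, hkk, tjk, h3, tik⟩
  · have h6 : qtil q j k ^ 6 = -1 := by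
      have := h3.pow_eq_one
      rw [hii] at this
      linear_combination -this
    have hp : IsPrimitiveRoot (qtil q j k) 12 := by
      refine isPrimitiveRoot_twelve h6 fun h4 => ?_
      have := (h3.pow_eq_one_iff_dvd 2).1 (by rw [hii]; linear_combination h4)
      omega
    exact (not_finGK_of_twelve hGKr hAAH hij hik hjk hp
      (by rw [hii]; linear_combination -(qtil q j k) ^ 2 * h6) (hjj.trans h6.symm)
      (tij.trans h6.symm) (pow_one _).symm tik).elim
  · have hω := (h3.pow_of_coprime 2 (by decide)).neg_of_odd (by decide)
    have hq := h3.pow_eq_one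
    have h1 : (-(q i i : ℂ) ^ 2) ^ 3 = -1 := by
      linear_combination (-(q i i : ℂ) ^ 3 - 1) * hq
    obtain ⟨_, hj, hx, h6⟩ := x6_mem_of_six hI hGK hAAH hω (Or.inl rfl)
      (by linear_combination -(q i i : ℂ) * hq) (hjj.trans h1.symm) (hkk.trans h1.symm)
      (by linear_combination hii + (q i i : ℂ) * ((q i i : ℂ) ^ 6 + (q i i : ℂ) ^ 3 + 1) * hq)
      (tjk.trans h1.symm) tik
    exact bracket_mem_of_x6 hI hjj hj hx h6
  · have h0 : (q i i : ℂ) ≠ 0 := (q i i).ne_zero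
    have tij' : qtil q i j = (-(q i i : ℂ)⁻¹) ^ 2 := by rw [tij]; field_simp
    have tjk' : qtil q j k = (-(q i i : ℂ)⁻¹) ^ 3 := by
      rw [← inv_inv (qtil q j k), tjk]; field_simp
    rcases primitiveRoot_five_or_six hconn hfin hGKr hAAH hij hik hjk
      (a := -(q i i : ℂ)⁻¹) (by field_simp) hjj (by rw [hkk]; field_simp) tij' tjk' tik ht
      with ha | ha
    · have hω : IsPrimitiveRoot (q i i : ℂ) 10 := by
        have := ha.inv.neg_of_odd (by decide)
        rwa [← neg_inv, inv_inv, neg_neg] at this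
      have h5 : (q i i : ℂ) ^ 5 = -1 := by
        have := ha.pow_eq_one
        field_simp at this
        linear_combination -this
      obtain ⟨hj, hx, h6⟩ := x6_mem_of_ten hI hGK hAAH hω (pow_one _).symm hjj
        (by rw [hkk]; linear_combination -(q i i : ℂ) ^ 3 * h5)
        (by rw [tij]; field_simp; linear_combination (1 - (q i i : ℂ) ^ 5) * h5)
        (by rw [tjk']; field_simp; linear_combination -h5) tik
      exact bracket_mem_of_x6 hI hjj hj hx h6
    · have h3 : (-(q i i : ℂ)⁻¹) ^ 3 = -1 := by
        have h : ((-(q i i : ℂ)⁻¹) ^ 3 - 1) * ((-(q i i : ℂ)⁻¹) ^ 3 + 1) = 0 := by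
          linear_combination ha.pow_eq_one
        have h' : (-(q i i : ℂ)⁻¹) ^ 3 ≠ 1 :=
          ha.pow_ne_one_of_pos_of_lt (by norm_num) (by norm_num)
        linear_combination (mul_eq_zero.1 h).resolve_left (sub_ne_zero.2 h')
      have hq3 : (q i i : ℂ) ^ 3 = 1 := by
        field_simp at h3
        linear_combination h3
      obtain ⟨_, hj, hx, h6⟩ := x6_mem_of_six hI hGK hAAH ha (Or.inr rfl)
        (by field_simp; linear_combination hq3) (hjj.trans h3.symm)
        (by rw [hkk, hq3, h3]) tij' tjk' tik
      exact bracket_mem_of_x6 hI hjj hj hx h6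
  · obtain ⟨hj, hx, h6⟩ := x6_mem_of_neg_one hI hGK hAAH hii hjj hkk tjk h3 tik
    exact bracket_mem_of_x6 hI hjj hj hx h6

end PreNicholsPaper
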